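/- Let n ≥ 8 with n ≡ 2 (mod 3). For a generic choice of a linear subspace L ⊂ ℂ^{n+1} of dimension n−3 (codimension 4), of (n−1)(n−2)/6 points l₁,…,l_{(n−1)(n−2)/6} ∈ L, and of (4n+1)/3 points p₁,…,p_{(4n+1)/3} ∈ ℂ^{n+1}, the ℂ-vector space of homogeneous cubic polynomials in ℂ[x₀,…,xₙ] that vanish at every point of L and are singular at all the points lᵢ and pⱼ has dimension (n+1)/3; moreover, the common singular locus of this space is zero-dimensional at each of the points p₁,…,p_{(4n+1)/3}. -/

import Mathlib

/-!
The dimension can only jump up under specialization, and the expected dimension is always a lower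
bound, so that one well-chosen configuration decides the matter. Vanishing on the subspace costs
`C(n-1, 3)` conditions on the `C(n+3, 3)` coefficients of a cubic; a singular point on the subspace
costs four more (the gradient there already annihilates the subspace) and an ambient singular point
costs `n + 1`. What is left is `(n + 1) / 3` (`le_finrank_SingSpace`).

For the special configuration write `n = 3 r + 5`, and take a basis `x₀, …, x₅` together with `r`
blocks `w_j` of three vectors. The subspace is spanned by `x₄`, `x₅` and all the blocks. The points
on it are `2` points of the base, `5` for each block and `3` for each pair of blocks; the ambient
points are `7` points of the base and `4` for each block (`lPt`, `pPt`). A cubic is treated as a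
symmetric trilinear form `τ`, and it is singular at `p` if and only if `τ(p, p, ·) = 0`. Since every
trilinear entry involves the base and at most two blocks, or else lies in the subspace, the
solution space is found by three computations of bounded size: the base alone carries two
free entries (`baseKernel`), each block carries one (`blockKernel`), and a pair of blocks carries none
(`pairKernel`). In total there are `r + 2 = (n + 1) / 3` free entries, the expected number
(`Sp.eq_zero`).

Zero-dimensionality at `p` follows from an infinitesimal statement: the Hessians at `p` of the cubics
in the space have no common kernel besides the line of `p` (`isolated_of_hessian`). This is checked at
the base point `x₂` of the special configuration (`Sp.hess`); since the ambient points may be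
permuted, it gives the claim for each of them.

To pass from the special configuration to a generic one, both conditions are expressed by injectivity
of matrices depending polynomially on the parameters. Such a matrix, if injective at one parameter,
has a polynomial left inverse up to a nonzero polynomial factor (`exists_leftInverse_smul`), and the
product of these factors is the polynomial required by `Generic` (`generic_kernel`,
`generic_of_special`).
-/

open MvPolynomial

noncomputable section

/-- The linear form `a₀x₀ + ⋯ + aₙxₙ` with coefficient vector `a`. -/
def linForm {n : ℕ} (a : Fin (n + 1) → ℂ) : MvPolynomial (Fin (n + 1)) ℂ :=
  ∑ i, C (a i) * X i

/-- Evaluation at the point `v`, as a linear map. -/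
def evalAt {n : ℕ} (v : Fin (n + 1) → ℂ) : MvPolynomial (Fin (n + 1)) ℂ →ₗ[ℂ] ℂ :=
  (aeval v).toLinearMap

/-- The linear map `f ↦ (∂f/∂xᵢ)(p)`. -/
def evalPDeriv {n : ℕ} (p : Fin (n + 1) → ℂ) (i : Fin (n + 1)) :
    MvPolynomial (Fin (n + 1)) ℂ →ₗ[ℂ] ℂ :=
  evalAt p ∘ₗ (pderiv i).toLinearMap

/-- `f` is singular at `p`: all partial derivatives of `f` vanish at `p`. -/
def SingularAt {n : ℕ} (f : MvPolynomial (Fin (n + 1)) ℂ) (p : Fin (n + 1) → ℂ) : Prop :=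
  ∀ i, evalPDeriv p i f = 0

/-- The space of homogeneous degree-`d` polynomials in `n+1` variables that vanish at every
point of `V` and are singular at every point of `S`. -/
def SingSpace (n : ℕ) (d : ℕ) (S V : Set (Fin (n + 1) → ℂ)) :
    Submodule ℂ (MvPolynomial (Fin (n + 1)) ℂ) :=
  homogeneousSubmodule (Fin (n + 1)) ℂ d ⊓ (⨅ v ∈ V, LinearMap.ker (evalAt v)) ⊓
    ⨅ p ∈ S, ⨅ i, LinearMap.ker (evalPDeriv p i)

/-- A property of parameters `t : ι → ℂ` holds for a generic choice of `t` if there is a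
nonzero polynomial `F` in the variables `ι` such that the property holds whenever
`F(t) ≠ 0`. -/
def Generic {ι : Type} [Fintype ι] (P : (ι → ℂ) → Prop) : Prop :=
  ∃ F : MvPolynomial ι ℂ, F ≠ 0 ∧ ∀ t : ι → ℂ, eval t F ≠ 0 → P t

end

set_option linter.unusedSimpArgs false
set_option linter.unusedVariables false
set_option linter.unusedSectionVars false
set_option linter.unreachableTactic false

/-! ### The base -/

/-- The base computation: a cubic (given by its symmetric trilinear form `τ`) that is singular at
the nine listed combinations of the six basis vectors has all squarefree coefficients not of the
shape `aᵢ bⱼ zₖ` equal to zero, and the eight remaining ones are determined by `τ a₁ b₁ z₁` and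
`τ a₂ b₁ z₁`. -/
theorem baseKernel {E : Type*} [AddCommGroup E] [Module ℂ E] (τ : E →ₗ[ℂ] E →ₗ[ℂ] E →ₗ[ℂ] ℂ)
  (s1 : ∀ x y z, τ x y z = τ y x z) (s2 : ∀ x y z, τ x y z = τ x z y)
  (a1 a2 b1 b2 z1 z2 : E)
  (hz1 : ∀ x, τ z1 z1 x = 0) (hz2 : ∀ x, τ z2 z2 x = 0)
  (h1 : ∀ x, τ a1 a1 x = 0) (h2 : ∀ x, τ a2 a2 x = 0)
  (h3 : ∀ x, τ (a1+a2+z1+z2) (a1+a2+z1+z2) x = 0)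
  (h4 : ∀ x, τ b1 b1 x = 0) (h5 : ∀ x, τ b2 b2 x = 0)
  (h6 : ∀ x, τ (b1+b2+z1-z2) (b1+b2+z1-z2) x = 0)
  (h7 : ∀ x, τ (a1-a2+b1+(2:ℂ)•b2) (a1-a2+b1+(2:ℂ)•b2) x = 0) :
  τ a1 a2 z1 = 0 ∧ τ a1 a2 z2 = 0 ∧ τ a1 z1 z2 = 0 ∧ τ a2 z1 z2 = 0 ∧
  τ b1 b2 z1 = 0 ∧ τ b1 b2 z2 = 0 ∧ τ b1 z1 z2 = 0 ∧ τ b2 z1 z2 = 0  ∧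
  τ a1 a2 b1 = 0 ∧ τ a1 a2 b2 = 0 ∧ τ a1 b1 b2 = 0 ∧ τ a2 b1 b2 = 0 ∧
  τ a1 b1 z2 = -τ a2 b1 z1 ∧ τ a2 b1 z2 = -τ a1 b1 z1 ∧
  4 * τ a1 b2 z1 = -3 * τ a1 b1 z1 - τ a2 b1 z1 ∧ 4 * τ a1 b2 z2 = τ a1 b1 z1 + 3 * τ a2 b1 z1 ∧
  4 * τ a2 b2 z1 = - τ a1 b1 z1 - 3 * τ a2 b1 z1 ∧ 4 * τ a2 b2 z2 = 3 * τ a1 b1 z1 + τ a2 b1 z1 := by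
  have H3 : ∀ x, τ a1 a2 x + τ a1 z1 x + τ a1 z2 x + τ a2 z1 x + τ a2 z2 x + τ z1 z2 x = 0 := by
    intro x
    have := h3 x
    simp only [map_add, map_sub, map_smul, LinearMap.add_apply, LinearMap.sub_apply, LinearMap.smul_apply,hz1,hz2,h1,h2] at this
    rw [s1 a2 a1, s1 z1 a1, s1 z2 a1, s1 z1 a2, s1 z2 a2, s1 z2 z1] at this
    linear_combination this/2
  have H6 : ∀ x, τ b1 b2 x + τ b1 z1 x - τ b1 z2 x + τ b2 z1 x - τ b2 z2 x - τ z1 z2 x = 0 := by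
    intro x
    have := h6 x
    simp only [map_add, map_sub, map_smul, LinearMap.add_apply, LinearMap.sub_apply, LinearMap.smul_apply,hz1,hz2,h4,h5] at this
    rw [s1 b2 b1, s1 z1 b1, s1 z2 b1, s1 z1 b2, s1 z2 b2, s1 z2 z1] at this
    linear_combination this/2
  have H7 : ∀ x, -τ a1 a2 x + τ a1 b1 x + 2*τ a1 b2 x - τ a2 b1 x - 2*τ a2 b2 x + 2*τ b1 b2 x = 0 := by
    intro x
    have := h7 x
    simp only [map_add, map_sub, map_smul, LinearMap.add_apply, LinearMap.sub_apply, LinearMap.smul_apply,h1,h2,h4,h5,smul_eq_mul] at this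
    rw [s1 a2 a1, s1 b1 a1, s1 b2 a1, s1 b1 a2, s1 b2 a2, s1 b2 b1] at this
    linear_combination this/2
  have h1' : ∀ x, τ x a1 a1 = 0 := fun x => by rw [s1, s2]; exact h1 x
  have h2' : ∀ x, τ x a2 a2 = 0 := fun x => by rw [s1, s2]; exact h2 x
  have h4' : ∀ x, τ x b1 b1 = 0 := fun x => by rw [s1, s2]; exact h4 x
  have h5' : ∀ x, τ x b2 b2 = 0 := fun x => by rw [s1, s2]; exact h5 x
  have hz1' : ∀ x, τ x z1 z1 = 0 := fun x => by rw [s1, s2]; exact hz1 x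
  have hz2' : ∀ x, τ x z2 z2 = 0 := fun x => by rw [s1, s2]; exact hz2 x
  have kH3a1 := H3 a1
  have kH3a2 := H3 a2
  have kH3b1 := H3 b1
  have kH3b2 := H3 b2
  have kH3z1 := H3 z1
  have kH3z2 := H3 z2
  have kH6a1 := H6 a1
  have kH6a2 := H6 a2
  have kH6b1 := H6 b1
  have kH6b2 := H6 b2
  have kH6z1 := H6 z1
  have kH6z2 := H6 z2
  have kH7a1 := H7 a1
  have kH7a2 := H7 a2
  have kH7b1 := H7 b1
  have kH7b2 := H7 b2
  have kH7z1 := H7 z1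
  have kH7z2 := H7 z2
  clear H3 H6 H7 h3 h6 h7
  simp only [s1, s2, h1, h2, h4, h5, hz1, hz2, h1', h2', h4', h5', hz1', hz2'] at kH3a1 kH3a2 kH3b1 kH3b2 kH3z1 kH3z2 kH6a1 kH6a2 kH6b1 kH6b2 kH6z1 kH6z2 kH7a1 kH7a2 kH7b1 kH7b2 kH7z1 kH7z2
  clear h1 h2 h4 h5 hz1 hz2 h1' h2' h4' h5' hz1' hz2' s1 s2
  -- what is left is a linear system with rational coefficients in the twenty squarefree entries
  refine ⟨?_, ?_, ?_, ?_, ?_, ?_, ?_, ?_, ?_, ?_, ?_, ?_, ?_, ?_, ?_, ?_, ?_, ?_⟩ <;> grind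

/-! ### One block -/

theorem eq_zero_of_mul_left {a b : ℂ} (h : a ≠ 0) (e : a * b = 0) : b = 0 := (mul_eq_zero.mp e).resolve_left h

theorem sq2 {E : Type*} [AddCommGroup E] [Module ℂ E] (τ : E →ₗ[ℂ] E →ₗ[ℂ] E →ₗ[ℂ] ℂ)
  (s1 : ∀ x y z, τ x y z = τ y x z) (u v x : E) :
  τ (u+v) (u+v) x = τ u u x + 2 * τ u v x + τ v v x := by
  simp only [map_add, LinearMap.add_apply]
  rw [s1 v u]; ring

set_option maxHeartbeats 4000000 in
/-- The computation for one block `w₁, w₂, w₃`: if the cubic `τ` vanishes on the base and on the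
span of `z₁, z₂, w₁, w₂, w₃`, and is singular at the base points and at the points attached to the
block with parameter `t`, then its entries involving the block are determined by the single number
`τ b₁ w₁ w₁` (the identities are those used for the Hessian at `b₁`), and they all vanish with it. -/
theorem blockKernel {E : Type*} [AddCommGroup E] [Module ℂ E] (τ : E →ₗ[ℂ] E →ₗ[ℂ] E →ₗ[ℂ] ℂ)
  (s1 : ∀ x y z, τ x y z = τ y x z) (s2 : ∀ x y z, τ x y z = τ x z y)
  (a1 a2 b1 b2 z1 z2 w1 w2 w3 : E) (t : ℂ)
  (ht : t ≠ 0) (ht1 : t - 1 ≠ 0) (ht2 : t + 1 ≠ 0) (ht3 : t - 2 ≠ 0) (ht4 : t + 2 ≠ 0)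
  (hz1 : ∀ x, τ z1 z1 x = 0) (hz2 : ∀ x, τ z2 z2 x = 0)
  (h1 : ∀ x, τ a1 a1 x = 0) (h2 : ∀ x, τ a2 a2 x = 0)
  (p3 : ∀ x, τ (a1+a2+z1+z2) (a1+a2+z1+z2) x = 0)
  (h4 : ∀ x, τ b1 b1 x = 0) (h5 : ∀ x, τ b2 b2 x = 0)
  (p6 : ∀ x, τ (b1+b2+z1-z2) (b1+b2+z1-z2) x = 0)
  (p7 : ∀ x, τ (a1-a2+b1+(2:ℂ)•b2) (a1-a2+b1+(2:ℂ)•b2) x = 0)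
  (g1 : ∀ x, τ w3 w3 x = 0)
  (l2 : ∀ x, τ (z1+w2+w3) (z1+w2+w3) x = 0)
  (l3 : ∀ x, τ (z2+w1+w3) (z2+w1+w3) x = 0)
  (l4 : ∀ x, τ (z2+w1+w2) (z2+w1+w2) x = 0)
  (l5 : ∀ x, τ (w1+w2+w3) (w1+w2+w3) x = 0)
  (m1 : ∀ x, τ (a1+t•a2+w1) (a1+t•a2+w1) x = 0)
  (m2 : ∀ x, τ (a1-t•a2+w2) (a1-t•a2+w2) x = 0)
  (m3 : ∀ x, τ (b1+t•b2+(w1-w3)) (b1+t•b2+(w1-w3)) x = 0)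
  (m4 : ∀ x, τ (a1-a2+b1-t•b2+(w2-w3)) (a1-a2+b1-t•b2+(w2-w3)) x = 0)
  (hb : τ a1 a2 b1 = 0 ∧ τ a1 a2 b2 = 0 ∧ τ a1 a2 z1 = 0 ∧ τ a1 a2 z2 = 0 ∧ τ a1 b1 b2 = 0 ∧ τ a1 b1 z1 = 0 ∧ τ a1 b1 z2 = 0 ∧ τ a1 b2 z1 = 0 ∧ τ a1 b2 z2 = 0 ∧ τ a1 z1 z2 = 0 ∧ τ a2 b1 b2 = 0 ∧ τ a2 b1 z1 = 0 ∧ τ a2 b1 z2 = 0 ∧ τ a2 b2 z1 = 0 ∧ τ a2 b2 z2 = 0 ∧ τ a2 z1 z2 = 0 ∧ τ b1 b2 z1 = 0 ∧ τ b1 b2 z2 = 0 ∧ τ b1 z1 z2 = 0 ∧ τ b2 z1 z2 = 0)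
  (hL : τ z1 z2 w1 = 0 ∧ τ z1 z2 w2 = 0 ∧ τ z1 z2 w3 = 0 ∧ τ z1 w1 w1 = 0 ∧ τ z1 w1 w2 = 0 ∧ τ z1 w1 w3 = 0 ∧ τ z1 w2 w2 = 0 ∧ τ z1 w2 w3 = 0 ∧ τ z2 w1 w1 = 0 ∧ τ z2 w1 w2 = 0 ∧ τ z2 w1 w3 = 0 ∧ τ z2 w2 w2 = 0 ∧ τ z2 w2 w3 = 0 ∧ τ w1 w1 w1 = 0 ∧ τ w1 w1 w2 = 0 ∧ τ w1 w1 w3 = 0 ∧ τ w1 w2 w2 = 0 ∧ τ w1 w2 w3 = 0 ∧ τ w2 w2 w2 = 0 ∧ τ w2 w2 w3 = 0) :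
  (2*t*(t^2-1)*τ a1 b1 w1 - (-t^2+t)*τ b1 w1 w1 = 0 ∧
    2*t*(t^2-1)*τ a1 b1 w2 - (-t^2-t)*τ b1 w1 w1 = 0 ∧
    2*t*(t^2-1)*τ a1 b1 w3 - (-3*t^2+t)*τ b1 w1 w1 = 0 ∧
    2*t*(t^2-1)*τ a2 b1 w1 - (-t^2+t)*τ b1 w1 w1 = 0 ∧
    2*t*(t^2-1)*τ a2 b1 w2 - (-t^2-t)*τ b1 w1 w1 = 0 ∧
    2*t*(t^2-1)*τ a2 b1 w3 - (-3*t^2+t)*τ b1 w1 w1 = 0 ∧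
    2*t*(t^2-1)*τ b1 b2 w1 - (-2*t^2+2)*τ b1 w1 w1 = 0 ∧
    2*t*(t^2-1)*τ b1 b2 w2 - (-2*t^2+2)*τ b1 w1 w1 = 0 ∧
    2*t*(t^2-1)*τ b1 b2 w3 - (-2*t^2+2)*τ b1 w1 w1 = 0 ∧
    2*t*(t^2-1)*τ b1 z1 w1 - (-2*t^3+2*t)*τ b1 w1 w1 = 0 ∧
    2*t*(t^2-1)*τ b1 z1 w2 - (2*t^3-2*t)*τ b1 w1 w1 = 0 ∧
    2*t*(t^2-1)*τ b1 z1 w3 - (0)*τ b1 w1 w1 = 0 ∧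
    2*t*(t^2-1)*τ b1 z2 w1 - (-2*t^3+2*t)*τ b1 w1 w1 = 0 ∧
    2*t*(t^2-1)*τ b1 z2 w2 - (2*t^3-2*t)*τ b1 w1 w1 = 0 ∧
    2*t*(t^2-1)*τ b1 z2 w3 - (0)*τ b1 w1 w1 = 0) ∧
  (τ b1 w1 w1 = 0 →
    τ a1 a2 w1 = 0 ∧ τ a1 a2 w2 = 0 ∧ τ a1 a2 w3 = 0 ∧ τ a1 b1 w1 = 0 ∧ τ a1 b1 w2 = 0 ∧ τ a1 b1 w3 = 0 ∧ τ a1 b2 w1 = 0 ∧ τ a1 b2 w2 = 0 ∧ τ a1 b2 w3 = 0 ∧ τ a1 z1 w1 = 0 ∧ τ a1 z1 w2 = 0 ∧ τ a1 z1 w3 = 0 ∧ τ a1 z2 w1 = 0 ∧ τ a1 z2 w2 = 0 ∧ τ a1 z2 w3 = 0 ∧ τ a1 w1 w1 = 0 ∧ τ a1 w1 w2 = 0 ∧ τ a1 w1 w3 = 0 ∧ τ a1 w2 w2 = 0 ∧ τ a1 w2 w3 = 0 ∧ τ a2 b1 w1 = 0 ∧ τ a2 b1 w2 = 0 ∧ τ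 a2 b1 w3 = 0 ∧ τ a2 b2 w1 = 0 ∧ τ a2 b2 w2 = 0 ∧ τ a2 b2 w3 = 0 ∧ τ a2 z1 w1 = 0 ∧ τ a2 z1 w2 = 0 ∧ τ a2 z1 w3 = 0 ∧ τ a2 z2 w1 = 0 ∧ τ a2 z2 w2 = 0 ∧ τ a2 z2 w3 = 0 ∧ τ a2 w1 w1 = 0 ∧ τ a2 w1 w2 = 0 ∧ τ a2 w1 w3 = 0 ∧ τ a2 w2 w2 = 0 ∧ τ a2 w2 w3 = 0 ∧ τ b1 b2 w1 = 0 ∧ τ b1 b2 w2 = 0 ∧ τ b1 b2 w3 = 0 ∧ τ b1 z1 w1 = 0 ∧ τ b1 z1 w2 = 0 ∧ τ b1 z1 w3 = 0 ∧ τ b1 z2 w1 = 0 ∧ τ b1 z2 w2 = 0 ∧ τ b1 z2 w3 = 0 ∧ τ b1 w1 w1 = 0 ∧ τ b1 w1 w2 = 0 ∧ τ b1 w1 w3 = 0 ∧ τ b1 w2 w2 = 0 ∧ τ b1 w2 w3 = 0 ∧ τ b2 z1 w1 = 0 ∧ τ b2 z1 w2 = 0 ∧ τ b2 z1 w3 =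 0 ∧ τ b2 z2 w1 = 0 ∧ τ b2 z2 w2 = 0 ∧ τ b2 z2 w3 = 0 ∧ τ b2 w1 w1 = 0 ∧ τ b2 w1 w2 = 0 ∧ τ b2 w1 w3 = 0 ∧ τ b2 w2 w2 = 0 ∧ τ b2 w2 w3 = 0) := by
  have htt : t^2-1 ≠ 0 := by
    rw [show t^2-1 = (t-1)*(t+1) by ring]; exact mul_ne_zero ht1 ht2
  have hz1' : ∀ x, τ x z1 z1 = 0 := fun x => by rw [s1, s2]; exact hz1 x
  have hz2' : ∀ x, τ x z2 z2 = 0 := fun x => by rw [s1, s2]; exact hz2 x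
  have h4' : ∀ x, τ x b1 b1 = 0 := fun x => by rw [s1, s2]; exact h4 x
  have h5' : ∀ x, τ x b2 b2 = 0 := fun x => by rw [s1, s2]; exact h5 x
  have h2' : ∀ x, τ x a2 a2 = 0 := fun x => by rw [s1, s2]; exact h2 x
  have g1' : ∀ x, τ x w3 w3 = 0 := fun x => by rw [s1, s2]; exact g1 x
  obtain ⟨bz0, bz1, bz2, bz3, bz4, bz5, bz6, bz7, bz8, bz9, bz10, bz11, bz12, bz13, bz14, bz15, bz16, bz17, bz18, bz19⟩ := hb
  obtain ⟨lz0, lz1, lz2, lz3, lz4, lz5, lz6, lz7, lz8, lz9, lz10, lz11, lz12, lz13, lz14, lz15, lz16, lz17, lz18, lz19⟩ := hL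
  -- polarized form of each singularity condition, with the square terms known to vanish removed
  have H3 : ∀ x, 2*τ a1 a2 x + 2*τ a1 z1 x + 2*τ a1 z2 x + 2*τ a2 z1 x + 2*τ a2 z2 x + 2*τ z1 z2 x = 0 := by
    intro x
    have := p3 x
    simp only [sq2 τ s1] at this
    simp only [map_add, LinearMap.add_apply, hz1, hz2, h1, h2] at this
    linear_combination this
  have H6 : ∀ x, 2*τ b1 b2 x + 2*τ b1 z1 x - 2*τ b1 z2 x + 2*τ b2 z1 x - 2*τ b2 z2 x - 2*τ z1 z2 x = 0 := by
    intro x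
    have := p6 x
    simp only [sub_eq_add_neg, sq2 τ s1] at this
    simp only [map_add, map_neg, LinearMap.neg_apply, LinearMap.add_apply, hz1, hz2, h4, h5] at this
    linear_combination this
  have H7 : ∀ x, -2*τ a1 a2 x + 2*τ a1 b1 x + 4*τ a1 b2 x - 2*τ a2 b1 x - 4*τ a2 b2 x + 4*τ b1 b2 x = 0 := by
    intro x
    have := p7 x
    simp only [sub_eq_add_neg, sq2 τ s1] at this
    simp only [map_add, map_neg, map_smul, LinearMap.neg_apply, LinearMap.add_apply, LinearMap.smul_apply, smul_eq_mul, h1, h2, h4, h5] at this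
    linear_combination this
  have G2 : ∀ x, 2*τ z1 w2 x + 2*τ z1 w3 x + τ w2 w2 x + 2*τ w2 w3 x = 0 := by
    intro x
    have := l2 x
    simp only [sub_eq_add_neg, sq2 τ s1] at this
    simp only [map_add, map_neg, map_smul, LinearMap.neg_apply, LinearMap.add_apply, LinearMap.smul_apply, smul_eq_mul, hz1, g1] at this
    linear_combination this
  have G3 : ∀ x, 2*τ z2 w1 x + 2*τ z2 w3 x + τ w1 w1 x + 2*τ w1 w3 x = 0 := by
    intro x
    have := l3 x
    simp only [sub_eq_add_neg, sq2 τ s1] at this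
    simp only [map_add, map_neg, map_smul, LinearMap.neg_apply, LinearMap.add_apply, LinearMap.smul_apply, smul_eq_mul, hz2, g1] at this
    linear_combination this
  have G4 : ∀ x, 2*τ z2 w1 x + 2*τ z2 w2 x + τ w1 w1 x + 2*τ w1 w2 x + τ w2 w2 x = 0 := by
    intro x
    have := l4 x
    simp only [sub_eq_add_neg, sq2 τ s1] at this
    simp only [map_add, map_neg, map_smul, LinearMap.neg_apply, LinearMap.add_apply, LinearMap.smul_apply, smul_eq_mul, hz2] at this
    linear_combination this
  have G5 : ∀ x, 2*τ w1 w2 x + 2*τ w1 w3 x + 2*τ w2 w3 x + τ w1 w1 x + τ w2 w2 x = 0 := by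
    intro x
    have := l5 x
    simp only [sub_eq_add_neg, sq2 τ s1] at this
    simp only [map_add, map_neg, map_smul, LinearMap.neg_apply, LinearMap.add_apply, LinearMap.smul_apply, smul_eq_mul, g1] at this
    linear_combination this
  have Q1 : ∀ x, 2*t*τ a1 a2 x + 2*τ a1 w1 x + 2*t*τ a2 w1 x + τ w1 w1 x = 0 := by
    intro x
    have := m1 x
    simp only [sub_eq_add_neg, sq2 τ s1] at this
    simp only [map_add, map_neg, map_smul, LinearMap.neg_apply, LinearMap.add_apply, LinearMap.smul_apply, smul_eq_mul, h1, h2] at this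
    linear_combination this
  have Q2 : ∀ x, -2*t*τ a1 a2 x + 2*τ a1 w2 x - 2*t*τ a2 w2 x + τ w2 w2 x = 0 := by
    intro x
    have := m2 x
    simp only [sub_eq_add_neg, sq2 τ s1] at this
    simp only [map_add, map_neg, map_smul, LinearMap.neg_apply, LinearMap.add_apply, LinearMap.smul_apply, smul_eq_mul, h1, h2] at this
    linear_combination this
  have Q3 : ∀ x, 2*t*τ b1 b2 x + 2*τ b1 w1 x - 2*τ b1 w3 x + 2*t*τ b2 w1 x - 2*t*τ b2 w3 x + τ w1 w1 x - 2*τ w1 w3 x = 0 := by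
    intro x
    have := m3 x
    simp only [sub_eq_add_neg, sq2 τ s1] at this
    simp only [map_add, map_neg, map_smul, LinearMap.neg_apply, LinearMap.add_apply, LinearMap.smul_apply, smul_eq_mul, h4, h5, g1] at this
    linear_combination this
  have Q4 : ∀ x, -2*τ a1 a2 x + 2*τ a1 b1 x - 2*t*τ a1 b2 x - 2*τ a2 b1 x + 2*t*τ a2 b2 x - 2*t*τ b1 b2 x + 2*τ a1 w2 x - 2*τ a1 w3 x - 2*τ a2 w2 x + 2*τ a2 w3 x + 2*τ b1 w2 x - 2*τ b1 w3 x - 2*t*τ b2 w2 x + 2*t*τ b2 w3 x + τ w2 w2 x - 2*τ w2 w3 x = 0 := by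
    intro x
    have := m4 x
    simp only [sub_eq_add_neg, sq2 τ s1] at this
    simp only [map_add, map_neg, map_smul, LinearMap.neg_apply, LinearMap.add_apply, LinearMap.smul_apply, smul_eq_mul, h1, h2, h4, h5, g1] at this
    linear_combination this
  -- elimination of the entries involving neither `b₁` nor `b₂`: forward reduction first, then back
  -- substitution; the name `va1a2w3` stands for `τ a1 a2 w3 = 0`, and similarly for the others
  have A0 : 2*τ a1 a2 w1+τ a2 w1 w1 = 0 := by
    have r := Q1 a2
    simp only [s1, s2, hz1, hz2, h1, h2, h4, h5, g1, hz1', hz2', h2', h4', h5', g1', bz0, bz1, bz2, bz3, bz4, bz5, bz6, bz7, bz8, bz9, bz10, bz11, bz12, bz13, bz14, bz15, bz16, bz17, bz18, bz19, lz0, lz1, lz2, lz3, lz4, lz5, lz6, lz7, lz8, lz9, lz10, lz11, lz12, lz13, lz14, lz15, lz16, lz17, lz18, lz19] at r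
    linear_combination r
  have A1 : 2*τ a1 a2 w2+τ a2 w2 w2 = 0 := by
    have r := Q2 a2
    simp only [s1, s2, hz1, hz2, h1, h2, h4, h5, g1, hz1', hz2', h2', h4', h5', g1', bz0, bz1, bz2, bz3, bz4, bz5, bz6, bz7, bz8, bz9, bz10, bz11, bz12, bz13, bz14, bz15, bz16, bz17, bz18, bz19, lz0, lz1, lz2, lz3, lz4, lz5, lz6, lz7, lz8, lz9, lz10, lz11, lz12, lz13, lz14, lz15, lz16, lz17, lz18, lz19] at r
    linear_combination r
  have A2 : 2*τ a1 z1 w1+(2*t)*τ a2 z1 w1 = 0 := by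
    have r := Q1 z1
    simp only [s1, s2, hz1, hz2, h1, h2, h4, h5, g1, hz1', hz2', h2', h4', h5', g1', bz0, bz1, bz2, bz3, bz4, bz5, bz6, bz7, bz8, bz9, bz10, bz11, bz12, bz13, bz14, bz15, bz16, bz17, bz18, bz19, lz0, lz1, lz2, lz3, lz4, lz5, lz6, lz7, lz8, lz9, lz10, lz11, lz12, lz13, lz14, lz15, lz16, lz17, lz18, lz19] at r
    linear_combination r
  have A3 : 2*τ a1 z1 w2+(-2*t)*τ a2 z1 w2 = 0 := by
    have r := Q2 z1
    simp only [s1, s2, hz1, hz2, h1, h2, h4, h5, g1, hz1', hz2', h2', h4', h5', g1', bz0, bz1, bz2, bz3, bz4, bz5, bz6, bz7, bz8, bz9, bz10, bz11, bz12, bz13, bz14, bz15, bz16, bz17, bz18, bz19, lz0, lz1, lz2, lz3, lz4, lz5, lz6, lz7, lz8, lz9, lz10, lz11, lz12, lz13, lz14, lz15, lz16, lz17, lz18, lz19] at r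
    linear_combination r
  have A4 : 2*τ a1 z2 w2+(-2*t)*τ a2 z2 w2 = 0 := by
    have r := Q2 z2
    simp only [s1, s2, hz1, hz2, h1, h2, h4, h5, g1, hz1', hz2', h2', h4', h5', g1', bz0, bz1, bz2, bz3, bz4, bz5, bz6, bz7, bz8, bz9, bz10, bz11, bz12, bz13, bz14, bz15, bz16, bz17, bz18, bz19, lz0, lz1, lz2, lz3, lz4, lz5, lz6, lz7, lz8, lz9, lz10, lz11, lz12, lz13, lz14, lz15, lz16, lz17, lz18, lz19] at r
    linear_combination r
  have A5 : 2*τ a1 z2 w1+(2*t)*τ a2 z2 w1 = 0 := by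
    have r := Q1 z2
    simp only [s1, s2, hz1, hz2, h1, h2, h4, h5, g1, hz1', hz2', h2', h4', h5', g1', bz0, bz1, bz2, bz3, bz4, bz5, bz6, bz7, bz8, bz9, bz10, bz11, bz12, bz13, bz14, bz15, bz16, bz17, bz18, bz19, lz0, lz1, lz2, lz3, lz4, lz5, lz6, lz7, lz8, lz9, lz10, lz11, lz12, lz13, lz14, lz15, lz16, lz17, lz18, lz19] at r
    linear_combination r
  have A6 : 2*τ a2 z1 w2+2*τ a2 z1 w3+τ a2 w2 w2+2*τ a2 w2 w3 = 0 := by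
    have r := G2 a2
    simp only [s1, s2, hz1, hz2, h1, h2, h4, h5, g1, hz1', hz2', h2', h4', h5', g1', bz0, bz1, bz2, bz3, bz4, bz5, bz6, bz7, bz8, bz9, bz10, bz11, bz12, bz13, bz14, bz15, bz16, bz17, bz18, bz19, lz0, lz1, lz2, lz3, lz4, lz5, lz6, lz7, lz8, lz9, lz10, lz11, lz12, lz13, lz14, lz15, lz16, lz17, lz18, lz19] at r
    linear_combination r
  have A7 : 2*τ a2 z2 w1+2*τ a2 z2 w3+τ a2 w1 w1+2*τ a2 w1 w3 = 0 := by
    have r := G3 a2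
    simp only [s1, s2, hz1, hz2, h1, h2, h4, h5, g1, hz1', hz2', h2', h4', h5', g1', bz0, bz1, bz2, bz3, bz4, bz5, bz6, bz7, bz8, bz9, bz10, bz11, bz12, bz13, bz14, bz15, bz16, bz17, bz18, bz19, lz0, lz1, lz2, lz3, lz4, lz5, lz6, lz7, lz8, lz9, lz10, lz11, lz12, lz13, lz14, lz15, lz16, lz17, lz18, lz19] at r
    linear_combination r
  have A8 : 2*τ a2 z2 w1+2*τ a2 z2 w2+τ a2 w1 w1+2*τ a2 w1 w2+τ a2 w2 w2 = 0 := by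
    have r := G4 a2
    simp only [s1, s2, hz1, hz2, h1, h2, h4, h5, g1, hz1', hz2', h2', h4', h5', g1', bz0, bz1, bz2, bz3, bz4, bz5, bz6, bz7, bz8, bz9, bz10, bz11, bz12, bz13, bz14, bz15, bz16, bz17, bz18, bz19, lz0, lz1, lz2, lz3, lz4, lz5, lz6, lz7, lz8, lz9, lz10, lz11, lz12, lz13, lz14, lz15, lz16, lz17, lz18, lz19] at r
    linear_combination r
  have A9 : τ a1 w1 w1+2*τ a1 w1 w2+2*τ a1 w1 w3+τ a1 w2 w2+2*τ a1 w2 w3 = 0 := by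
    have r := G5 a1
    simp only [s1, s2, hz1, hz2, h1, h2, h4, h5, g1, hz1', hz2', h2', h4', h5', g1', bz0, bz1, bz2, bz3, bz4, bz5, bz6, bz7, bz8, bz9, bz10, bz11, bz12, bz13, bz14, bz15, bz16, bz17, bz18, bz19, lz0, lz1, lz2, lz3, lz4, lz5, lz6, lz7, lz8, lz9, lz10, lz11, lz12, lz13, lz14, lz15, lz16, lz17, lz18, lz19] at r
    linear_combination r
  have A10 : τ a2 w1 w1+2*τ a2 w1 w2+2*τ a2 w1 w3+τ a2 w2 w2+2*τ a2 w2 w3 = 0 := by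
    have r := G5 a2
    simp only [s1, s2, hz1, hz2, h1, h2, h4, h5, g1, hz1', hz2', h2', h4', h5', g1', bz0, bz1, bz2, bz3, bz4, bz5, bz6, bz7, bz8, bz9, bz10, bz11, bz12, bz13, bz14, bz15, bz16, bz17, bz18, bz19, lz0, lz1, lz2, lz3, lz4, lz5, lz6, lz7, lz8, lz9, lz10, lz11, lz12, lz13, lz14, lz15, lz16, lz17, lz18, lz19] at r
    linear_combination r
  have A11 : (-2*t)*τ a1 a2 w3+2*τ a1 w2 w3+(-2*t)*τ a2 w2 w3 = 0 := by
    have r := Q2 w3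
    simp only [s1, s2, hz1, hz2, h1, h2, h4, h5, g1, hz1', hz2', h2', h4', h5', g1', bz0, bz1, bz2, bz3, bz4, bz5, bz6, bz7, bz8, bz9, bz10, bz11, bz12, bz13, bz14, bz15, bz16, bz17, bz18, bz19, lz0, lz1, lz2, lz3, lz4, lz5, lz6, lz7, lz8, lz9, lz10, lz11, lz12, lz13, lz14, lz15, lz16, lz17, lz18, lz19] at r
    linear_combination r
  have A12 : τ a1 w1 w1+(-t)*τ a2 w1 w1 = 0 := by
    have r := Q1 a1
    simp only [s1, s2, hz1, hz2, h1, h2, h4, h5, g1, hz1', hz2', h2', h4', h5', g1', bz0, bz1, bz2, bz3, bz4, bz5, bz6, bz7, bz8, bz9, bz10, bz11, bz12, bz13, bz14, bz15, bz16, bz17, bz18, bz19, lz0, lz1, lz2, lz3, lz4, lz5, lz6, lz7, lz8, lz9, lz10, lz11, lz12, lz13, lz14, lz15, lz16, lz17, lz18, lz19] at r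
    linear_combination r - (t)*A0
  have A13 : τ a1 w2 w2+(t)*τ a2 w2 w2 = 0 := by
    have r := Q2 a1
    simp only [s1, s2, hz1, hz2, h1, h2, h4, h5, g1, hz1', hz2', h2', h4', h5', g1', bz0, bz1, bz2, bz3, bz4, bz5, bz6, bz7, bz8, bz9, bz10, bz11, bz12, bz13, bz14, bz15, bz16, bz17, bz18, bz19, lz0, lz1, lz2, lz3, lz4, lz5, lz6, lz7, lz8, lz9, lz10, lz11, lz12, lz13, lz14, lz15, lz16, lz17, lz18, lz19] at r
    linear_combination r - (-t)*A1
  have A14 : τ a2 w1 w1 = 0 := by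
    have r := Q1 w1
    simp only [s1, s2, hz1, hz2, h1, h2, h4, h5, g1, hz1', hz2', h2', h4', h5', g1', bz0, bz1, bz2, bz3, bz4, bz5, bz6, bz7, bz8, bz9, bz10, bz11, bz12, bz13, bz14, bz15, bz16, bz17, bz18, bz19, lz0, lz1, lz2, lz3, lz4, lz5, lz6, lz7, lz8, lz9, lz10, lz11, lz12, lz13, lz14, lz15, lz16, lz17, lz18, lz19] at r
    refine eq_zero_of_mul_left (mul_ne_zero (by norm_num : (3:ℂ) ≠ 0) ht) ?_
    linear_combination r - (t)*A0 - (2)*A12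
  have A15 : -τ a2 w2 w2 = 0 := by
    have r := Q2 w2
    simp only [s1, s2, hz1, hz2, h1, h2, h4, h5, g1, hz1', hz2', h2', h4', h5', g1', bz0, bz1, bz2, bz3, bz4, bz5, bz6, bz7, bz8, bz9, bz10, bz11, bz12, bz13, bz14, bz15, bz16, bz17, bz18, bz19, lz0, lz1, lz2, lz3, lz4, lz5, lz6, lz7, lz8, lz9, lz10, lz11, lz12, lz13, lz14, lz15, lz16, lz17, lz18, lz19] at r
    refine eq_zero_of_mul_left (mul_ne_zero (by norm_num : (3:ℂ) ≠ 0) ht) ?_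
    linear_combination r - (-t)*A1 - (2)*A13
  have A16 : -τ a1 w1 w2+(-t)*τ a2 w1 w2 = 0 := by
    have r := Q1 w2
    simp only [s1, s2, hz1, hz2, h1, h2, h4, h5, g1, hz1', hz2', h2', h4', h5', g1', bz0, bz1, bz2, bz3, bz4, bz5, bz6, bz7, bz8, bz9, bz10, bz11, bz12, bz13, bz14, bz15, bz16, bz17, bz18, bz19, lz0, lz1, lz2, lz3, lz4, lz5, lz6, lz7, lz8, lz9, lz10, lz11, lz12, lz13, lz14, lz15, lz16, lz17, lz18, lz19] at r
    linear_combination 1/2*((-1)*r - (-t)*A1 - (-t)*A15)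
  have A17 : τ a2 w1 w2 = 0 := by
    have r := Q2 w1
    simp only [s1, s2, hz1, hz2, h1, h2, h4, h5, g1, hz1', hz2', h2', h4', h5', g1', bz0, bz1, bz2, bz3, bz4, bz5, bz6, bz7, bz8, bz9, bz10, bz11, bz12, bz13, bz14, bz15, bz16, bz17, bz18, bz19, lz0, lz1, lz2, lz3, lz4, lz5, lz6, lz7, lz8, lz9, lz10, lz11, lz12, lz13, lz14, lz15, lz16, lz17, lz18, lz19] at r
    refine eq_zero_of_mul_left (mul_ne_zero (by norm_num : (4:ℂ) ≠ 0) ht) ?_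
    linear_combination (-1)*r - (t)*A0 - (-t)*A14 - (2)*A16
  have A18 : -τ a2 z1 w1-τ a2 z2 w1 = 0 := by
    have r := H3 w1
    simp only [s1, s2, hz1, hz2, h1, h2, h4, h5, g1, hz1', hz2', h2', h4', h5', g1', bz0, bz1, bz2, bz3, bz4, bz5, bz6, bz7, bz8, bz9, bz10, bz11, bz12, bz13, bz14, bz15, bz16, bz17, bz18, bz19, lz0, lz1, lz2, lz3, lz4, lz5, lz6, lz7, lz8, lz9, lz10, lz11, lz12, lz13, lz14, lz15, lz16, lz17, lz18, lz19] at r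
    refine eq_zero_of_mul_left (mul_ne_zero (by norm_num : (2:ℂ) ≠ 0) ht1) ?_
    linear_combination r - A0 - A2 - A5 - (-1)*A14
  have A19 : τ a1 a2 w3+τ a1 z1 w3+τ a1 z2 w3-τ a2 z1 w2-τ a2 z2 w1 = 0 := by
    have r := H3 w3
    simp only [s1, s2, hz1, hz2, h1, h2, h4, h5, g1, hz1', hz2', h2', h4', h5', g1', bz0, bz1, bz2, bz3, bz4, bz5, bz6, bz7, bz8, bz9, bz10, bz11, bz12, bz13, bz14, bz15, bz16, bz17, bz18, bz19, lz0, lz1, lz2, lz3, lz4, lz5, lz6, lz7, lz8, lz9, lz10, lz11, lz12, lz13, lz14, lz15, lz16, lz17, lz18, lz19] at r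
    linear_combination 1/2*(r - A6 - A7 - (-1)*A10 - (2)*A17)
  have A20 : τ a2 w2 w3 = 0 := by
    have r := Q1 w3
    simp only [s1, s2, hz1, hz2, h1, h2, h4, h5, g1, hz1', hz2', h2', h4', h5', g1', bz0, bz1, bz2, bz3, bz4, bz5, bz6, bz7, bz8, bz9, bz10, bz11, bz12, bz13, bz14, bz15, bz16, bz17, bz18, bz19, lz0, lz1, lz2, lz3, lz4, lz5, lz6, lz7, lz8, lz9, lz10, lz11, lz12, lz13, lz14, lz15, lz16, lz17, lz18, lz19] at r
    refine eq_zero_of_mul_left (mul_ne_zero (by norm_num : (4:ℂ) ≠ 0) ht) ?_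
    linear_combination (-1)*r - (-1)*A9 - (-t)*A10 - A11 - A12 - A13 - (2*t)*A14 - (-2)*A16
  have A21 : -τ a2 z1 w2+τ a2 z2 w1 = 0 := by
    have r := H3 w2
    simp only [s1, s2, hz1, hz2, h1, h2, h4, h5, g1, hz1', hz2', h2', h4', h5', g1', bz0, bz1, bz2, bz3, bz4, bz5, bz6, bz7, bz8, bz9, bz10, bz11, bz12, bz13, bz14, bz15, bz16, bz17, bz18, bz19, lz0, lz1, lz2, lz3, lz4, lz5, lz6, lz7, lz8, lz9, lz10, lz11, lz12, lz13, lz14, lz15, lz16, lz17, lz18, lz19] at r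
    refine eq_zero_of_mul_left (mul_ne_zero (by norm_num : (2:ℂ) ≠ 0) ht2) ?_
    linear_combination (-1)*r - (-1)*A1 - (-1)*A3 - (-1)*A4 - (-t-1)*A8 - (t+1)*A14 - (-t-2)*A15 - (2*t+2)*A17
  have A22 : -τ a2 z2 w1 = 0 := by
    have r := G4 a1
    simp only [s1, s2, hz1, hz2, h1, h2, h4, h5, g1, hz1', hz2', h2', h4', h5', g1', bz0, bz1, bz2, bz3, bz4, bz5, bz6, bz7, bz8, bz9, bz10, bz11, bz12, bz13, bz14, bz15, bz16, bz17, bz18, bz19, lz0, lz1, lz2, lz3, lz4, lz5, lz6, lz7, lz8, lz9, lz10, lz11, lz12, lz13, lz14, lz15, lz16, lz17, lz18, lz19] at r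
    refine eq_zero_of_mul_left (mul_ne_zero (by norm_num : (4:ℂ) ≠ 0) ht) ?_
    linear_combination r - A4 - A5 - (t)*A8 - A12 - A13 - (2*t)*A15 - (-2)*A16 - (-4*t)*A17
  have A23 : (-t+1)*τ a1 a2 w3+τ a1 z2 w3 = 0 := by
    have r := G2 a1
    simp only [s1, s2, hz1, hz2, h1, h2, h4, h5, g1, hz1', hz2', h2', h4', h5', g1', bz0, bz1, bz2, bz3, bz4, bz5, bz6, bz7, bz8, bz9, bz10, bz11, bz12, bz13, bz14, bz15, bz16, bz17, bz18, bz19, lz0, lz1, lz2, lz3, lz4, lz5, lz6, lz7, lz8, lz9, lz10, lz11, lz12, lz13, lz14, lz15, lz16, lz17, lz18, lz19] at r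
    linear_combination 1/2*((-1)*r - (-1)*A3 - (-1)*A11 - (-1)*A13 - (-t)*A15 - (-2)*A19 - (-2*t)*A20 - (2*t+2)*A21 - (2*t+4)*A22)
  have A24 : τ a1 a2 w3 = 0 := by
    have r := G3 a1
    simp only [s1, s2, hz1, hz2, h1, h2, h4, h5, g1, hz1', hz2', h2', h4', h5', g1', bz0, bz1, bz2, bz3, bz4, bz5, bz6, bz7, bz8, bz9, bz10, bz11, bz12, bz13, bz14, bz15, bz16, bz17, bz18, bz19, lz0, lz1, lz2, lz3, lz4, lz5, lz6, lz7, lz8, lz9, lz10, lz11, lz12, lz13, lz14, lz15, lz16, lz17, lz18, lz19] at r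
    linear_combination 1/2*((-1)*r - (-1)*A5 - (-1)*A9 - A11 - A13 - (t)*A15 - (-2)*A16 - (-2*t)*A17 - (2*t)*A20 - (-2*t)*A22 - (-2)*A23)
  have va1a2w3 : τ a1 a2 w3 = 0 := by linear_combination A24
  have va1z2w3 : τ a1 z2 w3 = 0 := by linear_combination A23 - (-t+1)*va1a2w3
  have va2z2w1 : τ a2 z2 w1 = 0 := by linear_combination -1*(A22)
  have va2z1w2 : τ a2 z1 w2 = 0 := by linear_combination -1*(A21 - va2z2w1)
  have va2w2w3 : τ a2 w2 w3 = 0 := by linear_combination A20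
  have va1z1w3 : τ a1 z1 w3 = 0 := by linear_combination A19 - va1a2w3 - va1z2w3 - (-1)*va2z1w2 - (-1)*va2z2w1
  have va2z1w1 : τ a2 z1 w1 = 0 := by linear_combination -1*(A18 - (-1)*va2z2w1)
  have va2w1w2 : τ a2 w1 w2 = 0 := by linear_combination A17
  have va1w1w2 : τ a1 w1 w2 = 0 := by linear_combination -1*(A16 - (-t)*va2w1w2)
  have va2w2w2 : τ a2 w2 w2 = 0 := by linear_combination -1*(A15)
  have va2w1w1 : τ a2 w1 w1 = 0 := by linear_combination A14
  have va1w2w2 : τ a1 w2 w2 = 0 := by linear_combination A13 - (t)*va2w2w2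
  have va1w1w1 : τ a1 w1 w1 = 0 := by linear_combination A12 - (-t)*va2w1w1
  have va1w2w3 : τ a1 w2 w3 = 0 := by linear_combination 1/2*(A11 - (-2*t)*va1a2w3 - (-2*t)*va2w2w3)
  have va2w1w3 : τ a2 w1 w3 = 0 := by linear_combination 1/2*(A10 - va2w1w1 - (2)*va2w1w2 - va2w2w2 - (2)*va2w2w3)
  have va1w1w3 : τ a1 w1 w3 = 0 := by linear_combination 1/2*(A9 - va1w1w1 - (2)*va1w1w2 - va1w2w2 - (2)*va1w2w3)
  have va2z2w2 : τ a2 z2 w2 = 0 := by linear_combination 1/2*(A8 - (2)*va2z2w1 - va2w1w1 - (2)*va2w1w2 - va2w2w2)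
  have va2z2w3 : τ a2 z2 w3 = 0 := by linear_combination 1/2*(A7 - (2)*va2z2w1 - va2w1w1 - (2)*va2w1w3)
  have va2z1w3 : τ a2 z1 w3 = 0 := by linear_combination 1/2*(A6 - (2)*va2z1w2 - va2w2w2 - (2)*va2w2w3)
  have va1z2w1 : τ a1 z2 w1 = 0 := by linear_combination 1/2*(A5 - (2*t)*va2z2w1)
  have va1z2w2 : τ a1 z2 w2 = 0 := by linear_combination 1/2*(A4 - (-2*t)*va2z2w2)
  have va1z1w2 : τ a1 z1 w2 = 0 := by linear_combination 1/2*(A3 - (-2*t)*va2z1w2)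
  have va1z1w1 : τ a1 z1 w1 = 0 := by linear_combination 1/2*(A2 - (2*t)*va2z1w1)
  have va1a2w2 : τ a1 a2 w2 = 0 := by linear_combination 1/2*(A1 - va2w2w2)
  have va1a2w1 : τ a1 a2 w1 = 0 := by linear_combination 1/2*(A0 - va2w1w1)
  -- elimination of the entries involving `b₁` or `b₂`, whose solution space is a line
  have B0 : 2*τ b2 z1 w2+2*τ b2 z1 w3+τ b2 w2 w2+2*τ b2 w2 w3 = 0 := by
    have r := G2 b2
    simp only [s1, s2, hz1, hz2, h1, h2, h4, h5, g1, hz1', hz2', h2', h4', h5', g1', bz0, bz1, bz2, bz3, bz4, bz5, bz6, bz7, bz8, bz9, bz10, bz11, bz12, bz13, bz14, bz15, bz16, bz17, bz18, bz19, lz0, lz1, lz2, lz3, lz4, lz5, lz6, lz7, lz8, lz9, lz10, lz11, lz12, lz13, lz14, lz15, lz16, lz17, lz18, lz19, va1a2w3, va1z2w3, va2z2w1, va2z1w2, va2w2w3, va1z1w3, va2z1w1, va2w1w2, va1w1w2, va2w2w2, va2w1w1, va1w2w2, va1w1w1, va1w2w3, va2w1w3, va1w1w3, va2z2w2, va2z2w3,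 va2z1w3, va1z2w1, va1z2w2, va1z1w2, va1z1w1, va1a2w2, va1a2w1] at r
    linear_combination r
  have B1 : 2*τ b2 z2 w1+2*τ b2 z2 w3+τ b2 w1 w1+2*τ b2 w1 w3 = 0 := by
    have r := G3 b2
    simp only [s1, s2, hz1, hz2, h1, h2, h4, h5, g1, hz1', hz2', h2', h4', h5', g1', bz0, bz1, bz2, bz3, bz4, bz5, bz6, bz7, bz8, bz9, bz10, bz11, bz12, bz13, bz14, bz15, bz16, bz17, bz18, bz19, lz0, lz1, lz2, lz3, lz4, lz5, lz6, lz7, lz8, lz9, lz10, lz11, lz12, lz13, lz14, lz15, lz16, lz17, lz18, lz19, va1a2w3, va1z2w3, va2z2w1, va2z1w2, va2w2w3, va1z1w3, va2z1w1, va2w1w2, va1w1w2, va2w2w2, va2w1w1, va1w2w2, va1w1w1, va1w2w3, va2w1w3, va1w1w3, va2z2w2, va2z2w3, va2z1w3, va1z2w1, va1z2w2, va1z1w2, va1z1w1, va1a2w2, va1a2w1] at r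
    linear_combination r
  have B2 : 2*τ a1 b2 w1+(2*t)*τ a2 b2 w1+τ b2 w1 w1 = 0 := by
    have r := Q1 b2
    simp only [s1, s2, hz1, hz2, h1, h2, h4, h5, g1, hz1', hz2', h2', h4', h5', g1', bz0, bz1, bz2, bz3, bz4, bz5, bz6, bz7, bz8, bz9, bz10, bz11, bz12, bz13, bz14, bz15, bz16, bz17, bz18, bz19, lz0, lz1, lz2, lz3, lz4, lz5, lz6, lz7, lz8, lz9, lz10, lz11, lz12, lz13, lz14, lz15, lz16, lz17, lz18, lz19, va1a2w3, va1z2w3, va2z2w1, va2z1w2, va2w2w3, va1z1w3, va2z1w1, va2w1w2, va1w1w2, va2w2w2, va2w1w1, va1w2w2, va1w1w1, va1w2w3, va2w1w3, va1w1w3, va2z2w2, va2z2w3, va2z1w3, va1z2w1, va1z2w2, va1z1w2, va1z1w1, va1a2w2, va1a2w1] at r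
    linear_combination r
  have B3 : 2*τ a1 b2 w2+(-2*t)*τ a2 b2 w2+τ b2 w2 w2 = 0 := by
    have r := Q2 b2
    simp only [s1, s2, hz1, hz2, h1, h2, h4, h5, g1, hz1', hz2', h2', h4', h5', g1', bz0, bz1, bz2, bz3, bz4, bz5, bz6, bz7, bz8, bz9, bz10, bz11, bz12, bz13, bz14, bz15, bz16, bz17, bz18, bz19, lz0, lz1, lz2, lz3, lz4, lz5, lz6, lz7, lz8, lz9, lz10, lz11, lz12, lz13, lz14, lz15, lz16, lz17, lz18, lz19, va1a2w3, va1z2w3, va2z2w1, va2z1w2, va2w2w3, va1z1w3, va2z1w1, va2w1w2, va1w1w2, va2w2w2, va2w1w1, va1w2w2, va1w1w1, va1w2w3, va2w1w3, va1w1w3, va2z2w2, va2z2w3, va2z1w3, va1z2w1, va1z2w2, va1z1w2, va1z1w1, va1a2w2, va1a2w1] at r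
    linear_combination r
  have B4 : 2*τ b1 z1 w2+2*τ b1 z1 w3+τ b1 w2 w2+2*τ b1 w2 w3 = 0 := by
    have r := G2 b1
    simp only [s1, s2, hz1, hz2, h1, h2, h4, h5, g1, hz1', hz2', h2', h4', h5', g1', bz0, bz1, bz2, bz3, bz4, bz5, bz6, bz7, bz8, bz9, bz10, bz11, bz12, bz13, bz14, bz15, bz16, bz17, bz18, bz19, lz0, lz1, lz2, lz3, lz4, lz5, lz6, lz7, lz8, lz9, lz10, lz11, lz12, lz13, lz14, lz15, lz16, lz17, lz18, lz19, va1a2w3, va1z2w3, va2z2w1, va2z1w2, va2w2w3, va1z1w3, va2z1w1, va2w1w2, va1w1w2, va2w2w2, va2w1w1, va1w2w2, va1w1w1, va1w2w3, va2w1w3, va1w1w3, va2z2w2, va2z2w3, va2z1w3, va1z2w1, va1z2w2, va1z1w2, va1z1w1, va1a2w2, va1a2w1] at r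
    linear_combination r
  have B5 : 2*τ b1 z2 w1+2*τ b1 z2 w3+τ b1 w1 w1+2*τ b1 w1 w3 = 0 := by
    have r := G3 b1
    simp only [s1, s2, hz1, hz2, h1, h2, h4, h5, g1, hz1', hz2', h2', h4', h5', g1', bz0, bz1, bz2, bz3, bz4, bz5, bz6, bz7, bz8, bz9, bz10, bz11, bz12, bz13, bz14, bz15, bz16, bz17, bz18, bz19, lz0, lz1, lz2, lz3, lz4, lz5, lz6, lz7, lz8, lz9, lz10, lz11, lz12, lz13, lz14, lz15, lz16, lz17, lz18, lz19, va1a2w3, va1z2w3, va2z2w1, va2z1w2, va2w2w3, va1z1w3, va2z1w1, va2w1w2, va1w1w2, va2w2w2, va2w1w1, va1w2w2, va1w1w1, va1w2w3, va2w1w3, va1w1w3, va2z2w2, va2z2w3, va2z1w3, va1z2w1, va1z2w2, va1z1w2, va1z1w1, va1a2w2, va1a2w1] at r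
    linear_combination r
  have B6 : τ b2 w1 w1+2*τ b2 w1 w2+2*τ b2 w1 w3+τ b2 w2 w2+2*τ b2 w2 w3 = 0 := by
    have r := G5 b2
    simp only [s1, s2, hz1, hz2, h1, h2, h4, h5, g1, hz1', hz2', h2', h4', h5', g1', bz0, bz1, bz2, bz3, bz4, bz5, bz6, bz7, bz8, bz9, bz10, bz11, bz12, bz13, bz14, bz15, bz16, bz17, bz18, bz19, lz0, lz1, lz2, lz3, lz4, lz5, lz6, lz7, lz8, lz9, lz10, lz11, lz12, lz13, lz14, lz15, lz16, lz17, lz18, lz19, va1a2w3, va1z2w3, va2z2w1, va2z1w2, va2w2w3, va1z1w3, va2z1w1, va2w1w2, va1w1w2, va2w2w2, va2w1w1, va1w2w2, va1w1w1, va1w2w3, va2w1w3, va1w1w3, va2z2w2, va2z2w3, va2z1w3, va1z2w1, va1z2w2, va1z1w2, va1z1w1, va1a2w2, va1a2w1] at r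
    linear_combination r
  have B7 : 2*τ b1 b2 w3+2*τ b1 z1 w3-2*τ b1 z2 w3+2*τ b2 z1 w3-2*τ b2 z2 w3 = 0 := by
    have r := H6 w3
    simp only [s1, s2, hz1, hz2, h1, h2, h4, h5, g1, hz1', hz2', h2', h4', h5', g1', bz0, bz1, bz2, bz3, bz4, bz5, bz6, bz7, bz8, bz9, bz10, bz11, bz12, bz13, bz14, bz15, bz16, bz17, bz18, bz19, lz0, lz1, lz2, lz3, lz4, lz5, lz6, lz7, lz8, lz9, lz10, lz11, lz12, lz13, lz14, lz15, lz16, lz17, lz18, lz19, va1a2w3, va1z2w3, va2z2w1, va2z1w2, va2w2w3, va1z1w3, va2z1w1, va2w1w2, va1w1w2, va2w2w2, va2w1w1, va1w2w2, va1w1w1, va1w2w3, va2w1w3, va1w1w3, va2z2w2, va2z2w3, va2z1w3, va1z2w1, va1z2w2, va1z1w2, va1z1w1, va1a2w2, va1a2w1] at r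
    linear_combination r
  have B8 : 2*τ b1 b2 w1-2*τ b1 b2 w3+τ b2 w1 w1-2*τ b2 w1 w3 = 0 := by
    have r := Q3 b2
    simp only [s1, s2, hz1, hz2, h1, h2, h4, h5, g1, hz1', hz2', h2', h4', h5', g1', bz0, bz1, bz2, bz3, bz4, bz5, bz6, bz7, bz8, bz9, bz10, bz11, bz12, bz13, bz14, bz15, bz16, bz17, bz18, bz19, lz0, lz1, lz2, lz3, lz4, lz5, lz6, lz7, lz8, lz9, lz10, lz11, lz12, lz13, lz14, lz15, lz16, lz17, lz18, lz19, va1a2w3, va1z2w3, va2z2w1, va2z1w2, va2w2w3, va1z1w3, va2z1w1, va2w1w2, va1w1w2, va2w2w2, va2w1w1, va1w2w2, va1w1w1, va1w2w3, va2w1w3, va1w1w3, va2z2w2, va2z2w3, va2z1w3, va1z2w1, va1z2w2, va1z1w2, va1z1w1, va1a2w2, va1a2w1] at r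
    linear_combination r
  have B9 : 2*τ a1 b1 w3+4*τ a1 b2 w3-2*τ a2 b1 w3-4*τ a2 b2 w3+4*τ b1 b2 w3 = 0 := by
    have r := H7 w3
    simp only [s1, s2, hz1, hz2, h1, h2, h4, h5, g1, hz1', hz2', h2', h4', h5', g1', bz0, bz1, bz2, bz3, bz4, bz5, bz6, bz7, bz8, bz9, bz10, bz11, bz12, bz13, bz14, bz15, bz16, bz17, bz18, bz19, lz0, lz1, lz2, lz3, lz4, lz5, lz6, lz7, lz8, lz9, lz10, lz11, lz12, lz13, lz14, lz15, lz16, lz17, lz18, lz19, va1a2w3, va1z2w3, va2z2w1, va2z1w2, va2w2w3, va1z1w3, va2z1w1, va2w1w2, va1w1w2, va2w2w2, va2w1w1, va1w2w2, va1w1w1, va1w2w3, va2w1w3, va1w1w3, va2z2w2, va2z2w3, va2z1w3, va1z2w1, va1z2w2, va1z1w2, va1z1w1, va1a2w2, va1a2w1] at r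
    linear_combination r
  have B10 : τ a1 b1 w2+(-t)*τ a2 b1 w2-τ b1 z1 w2-τ b1 z1 w3-τ b1 w2 w3 = 0 := by
    have r := Q2 b1
    simp only [s1, s2, hz1, hz2, h1, h2, h4, h5, g1, hz1', hz2', h2', h4', h5', g1', bz0, bz1, bz2, bz3, bz4, bz5, bz6, bz7, bz8, bz9, bz10, bz11, bz12, bz13, bz14, bz15, bz16, bz17, bz18, bz19, lz0, lz1, lz2, lz3, lz4, lz5, lz6, lz7, lz8, lz9, lz10, lz11, lz12, lz13, lz14, lz15, lz16, lz17, lz18, lz19, va1a2w3, va1z2w3, va2z2w1, va2z1w2, va2w2w3, va1z1w3, va2z1w1, va2w1w2, va1w1w2, va2w2w2, va2w1w1, va1w2w2, va1w1w1, va1w2w3, va2w1w3, va1w1w3, va2z2w2, va2z2w3, va2z1w3, va1z2w1, va1z2w2, va1z1w2, va1z1w1, va1a2w2, va1a2w1] at r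
    linear_combination 1/2*(r - B4)
  have B11 : τ a1 b1 w2-τ a2 b1 w2+(2*t-2)*τ a2 b2 w2+2*τ b1 b2 w2-τ b2 w2 w2 = 0 := by
    have r := H7 w2
    simp only [s1, s2, hz1, hz2, h1, h2, h4, h5, g1, hz1', hz2', h2', h4', h5', g1', bz0, bz1, bz2, bz3, bz4, bz5, bz6, bz7, bz8, bz9, bz10, bz11, bz12, bz13, bz14, bz15, bz16, bz17, bz18, bz19, lz0, lz1, lz2, lz3, lz4, lz5, lz6, lz7, lz8, lz9, lz10, lz11, lz12, lz13, lz14, lz15, lz16, lz17, lz18, lz19, va1a2w3, va1z2w3, va2z2w1, va2z1w2, va2w2w3, va1z1w3, va2z1w1, va2w1w2, va1w1w2, va2w2w2, va2w1w1, va1w2w2, va1w1w1, va1w2w3, va2w1w3, va1w1w3, va2z2w2, va2z2w3, va2z1w3, va1z2w1, va1z2w2, va1z1w2, va1z1w1, va1a2w2, va1a2w1] at r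
    linear_combination 1/2*(r - (2)*B3)
  have B12 : τ a1 b1 w1-τ a2 b1 w1+(-2*t-2)*τ a2 b2 w1+2*τ b1 b2 w1-τ b2 w1 w1 = 0 := by
    have r := H7 w1
    simp only [s1, s2, hz1, hz2, h1, h2, h4, h5, g1, hz1', hz2', h2', h4', h5', g1', bz0, bz1, bz2, bz3, bz4, bz5, bz6, bz7, bz8, bz9, bz10, bz11, bz12, bz13, bz14, bz15, bz16, bz17, bz18, bz19, lz0, lz1, lz2, lz3, lz4, lz5, lz6, lz7, lz8, lz9, lz10, lz11, lz12, lz13, lz14, lz15, lz16, lz17, lz18, lz19, va1a2w3, va1z2w3, va2z2w1, va2z1w2, va2w2w3, va1z1w3, va2z1w1, va2w1w2, va1w1w2, va2w2w2, va2w1w1, va1w2w2, va1w1w1, va1w2w3, va2w1w3, va1w1w3, va2z2w2, va2z2w3, va2z1w3, va1z2w1, va1z2w2, va1z1w2, va1z1w1, va1a2w2, va1a2w1] at r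
    linear_combination 1/2*(r - (2)*B2)
  have B13 : -τ b1 z1 w2-τ b1 z1 w3-τ b1 z2 w1-τ b1 z2 w3+τ b1 w1 w2 = 0 := by
    have r := G5 b1
    simp only [s1, s2, hz1, hz2, h1, h2, h4, h5, g1, hz1', hz2', h2', h4', h5', g1', bz0, bz1, bz2, bz3, bz4, bz5, bz6, bz7, bz8, bz9, bz10, bz11, bz12, bz13, bz14, bz15, bz16, bz17, bz18, bz19, lz0, lz1, lz2, lz3, lz4, lz5, lz6, lz7, lz8, lz9, lz10, lz11, lz12, lz13, lz14, lz15, lz16, lz17, lz18, lz19, va1a2w3, va1z2w3, va2z2w1, va2z1w2, va2w2w3, va1z1w3, va2z1w1, va2w1w2, va1w1w2, va2w2w2, va2w1w1, va1w2w2, va1w1w1, va1w2w3, va2w1w3, va1w1w3, va2z2w2, va2z2w3, va2z1w3, va1z2w1, va1z2w2, va1z1w2, va1z1w1, va1a2w2, va1a2w1] at r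
    linear_combination 1/2*(r - B4 - B5)
  have B14 : τ a1 b1 w3-τ a2 b1 w3+(2*t-2)*τ a2 b2 w2+2*τ b1 b2 w2-2*τ b2 w2 w3 = 0 := by
    have r := Q4 b2
    simp only [s1, s2, hz1, hz2, h1, h2, h4, h5, g1, hz1', hz2', h2', h4', h5', g1', bz0, bz1, bz2, bz3, bz4, bz5, bz6, bz7, bz8, bz9, bz10, bz11, bz12, bz13, bz14, bz15, bz16, bz17, bz18, bz19, lz0, lz1, lz2, lz3, lz4, lz5, lz6, lz7, lz8, lz9, lz10, lz11, lz12, lz13, lz14, lz15, lz16, lz17, lz18, lz19, va1a2w3, va1z2w3, va2z2w1, va2z1w2, va2w2w3, va1z1w3, va2z1w1, va2w1w2, va1w1w2, va2w2w2, va2w1w1, va1w2w2, va1w1w1, va1w2w3, va2w1w3, va1w1w3, va2z2w2, va2z2w3, va2z1w3, va1z2w1, va1z2w2, va1z1w2, va1z1w1, va1a2w2, va1a2w1] at r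
    linear_combination 1/2*((2)*r - (2)*B3 - (-1)*B9)
  have B15 : τ a1 b1 w1-τ a2 b1 w1+(-2*t-2)*τ a2 b2 w1+4*τ b1 b2 w1-τ b1 b2 w3+τ b1 z1 w1-τ b1 z2 w1+τ b2 z1 w1+τ b2 z2 w3 = 0 := by
    have r := H6 w1
    simp only [s1, s2, hz1, hz2, h1, h2, h4, h5, g1, hz1', hz2', h2', h4', h5', g1', bz0, bz1, bz2, bz3, bz4, bz5, bz6, bz7, bz8, bz9, bz10, bz11, bz12, bz13, bz14, bz15, bz16, bz17, bz18, bz19, lz0, lz1, lz2, lz3, lz4, lz5, lz6, lz7, lz8, lz9, lz10, lz11, lz12, lz13, lz14, lz15, lz16, lz17, lz18, lz19, va1a2w3, va1z2w3, va2z2w1, va2z1w2, va2w2w3, va1z1w3, va2z1w1, va2w1w2, va1w1w2, va2w2w2, va2w1w1, va1w2w2, va1w1w1, va1w2w3, va2w1w3, va1w1w3, va2z2w2, va2z2w3, va2z1w3, va1z2w1, va1z2w2, va1z1w2, va1z1w1, va1a2w2, va1a2w1] at r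
    linear_combination 1/2*(r - (-1)*B1 - (-1)*B8 - (-2)*B12)
  have B16 : -τ a1 b1 w2-τ a1 b1 w3+τ a2 b1 w2+τ a2 b1 w3+(-4*t+4)*τ a2 b2 w2-2*τ b1 b2 w2+2*τ b1 b2 w3+2*τ b1 z1 w2+2*τ b1 z1 w3-2*τ b1 z2 w2-2*τ b1 z2 w3-2*τ b2 z2 w2-2*τ b2 z2 w3 = 0 := by
    have r := H6 w2
    simp only [s1, s2, hz1, hz2, h1, h2, h4, h5, g1, hz1', hz2', h2', h4', h5', g1', bz0, bz1, bz2, bz3, bz4, bz5, bz6, bz7, bz8, bz9, bz10, bz11, bz12, bz13, bz14, bz15, bz16, bz17, bz18, bz19, lz0, lz1, lz2, lz3, lz4, lz5, lz6, lz7, lz8, lz9, lz10, lz11, lz12, lz13, lz14, lz15, lz16, lz17, lz18, lz19, va1a2w3, va1z2w3, va2z2w1, va2z1w2, va2w2w3, va1z1w3, va2z1w1, va2w1w2, va1w1w2, va2w2w2, va2w1w1, va1w2w2, va1w1w1, va1w2w3, va2w1w3, va1w1w3, va2z2w2, va2z2w3, va2z1w3, va1z2w1, va1z2w2, va1z1w2,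 va1z1w1, va1a2w2, va1a2w1] at r
    linear_combination r - B0 - (-1)*B7 - B11 - B14
  have B17 : 2*τ a2 b1 w1-2*τ a2 b1 w3+(2*t)*τ a2 b2 w1+(-2*t)*τ a2 b2 w3 = 0 := by
    have r := Q3 a2
    simp only [s1, s2, hz1, hz2, h1, h2, h4, h5, g1, hz1', hz2', h2', h4', h5', g1', bz0, bz1, bz2, bz3, bz4, bz5, bz6, bz7, bz8, bz9, bz10, bz11, bz12, bz13, bz14, bz15, bz16, bz17, bz18, bz19, lz0, lz1, lz2, lz3, lz4, lz5, lz6, lz7, lz8, lz9, lz10, lz11, lz12, lz13, lz14, lz15, lz16, lz17, lz18, lz19, va1a2w3, va1z2w3, va2z2w1, va2z1w2, va2w2w3, va1z1w3, va2z1w1, va2w1w2, va1w1w2, va2w2w2, va2w1w1, va1w2w2, va1w1w1, va1w2w3, va2w1w3, va1w1w3, va2z2w2, va2z2w3, va2z1w3, va1z2w1, va1z2w2, va1z1w2, va1z1w1, va1a2w2, va1a2w1] at r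
    linear_combination r
  have B18 : -τ a2 b1 w1-τ a2 b1 w2+2*τ a2 b1 w3+(-t)*τ a2 b2 w1+(t)*τ a2 b2 w2 = 0 := by
    have r := Q4 a2
    simp only [s1, s2, hz1, hz2, h1, h2, h4, h5, g1, hz1', hz2', h2', h4', h5', g1', bz0, bz1, bz2, bz3, bz4, bz5, bz6, bz7, bz8, bz9, bz10, bz11, bz12, bz13, bz14, bz15, bz16, bz17, bz18, bz19, lz0, lz1, lz2, lz3, lz4, lz5, lz6, lz7, lz8, lz9, lz10, lz11, lz12, lz13, lz14, lz15, lz16, lz17, lz18, lz19, va1a2w3, va1z2w3, va2z2w1, va2z1w2, va2w2w3, va1z1w3, va2z1w1, va2w1w2, va1w1w2, va2w2w2, va2w1w1, va1w2w2, va1w1w1, va1w2w3, va2w1w3, va1w1w3, va2z2w2, va2z2w3, va2z1w3, va1z2w1, va1z2w2, va1z1w2, va1z1w1, va1a2w2, va1a2w1] at r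
    linear_combination 1/2*((-1)*r - B17)
  have B19 : (-t)*τ a1 b1 w1+(t)*τ a2 b1 w1+(2*t^2+2*t)*τ a2 b2 w1+(-3*t)*τ b1 b2 w1+(t)*τ b1 b2 w3+τ b1 z2 w1-τ b1 z2 w3+(-2*t)*τ b2 z2 w3 = 0 := by
    have r := Q3 z2
    simp only [s1, s2, hz1, hz2, h1, h2, h4, h5, g1, hz1', hz2', h2', h4', h5', g1', bz0, bz1, bz2, bz3, bz4, bz5, bz6, bz7, bz8, bz9, bz10, bz11, bz12, bz13, bz14, bz15, bz16, bz17, bz18, bz19, lz0, lz1, lz2, lz3, lz4, lz5, lz6, lz7, lz8, lz9, lz10, lz11, lz12, lz13, lz14, lz15, lz16, lz17, lz18, lz19, va1a2w3, va1z2w3, va2z2w1, va2z1w2, va2w2w3, va1z1w3, va2z1w1, va2w1w2, va1w1w2, va2w2w2, va2w1w1, va1w2w2, va1w1w1, va1w2w3, va2w1w3, va1w1w3, va2z2w2, va2z2w3, va2z1w3, va1z2w1, va1z2w2, va1z1w2, va1z1w1, va1a2w2, va1a2w1] at r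
    linear_combination 1/2*(r - (t)*B1 - (t)*B8 - (2*t)*B12)
  have B20 : (t)*τ a1 b1 w1+(-t)*τ a2 b1 w1+(-2*t^2-2*t)*τ a2 b2 w1+(4*t)*τ b1 b2 w1-2*τ b1 z2 w1-2*τ b1 z2 w3-τ b1 w1 w1 = 0 := by
    have r := Q3 w3
    simp only [s1, s2, hz1, hz2, h1, h2, h4, h5, g1, hz1', hz2', h2', h4', h5', g1', bz0, bz1, bz2, bz3, bz4, bz5, bz6, bz7, bz8, bz9, bz10, bz11, bz12, bz13, bz14, bz15, bz16, bz17, bz18, bz19, lz0, lz1, lz2, lz3, lz4, lz5, lz6, lz7, lz8, lz9, lz10, lz11, lz12, lz13, lz14, lz15, lz16, lz17, lz18, lz19, va1a2w3, va1z2w3, va2z2w1, va2z1w2, va2w2w3, va1z1w3, va2z1w1, va2w1w2, va1w1w2, va2w2w2, va2w1w1, va1w2w2, va1w1w1, va1w2w3, va2w1w3, va1w1w3, va2z2w2, va2z2w3, va2z1w3, va1z2w1, va1z2w2, va1z1w2, va1z1w1, va1a2w2, va1a2w1] at r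
    linear_combination r - B5 - (-t)*B8 - (-t)*B12
  have B21 : 2*τ a1 b1 w1+(2*t)*τ a2 b1 w1+τ b1 w1 w1 = 0 := by
    have r := Q1 b1
    simp only [s1, s2, hz1, hz2, h1, h2, h4, h5, g1, hz1', hz2', h2', h4', h5', g1', bz0, bz1, bz2, bz3, bz4, bz5, bz6, bz7, bz8, bz9, bz10, bz11, bz12, bz13, bz14, bz15, bz16, bz17, bz18, bz19, lz0, lz1, lz2, lz3, lz4, lz5, lz6, lz7, lz8, lz9, lz10, lz11, lz12, lz13, lz14, lz15, lz16, lz17, lz18, lz19, va1a2w3, va1z2w3, va2z2w1, va2z1w2, va2w2w3, va1z1w3, va2z1w1, va2w1w2, va1w1w2, va2w2w2, va2w1w1, va1w2w2, va1w1w1, va1w2w3, va2w1w3, va1w1w3, va2z2w2, va2z2w3, va2z1w3, va1z2w1, va1z2w2, va1z1w2, va1z1w1, va1a2w2, va1a2w1] at r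
    linear_combination r
  have B22 : τ a1 b1 w2+τ a1 b1 w3+(-2*t+1)*τ a2 b1 w2-τ a2 b1 w3+(t)*τ b1 b2 w2+(-t)*τ b1 b2 w3-τ b1 z1 w2-τ b1 z1 w3 = 0 := by
    have r := Q4 b1
    simp only [s1, s2, hz1, hz2, h1, h2, h4, h5, g1, hz1', hz2', h2', h4', h5', g1', bz0, bz1, bz2, bz3, bz4, bz5, bz6, bz7, bz8, bz9, bz10, bz11, bz12, bz13, bz14, bz15, bz16, bz17, bz18, bz19, lz0, lz1, lz2, lz3, lz4, lz5, lz6, lz7, lz8, lz9, lz10, lz11, lz12, lz13, lz14, lz15, lz16, lz17, lz18, lz19, va1a2w3, va1z2w3, va2z2w1, va2z1w2, va2w2w3, va1z1w3, va2z1w1, va2w1w2, va1w1w2, va2w2w2, va2w1w1, va1w2w2, va1w1w1, va1w2w3, va2w1w3, va1w1w3, va2z2w2, va2z2w3, va2z1w3, va1z2w1, va1z2w2, va1z1w2, va1z1w1, va1a2w2, va1a2w1] at r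
    linear_combination 1/2*((-1)*r - (-1)*B4 - (-4)*B10)
  have B23 : -2*τ a1 b1 w3+(2*t-2)*τ a2 b1 w2+2*τ a2 b1 w3+(-2*t)*τ b1 b2 w2+(2*t)*τ b1 b2 w3-4*τ b1 z2 w1-2*τ b1 z2 w2-2*τ b1 z2 w3-τ b1 w1 w1 = 0 := by
    have r := G4 b1
    simp only [s1, s2, hz1, hz2, h1, h2, h4, h5, g1, hz1', hz2', h2', h4', h5', g1', bz0, bz1, bz2, bz3, bz4, bz5, bz6, bz7, bz8, bz9, bz10, bz11, bz12, bz13, bz14, bz15, bz16, bz17, bz18, bz19, lz0, lz1, lz2, lz3, lz4, lz5, lz6, lz7, lz8, lz9, lz10, lz11, lz12, lz13, lz14, lz15, lz16, lz17, lz18, lz19, va1a2w3, va1z2w3, va2z2w1, va2z1w2, va2w2w3, va1z1w3, va2z1w1, va2w1w2, va1w1w2, va2w2w2, va2w1w1, va1w2w2, va1w1w1, va1w2w3, va2w1w3, va1w1w3, va2z2w2, va2z2w3, va2z1w3, va1z2w1, va1z2w2, va1z1w2, va1z1w1, va1a2w2, va1a2w1] at r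
    linear_combination (-1)*r - (-1)*B4 - (-2)*B10 - (-2)*B13 - (2)*B22
  have B24 : (t)*τ b1 b2 w1+(-t)*τ b1 b2 w3+τ b1 z2 w1+τ b1 z2 w3+τ b1 w1 w1 = 0 := by
    have r := Q3 b1
    simp only [s1, s2, hz1, hz2, h1, h2, h4, h5, g1, hz1', hz2', h2', h4', h5', g1', bz0, bz1, bz2, bz3, bz4, bz5, bz6, bz7, bz8, bz9, bz10, bz11, bz12, bz13, bz14, bz15, bz16, bz17, bz18, bz19, lz0, lz1, lz2, lz3, lz4, lz5, lz6, lz7, lz8, lz9, lz10, lz11, lz12, lz13, lz14, lz15, lz16, lz17, lz18, lz19, va1a2w3, va1z2w3, va2z2w1, va2z1w2, va2w2w3, va1z1w3, va2z1w1, va2w1w2, va1w1w2, va2w2w2, va2w1w1, va1w2w2, va1w1w1, va1w2w3, va2w1w3, va1w1w3, va2z2w2, va2z2w3, va2z1w3, va1z2w1, va1z2w2, va1z1w2, va1z1w1, va1a2w2, va1a2w1] at r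
    linear_combination 1/2*(r - (-1)*B5)
  have B25 : -τ b1 z2 w1-τ b1 z2 w3-τ b1 w1 w1 = 0 := by
    have r := Q3 w1
    simp only [s1, s2, hz1, hz2, h1, h2, h4, h5, g1, hz1', hz2', h2', h4', h5', g1', bz0, bz1, bz2, bz3, bz4, bz5, bz6, bz7, bz8, bz9, bz10, bz11, bz12, bz13, bz14, bz15, bz16, bz17, bz18, bz19, lz0, lz1, lz2, lz3, lz4, lz5, lz6, lz7, lz8, lz9, lz10, lz11, lz12, lz13, lz14, lz15, lz16, lz17, lz18, lz19, va1a2w3, va1z2w3, va2z2w1, va2z1w2, va2w2w3, va1z1w3, va2z1w1, va2w1w2, va1w1w2, va2w2w2, va2w1w1, va1w2w2, va1w1w1, va1w2w3, va2w1w3, va1w1w3, va2z2w2, va2z2w3, va2z1w3, va1z2w1, va1z2w2, va1z1w2, va1z1w1, va1a2w2, va1a2w1] at r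
    linear_combination 1/6*((-1)*r - B5 - (-t)*B8 - (t)*B12 - (-1)*B20 - (2)*B24)
  have B26 : -τ b1 z1 w1+τ b1 z1 w3+2*τ b1 z2 w1+τ b1 w1 w1 = 0 := by
    have r := Q3 z1
    simp only [s1, s2, hz1, hz2, h1, h2, h4, h5, g1, hz1', hz2', h2', h4', h5', g1', bz0, bz1, bz2, bz3, bz4, bz5, bz6, bz7, bz8, bz9, bz10, bz11, bz12, bz13, bz14, bz15, bz16, bz17, bz18, bz19, lz0, lz1, lz2, lz3, lz4, lz5, lz6, lz7, lz8, lz9, lz10, lz11, lz12, lz13, lz14, lz15, lz16, lz17, lz18, lz19, va1a2w3, va1z2w3, va2z2w1, va2z1w2, va2w2w3, va1z1w3, va2z1w1, va2w1w2, va1w1w2, va2w2w2, va2w1w1, va1w2w2, va1w1w1, va1w2w3, va2w1w3, va1w1w3, va2z2w2, va2z2w3, va2z1w3, va1z2w1, va1z2w2, va1z1w2, va1z1w1, va1a2w2, va1a2w1] at r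
    refine eq_zero_of_mul_left (mul_ne_zero (by norm_num : (2:ℂ) ≠ 0) ht1) ?_
    linear_combination r - (-t)*B7 - (2*t)*B15 - (2)*B19 - (-2)*B24 - (2*t-4)*B25
  have B27 : (t+1)*τ a2 b1 w1+(t-1)*τ a2 b1 w2+(-t)*τ b1 b2 w2+(t)*τ b1 b2 w3-τ b1 z2 w1-τ b1 z2 w2+τ b1 w1 w1 = 0 := by
    have r := Q3 a1
    simp only [s1, s2, hz1, hz2, h1, h2, h4, h5, g1, hz1', hz2', h2', h4', h5', g1', bz0, bz1, bz2, bz3, bz4, bz5, bz6, bz7, bz8, bz9, bz10, bz11, bz12, bz13, bz14, bz15, bz16, bz17, bz18, bz19, lz0, lz1, lz2, lz3, lz4, lz5, lz6, lz7, lz8, lz9, lz10, lz11, lz12, lz13, lz14, lz15, lz16, lz17, lz18, lz19, va1a2w3, va1z2w3, va2z2w1, va2z1w2, va2w2w3, va1z1w3, va2z1w1, va2w1w2, va1w1w2, va2w2w2, va2w1w1, va1w2w2, va1w1w1, va1w2w3, va2w1w3, va1w1w3, va2z2w2, va2z2w3, va2z1w3, va1z2w1, va1z2w2, va1z1w2,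 va1z1w1, va1a2w2, va1a2w1] at r
    refine eq_zero_of_mul_left (mul_ne_zero (by norm_num : (2:ℂ) ≠ 0) ht3) ?_
    linear_combination (2)*r - (2*t)*B2 - (-t)*B9 - (2*t)*B12 - (2)*B17 - (-t+2)*B21 - (-t+2)*B23 - (-4)*B24 - (2*t-8)*B25
  have B28 : (2*t^3-4*t^2-2*t+4)*τ a2 b1 w1+(8*t^2-8)*τ a2 b1 w3+(-8*t^2-8*t)*τ b1 b2 w2+(-4*t^2+12*t)*τ b1 b2 w3+(t^2-3*t+2)*τ b1 w1 w1 = 0 := by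
    have r := Q4 w3
    simp only [s1, s2, hz1, hz2, h1, h2, h4, h5, g1, hz1', hz2', h2', h4', h5', g1', bz0, bz1, bz2, bz3, bz4, bz5, bz6, bz7, bz8, bz9, bz10, bz11, bz12, bz13, bz14, bz15, bz16, bz17, bz18, bz19, lz0, lz1, lz2, lz3, lz4, lz5, lz6, lz7, lz8, lz9, lz10, lz11, lz12, lz13, lz14, lz15, lz16, lz17, lz18, lz19, va1a2w3, va1z2w3, va2z2w1, va2z1w2, va2w2w3, va1z1w3, va2z1w1, va2w1w2, va1w1w2, va2w2w2, va2w1w1, va1w2w2, va1w1w1, va1w2w3, va2w1w3, va1w1w3, va2z2w2, va2z2w3, va2z1w3, va1z2w1, va1z2w2, va1z1w2, va1z1w1, va1a2w2, va1a2w1] at r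
    linear_combination (2*t+2)*r - (-t^2-t)*B9 - (-4*t-4)*B10 - (2*t^2+2*t)*B14 - (-4*t^2+4)*B18 - (2*t-2)*B20 - (-t^2+t)*B21 - (4*t+4)*B22 - (-8*t+8)*B24 - (-12*t+12)*B25
  have B29 : (-2*t^2-6*t-4)*τ a2 b1 w1+(t^2-2*t)*τ b1 b2 w2+(-t^2+2*t)*τ b1 b2 w3+(-t)*τ b1 z1 w2+(-t)*τ b1 z1 w3+10*τ b1 z2 w1+(4*t+6)*τ b1 z2 w2+(-4*t+2)*τ b1 w1 w1 = 0 := by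
    have r := Q4 z2
    simp only [s1, s2, hz1, hz2, h1, h2, h4, h5, g1, hz1', hz2', h2', h4', h5', g1', bz0, bz1, bz2, bz3, bz4, bz5, bz6, bz7, bz8, bz9, bz10, bz11, bz12, bz13, bz14, bz15, bz16, bz17, bz18, bz19, lz0, lz1, lz2, lz3, lz4, lz5, lz6, lz7, lz8, lz9, lz10, lz11, lz12, lz13, lz14, lz15, lz16, lz17, lz18, lz19, va1a2w3, va1z2w3, va2z2w1, va2z1w2, va2w2w3, va1z1w3, va2z1w1, va2w1w2, va1w1w2, va2w2w2, va2w1w1, va1w2w2, va1w1w1, va1w2w3, va2w1w3, va1w1w3, va2z2w2, va2z2w3, va2z1w3, va1z2w1, va1z2w2, va1z1w2, va1z1w1, va1a2w2, va1a2w1] at r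
    refine eq_zero_of_mul_left ht2 ?_
    linear_combination (t+1)*r - (t^2+t)*B16 - (4*t^2-4)*B18 - (-2*t-2)*B19 - (-4*t)*B20 - (t^2-t)*B21 - (t^2+t)*B22 - (10*t-6)*B24 - (-2*t^2+20*t-2)*B25 - (2*t^2+6*t+4)*B27 - (-1)*B28
  have B30 : (2*t^2+6*t+4)*τ a2 b1 w1+(12*t)*τ b1 b2 w3+(t+14)*τ b1 w1 w1 = 0 := by
    have r := G4 b2
    simp only [s1, s2, hz1, hz2, h1, h2, h4, h5, g1, hz1', hz2', h2', h4', h5', g1', bz0, bz1, bz2, bz3, bz4, bz5, bz6, bz7, bz8, bz9, bz10, bz11, bz12, bz13, bz14, bz15, bz16, bz17, bz18, bz19, lz0, lz1, lz2, lz3, lz4, lz5, lz6, lz7, lz8, lz9, lz10, lz11, lz12, lz13, lz14, lz15, lz16, lz17, lz18, lz19, va1a2w3, va1z2w3, va2z2w1, va2z1w2, va2w2w3, va1z1w3, va2z1w1, va2w1w2, va1w1w2, va2w2w2, va2w1w1, va1w2w2, va1w1w1, va1w2w3, va2w1w3, va1w1w3, va2z2w2, va2z2w3, va2z1w3, va1z2w1,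 va1z2w2, va1z1w2, va1z1w1, va1a2w2, va1a2w1] at r
    refine eq_zero_of_mul_left ht2 ?_
    linear_combination (2*t^2+2*t)*r - (2*t^2+2*t)*B1 - (2*t^2+2*t)*B6 - (4*t^2+4*t)*B8 - (6*t^2+6*t)*B12 - (2*t^2+2*t)*B14 - (-2*t^2-2*t)*B16 - (-12*t^2+12)*B18 - (4*t+4)*B19 - (4*t-8)*B20 - (-3*t^2+3*t)*B21 - (-2*t^2-2*t)*B22 - (t^2+t)*B23 - (-24*t+24)*B24 - (2*t^2-34*t+36)*B25 - (-6*t^2-18*t-12)*B27 - (3)*B28 - (-2*t-2)*B29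
  have B31 : (2*t^3-22*t^2-80*t-56)*τ a2 b1 w1+(12*t^2-24*t)*τ b1 b2 w2+(-12*t-120)*τ b1 z1 w2+(-12*t-120)*τ b1 z1 w3+(48*t+192)*τ b1 z2 w2+(t^2-36*t-124)*τ b1 w1 w1 = 0 := by
    have r := Q3 w2
    simp only [s1, s2, hz1, hz2, h1, h2, h4, h5, g1, hz1', hz2', h2', h4', h5', g1', bz0, bz1, bz2, bz3, bz4, bz5, bz6, bz7, bz8, bz9, bz10, bz11, bz12, bz13, bz14, bz15, bz16, bz17, bz18, bz19, lz0, lz1, lz2, lz3, lz4, lz5, lz6, lz7, lz8, lz9, lz10, lz11, lz12, lz13, lz14, lz15, lz16, lz17, lz18, lz19, va1a2w3, va1z2w3, va2z2w1, va2z1w2, va2w2w3, va1z1w3, va2z1w1, va2w1w2, va1w1w2, va2w2w2, va2w1w1, va1w2w2, va1w1w1, va1w2w3, va2w1w3, va1w1w3, va2z2w2, va2z2w3, va2z1w3, va1z2w1, va1z2w2, va1z1w2, va1z1w1, va1a2w2, va1a2w1] at r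
    refine eq_zero_of_mul_left (mul_ne_zero ht1 ht2) ?_
    linear_combination (60*t+60)*r - (60*t^2+60*t)*B6 - (60*t^2+60*t)*B8 - (120*t+120)*B10 - (60*t^2+60*t)*B11 - (120*t^2+120*t)*B12 - (120*t+120)*B13 - (120*t^2+120*t)*B14 - (-360*t^2+360)*B18 - (60*t-300)*B20 - (-90*t^2+90*t)*B21 - (-60*t^2-180*t-120)*B22 - (30*t^2-30*t-60)*B23 - (-600*t+840)*B24 - (-60*t^2-780*t+1440)*B25 - (-180*t^2-540*t-360)*B27 - (90)*B28 - (-12*t^2-60*t-48)*B29 - (-t^3+2*t^2+31*t+28)*B30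
  have B32 : (-2*t^2-6*t-4)*τ a2 b1 w1-8*τ b1 z1 w2-8*τ b1 z1 w3+8*τ b1 z2 w2+(-t-2)*τ b1 w1 w1 = 0 := by
    have r := Q4 w2
    simp only [s1, s2, hz1, hz2, h1, h2, h4, h5, g1, hz1', hz2', h2', h4', h5', g1', bz0, bz1, bz2, bz3, bz4, bz5, bz6, bz7, bz8, bz9, bz10, bz11, bz12, bz13, bz14, bz15, bz16, bz17, bz18, bz19, lz0, lz1, lz2, lz3, lz4, lz5, lz6, lz7, lz8, lz9, lz10, lz11, lz12, lz13, lz14, lz15, lz16, lz17, lz18, lz19, va1a2w3, va1z2w3, va2z2w1, va2z1w2, va2w2w3, va1z1w3, va2z1w1, va2w1w2, va1w1w2, va2w2w2, va2w1w1, va1w2w2, va1w1w1, va1w2w3, va2w1w3, va1w1w3, va2z2w2, va2z2w3, va2z1w3, va1z2w1, va1z2w2, va1z1w2, va1z1w1, va1a2w2, va1a2w1] at r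
    refine eq_zero_of_mul_left (mul_ne_zero (by norm_num : (60:ℂ) ≠ 0) ht2) ?_
    linear_combination (60*t+60)*r - (-60*t^2-60*t)*B3 - (120*t+120)*B4 - (360*t+360)*B10 - (60*t^2+60*t)*B11 - (-60*t^2-60*t)*B14 - (-120*t^2+120)*B18 - (60*t-60)*B20 - (-30*t^2+30*t)*B21 - (-60*t^2-300*t-240)*B22 - (-60*t^2-180*t-120)*B23 - (-240*t+240)*B24 - (120*t^2+600)*B25 - (30)*B28 - (-12*t^2-36*t-24)*B29 - (-t^3+4*t^2-t-6)*B30 - (t^2-2*t-3)*B31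
  have B33 : (2*t^2+6*t+4)*τ a2 b1 w1+24*τ b1 z2 w2+(t-22)*τ b1 w1 w1 = 0 := by
    have r := Q4 a1
    simp only [s1, s2, hz1, hz2, h1, h2, h4, h5, g1, hz1', hz2', h2', h4', h5', g1', bz0, bz1, bz2, bz3, bz4, bz5, bz6, bz7, bz8, bz9, bz10, bz11, bz12, bz13, bz14, bz15, bz16, bz17, bz18, bz19, lz0, lz1, lz2, lz3, lz4, lz5, lz6, lz7, lz8, lz9, lz10, lz11, lz12, lz13, lz14, lz15, lz16, lz17, lz18, lz19, va1a2w3, va1z2w3, va2z2w1, va2z1w2, va2w2w3, va1z1w3, va2z1w1, va2w1w2, va1w1w2, va2w2w2, va2w1w1, va1w2w2, va1w1w1, va1w2w3, va2w1w3, va1w1w3, va2z2w2, va2z2w3, va2z1w3, va1z2w1, va1z2w2, va1z1w2, va1z1w1, va1a2w2, va1a2w1] at r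
    refine eq_zero_of_mul_left (mul_ne_zero (by norm_num : (45:ℂ) ≠ 0) ht4) ?_
    linear_combination (-60*t+120)*r - (60*t^2-120*t)*B3 - (-30*t^2+60*t)*B9 - (60*t^2-120*t)*B11 - (60*t-120)*B17 - (120*t-240)*B18 - (-60*t^2+240)*B22 - (-60*t^2+240)*B23 - (120*t^2-480)*B25 - (-12*t^2+48)*B29 - (-t^3+7*t^2+14*t-48)*B30 - (t^2-5*t-24)*B31 - (105*t+330)*B32
  have B34 : (2*t+2)*τ a2 b1 w1+τ b1 w1 w1 = 0 := by
    have r := Q4 w1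
    simp only [s1, s2, hz1, hz2, h1, h2, h4, h5, g1, hz1', hz2', h2', h4', h5', g1', bz0, bz1, bz2, bz3, bz4, bz5, bz6, bz7, bz8, bz9, bz10, bz11, bz12, bz13, bz14, bz15, bz16, bz17, bz18, bz19, lz0, lz1, lz2, lz3, lz4, lz5, lz6, lz7, lz8, lz9, lz10, lz11, lz12, lz13, lz14, lz15, lz16, lz17, lz18, lz19, va1a2w3, va1z2w3, va2z2w1, va2z1w2, va2w2w3, va1z1w3, va2z1w1, va2w1w2, va1w1w2, va2w2w2, va2w1w1, va1w2w2, va1w1w1, va1w2w3, va2w1w3, va1w1w3, va2z2w2, va2z2w3, va2z1w3, va1z2w1, va1z2w2, va1z1w2, va1z1w1, va1a2w2, va1a2w1] at r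
    refine eq_zero_of_mul_left (mul_ne_zero (mul_ne_zero (mul_ne_zero (by norm_num : (60:ℂ) ≠ 0) ht2) ht3) ht4) ?_
    linear_combination (-60*t^2+60*t+120)*r - (60*t^3-60*t^2-120*t)*B2 - (60*t^2-60*t-120)*B5 - (60*t^3-60*t^2-120*t)*B6 - (120*t^3-120*t^2-240*t)*B8 - (60*t^3-60*t^2-120*t)*B11 - (240*t^3-240*t^2-480*t)*B12 - (-120*t^2+120*t+240)*B13 - (60*t^3-60*t^2-120*t)*B14 - (-240*t^3+480*t^2+240*t-480)*B18 - (-60*t^2-180*t+600)*B20 - (-90*t^3+150*t^2+120)*B21 - (-60*t^3+60*t^2+120*t)*B22 - (-360*t^2+1320*t-1200)*B24 - (1440*t-2880)*B25 - (-120*t^3-120*t^2+480*t+480)*B27 - (60*t-120)*B28 - (-12*t^3-12*t^2+48*t+48)*B29 - (-t^4+6*t^3+31*t^2-44*t-68)*B30 - (t^3-4*t^2-9*t-4)*B31 - (75*t^2+105*t+30)*B32 - (15*t^2+45*t+30)*B33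
  have B35 : τ b1 z1 w2-τ b1 w1 w1 = 0 := by
    have r := Q4 z1
    simp only [s1, s2, hz1, hz2, h1, h2, h4, h5, g1, hz1', hz2', h2', h4', h5', g1', bz0, bz1, bz2, bz3, bz4, bz5, bz6, bz7, bz8, bz9, bz10, bz11, bz12, bz13, bz14, bz15, bz16, bz17, bz18, bz19, lz0, lz1, lz2, lz3, lz4, lz5, lz6, lz7, lz8, lz9, lz10, lz11, lz12, lz13, lz14, lz15, lz16, lz17, lz18, lz19, va1a2w3, va1z2w3, va2z2w1, va2z1w2, va2w2w3, va1z1w3, va2z1w1, va2w1w2, va1w1w2, va2w2w2, va2w1w1, va1w2w2, va1w1w1, va1w2w3, va2w1w3, va1w1w3, va2z2w2, va2z2w3, va2z1w3, va1z2w1, va1z2w2, va1z1w2, va1z1w1, va1a2w2, va1a2w1] at r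
    refine eq_zero_of_mul_left (mul_ne_zero (mul_ne_zero (mul_ne_zero (by norm_num : (240:ℂ) ≠ 0) ht2) ht2) ht3) ?_
    linear_combination (60*t^2-60*t-120)*r - (-60*t^3+60*t^2+120*t)*B0 - (120*t^3-120*t^2-240*t)*B7 - (-60*t^3+60*t^2+120*t)*B11 - (-60*t^3+60*t^2+120*t)*B14 - (240*t^3-480*t^2-240*t+480)*B18 - (-120*t^2+120*t+240)*B19 - (-240*t^2+480*t)*B20 - (60*t^3-180*t^2+120*t)*B21 - (60*t^3-60*t^2-120*t)*B22 - (600*t^2-1560*t+720)*B24 - (-240*t^3+1440*t^2-2160*t+480)*B25 - (120*t^3+120*t^2-480*t-480)*B27 - (-60*t+120)*B28 - (-12*t^3+60*t^2-24*t-96)*B29 - (-t^4+2*t^3-7*t^2+6*t+16)*B30 - (t^3+7*t+8)*B31 - (-15*t^2-165*t-150)*B32 - (-10*t^3-15*t^2-15*t-10)*B33 - (10*t^4+20*t^3-30*t^2-80*t-40)*B34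
  -- back substitution over the coordinate `τ b₁ w₁ w₁` of that line
  have ub1z1w2 : 2*t*(t^2-1)*τ b1 z1 w2 - (2*t^3-2*t)*τ b1 w1 w1 = 0 := by
    refine eq_zero_of_mul_left (by norm_num : (1:ℂ) ≠ 0) ?_
    linear_combination 2*t*(t^2-1)*B35
  have ua2b1w1 : 2*t*(t^2-1)*τ a2 b1 w1 - (-t^2+t)*τ b1 w1 w1 = 0 := by
    refine eq_zero_of_mul_left (mul_ne_zero (by norm_num : (2:ℂ) ≠ 0) ht2) ?_
    linear_combination 2*t*(t^2-1)*B34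
  have ub1z2w2 : 2*t*(t^2-1)*τ b1 z2 w2 - (2*t^3-2*t)*τ b1 w1 w1 = 0 := by
    refine eq_zero_of_mul_left (by norm_num : (24:ℂ) ≠ 0) ?_
    linear_combination 2*t*(t^2-1)*B33 - (2*t^2+6*t+4)*ua2b1w1
  have ub1z1w3 : 2*t*(t^2-1)*τ b1 z1 w3 - (0)*τ b1 w1 w1 = 0 := by
    refine eq_zero_of_mul_left (by norm_num : (-8:ℂ) ≠ 0) ?_
    linear_combination 2*t*(t^2-1)*B32 - (-2*t^2-6*t-4)*ua2b1w1 - (-8)*ub1z1w2 - (8)*ub1z2w2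
  have ub1b2w2 : 2*t*(t^2-1)*τ b1 b2 w2 - (-2*t^2+2)*τ b1 w1 w1 = 0 := by
    refine eq_zero_of_mul_left (mul_ne_zero (mul_ne_zero (by norm_num : (12:ℂ) ≠ 0) ht) ht3) ?_
    linear_combination 2*t*(t^2-1)*B31 - (2*t^3-22*t^2-80*t-56)*ua2b1w1 - (-12*t-120)*ub1z1w2 - (-12*t-120)*ub1z1w3 - (48*t+192)*ub1z2w2
  have ub1b2w3 : 2*t*(t^2-1)*τ b1 b2 w3 - (-2*t^2+2)*τ b1 w1 w1 = 0 := by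
    refine eq_zero_of_mul_left (mul_ne_zero (by norm_num : (12:ℂ) ≠ 0) ht) ?_
    linear_combination 2*t*(t^2-1)*B30 - (2*t^2+6*t+4)*ua2b1w1
  have ub1z2w1 : 2*t*(t^2-1)*τ b1 z2 w1 - (-2*t^3+2*t)*τ b1 w1 w1 = 0 := by
    refine eq_zero_of_mul_left (by norm_num : (10:ℂ) ≠ 0) ?_
    linear_combination 2*t*(t^2-1)*B29 - (-2*t^2-6*t-4)*ua2b1w1 - (t^2-2*t)*ub1b2w2 - (-t^2+2*t)*ub1b2w3 - (-t)*ub1z1w2 - (-t)*ub1z1w3 - (4*t+6)*ub1z2w2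
  have ua2b1w3 : 2*t*(t^2-1)*τ a2 b1 w3 - (-3*t^2+t)*τ b1 w1 w1 = 0 := by
    refine eq_zero_of_mul_left (mul_ne_zero (mul_ne_zero (by norm_num : (8:ℂ) ≠ 0) ht1) ht2) ?_
    linear_combination 2*t*(t^2-1)*B28 - (2*t^3-4*t^2-2*t+4)*ua2b1w1 - (-8*t^2-8*t)*ub1b2w2 - (-4*t^2+12*t)*ub1b2w3
  have ua2b1w2 : 2*t*(t^2-1)*τ a2 b1 w2 - (-t^2-t)*τ b1 w1 w1 = 0 := by
    refine eq_zero_of_mul_left ht1 ?_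
    linear_combination 2*t*(t^2-1)*B27 - (t+1)*ua2b1w1 - (-t)*ub1b2w2 - (t)*ub1b2w3 - (-1)*ub1z2w1 - (-1)*ub1z2w2
  have ub1z1w1 : 2*t*(t^2-1)*τ b1 z1 w1 - (-2*t^3+2*t)*τ b1 w1 w1 = 0 := by
    refine eq_zero_of_mul_left (by norm_num : (-1:ℂ) ≠ 0) ?_
    linear_combination 2*t*(t^2-1)*B26 - ub1z1w3 - (2)*ub1z2w1
  have ub1z2w3 : 2*t*(t^2-1)*τ b1 z2 w3 - (0)*τ b1 w1 w1 = 0 := by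
    refine eq_zero_of_mul_left (by norm_num : (-1:ℂ) ≠ 0) ?_
    linear_combination 2*t*(t^2-1)*B25 - (-1)*ub1z2w1
  have ub1b2w1 : 2*t*(t^2-1)*τ b1 b2 w1 - (-2*t^2+2)*τ b1 w1 w1 = 0 := by
    refine eq_zero_of_mul_left ht ?_
    linear_combination 2*t*(t^2-1)*B24 - (-t)*ub1b2w3 - ub1z2w1 - ub1z2w3
  have ua1b1w3 : 2*t*(t^2-1)*τ a1 b1 w3 - (-3*t^2+t)*τ b1 w1 w1 = 0 := by
    refine eq_zero_of_mul_left (by norm_num : (-2:ℂ) ≠ 0) ?_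
    linear_combination 2*t*(t^2-1)*B23 - (2*t-2)*ua2b1w2 - (2)*ua2b1w3 - (-2*t)*ub1b2w2 - (2*t)*ub1b2w3 - (-4)*ub1z2w1 - (-2)*ub1z2w2 - (-2)*ub1z2w3
  have ua1b1w2 : 2*t*(t^2-1)*τ a1 b1 w2 - (-t^2-t)*τ b1 w1 w1 = 0 := by
    refine eq_zero_of_mul_left (by norm_num : (1:ℂ) ≠ 0) ?_
    linear_combination 2*t*(t^2-1)*B22 - ua1b1w3 - (-2*t+1)*ua2b1w2 - (-1)*ua2b1w3 - (t)*ub1b2w2 - (-t)*ub1b2w3 - (-1)*ub1z1w2 - (-1)*ub1z1w3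
  have ua1b1w1 : 2*t*(t^2-1)*τ a1 b1 w1 - (-t^2+t)*τ b1 w1 w1 = 0 := by
    refine eq_zero_of_mul_left (by norm_num : (2:ℂ) ≠ 0) ?_
    linear_combination 2*t*(t^2-1)*B21 - (2*t)*ua2b1w1
  refine ⟨⟨ua1b1w1, ua1b1w2, ua1b1w3, ua2b1w1, ua2b1w2, ua2b1w3, ub1b2w1, ub1b2w2, ub1b2w3, ub1z1w1, ub1z1w2, ub1z1w3, ub1z2w1, ub1z2w2, ub1z2w3⟩, fun vb1w1w1 => ?_⟩
  have vb1z1w2 : τ b1 z1 w2 = 0 := eq_zero_of_mul_left (mul_ne_zero (mul_ne_zero (by norm_num : (2:ℂ) ≠ 0) ht) htt) (by linear_combination ub1z1w2 + (2*t^3-2*t)*vb1w1w1)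
  have va2b1w1 : τ a2 b1 w1 = 0 := eq_zero_of_mul_left (mul_ne_zero (mul_ne_zero (by norm_num : (2:ℂ) ≠ 0) ht) htt) (by linear_combination ua2b1w1 + (-t^2+t)*vb1w1w1)
  have vb1z2w2 : τ b1 z2 w2 = 0 := eq_zero_of_mul_left (mul_ne_zero (mul_ne_zero (by norm_num : (2:ℂ) ≠ 0) ht) htt) (by linear_combination ub1z2w2 + (2*t^3-2*t)*vb1w1w1)
  have vb1z1w3 : τ b1 z1 w3 = 0 := eq_zero_of_mul_left (mul_ne_zero (mul_ne_zero (by norm_num : (2:ℂ) ≠ 0) ht) htt) (by linear_combination ub1z1w3 + (0)*vb1w1w1)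
  have vb1b2w2 : τ b1 b2 w2 = 0 := eq_zero_of_mul_left (mul_ne_zero (mul_ne_zero (by norm_num : (2:ℂ) ≠ 0) ht) htt) (by linear_combination ub1b2w2 + (-2*t^2+2)*vb1w1w1)
  have vb1b2w3 : τ b1 b2 w3 = 0 := eq_zero_of_mul_left (mul_ne_zero (mul_ne_zero (by norm_num : (2:ℂ) ≠ 0) ht) htt) (by linear_combination ub1b2w3 + (-2*t^2+2)*vb1w1w1)
  have vb1z2w1 : τ b1 z2 w1 = 0 := eq_zero_of_mul_left (mul_ne_zero (mul_ne_zero (by norm_num : (2:ℂ) ≠ 0) ht) htt) (by linear_combination ub1z2w1 + (-2*t^3+2*t)*vb1w1w1)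
  have va2b1w3 : τ a2 b1 w3 = 0 := eq_zero_of_mul_left (mul_ne_zero (mul_ne_zero (by norm_num : (2:ℂ) ≠ 0) ht) htt) (by linear_combination ua2b1w3 + (-3*t^2+t)*vb1w1w1)
  have va2b1w2 : τ a2 b1 w2 = 0 := eq_zero_of_mul_left (mul_ne_zero (mul_ne_zero (by norm_num : (2:ℂ) ≠ 0) ht) htt) (by linear_combination ua2b1w2 + (-t^2-t)*vb1w1w1)
  have vb1z1w1 : τ b1 z1 w1 = 0 := eq_zero_of_mul_left (mul_ne_zero (mul_ne_zero (by norm_num : (2:ℂ) ≠ 0) ht) htt) (by linear_combination ub1z1w1 + (-2*t^3+2*t)*vb1w1w1)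
  have vb1z2w3 : τ b1 z2 w3 = 0 := eq_zero_of_mul_left (mul_ne_zero (mul_ne_zero (by norm_num : (2:ℂ) ≠ 0) ht) htt) (by linear_combination ub1z2w3 + (0)*vb1w1w1)
  have vb1b2w1 : τ b1 b2 w1 = 0 := eq_zero_of_mul_left (mul_ne_zero (mul_ne_zero (by norm_num : (2:ℂ) ≠ 0) ht) htt) (by linear_combination ub1b2w1 + (-2*t^2+2)*vb1w1w1)
  have va1b1w3 : τ a1 b1 w3 = 0 := eq_zero_of_mul_left (mul_ne_zero (mul_ne_zero (by norm_num : (2:ℂ) ≠ 0) ht) htt) (by linear_combination ua1b1w3 + (-3*t^2+t)*vb1w1w1)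
  have va1b1w2 : τ a1 b1 w2 = 0 := eq_zero_of_mul_left (mul_ne_zero (mul_ne_zero (by norm_num : (2:ℂ) ≠ 0) ht) htt) (by linear_combination ua1b1w2 + (-t^2-t)*vb1w1w1)
  have va1b1w1 : τ a1 b1 w1 = 0 := eq_zero_of_mul_left (mul_ne_zero (mul_ne_zero (by norm_num : (2:ℂ) ≠ 0) ht) htt) (by linear_combination ua1b1w1 + (-t^2+t)*vb1w1w1)
  have va2b2w1 : τ a2 b2 w1 = 0 := eq_zero_of_mul_left (mul_ne_zero (mul_ne_zero (by norm_num : (-2:ℂ) ≠ 0) ht) ht2) (by linear_combination B20 - (t)*va1b1w1 - (-t)*va2b1w1 - (4*t)*vb1b2w1 - (-2)*vb1z2w1 - (-2)*vb1z2w3 - (-1)*vb1w1w1)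
  have vb2z2w3 : τ b2 z2 w3 = 0 := eq_zero_of_mul_left (mul_ne_zero (by norm_num : (-2:ℂ) ≠ 0) ht) (by linear_combination B19 - (-t)*va1b1w1 - (t)*va2b1w1 - (2*t^2+2*t)*va2b2w1 - (-3*t)*vb1b2w1 - (t)*vb1b2w3 - vb1z2w1 - (-1)*vb1z2w3)
  have va2b2w2 : τ a2 b2 w2 = 0 := eq_zero_of_mul_left ht (by linear_combination B18 - (-1)*va2b1w1 - (-1)*va2b1w2 - (2)*va2b1w3 - (-t)*va2b2w1)
  have va2b2w3 : τ a2 b2 w3 = 0 := eq_zero_of_mul_left (mul_ne_zero (by norm_num : (-2:ℂ) ≠ 0) ht) (by linear_combination B17 - (2)*va2b1w1 - (-2)*va2b1w3 - (2*t)*va2b2w1)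
  have vb2z2w2 : τ b2 z2 w2 = 0 := by linear_combination -1/2*(B16 - (-1)*va1b1w2 - (-1)*va1b1w3 - va2b1w2 - va2b1w3 - (-4*t+4)*va2b2w2 - (-2)*vb1b2w2 - (2)*vb1b2w3 - (2)*vb1z1w2 - (2)*vb1z1w3 - (-2)*vb1z2w2 - (-2)*vb1z2w3 - (-2)*vb2z2w3)
  have vb2z1w1 : τ b2 z1 w1 = 0 := by linear_combination B15 - va1b1w1 - (-1)*va2b1w1 - (-2*t-2)*va2b2w1 - (4)*vb1b2w1 - (-1)*vb1b2w3 - vb1z1w1 - (-1)*vb1z2w1 - vb2z2w3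
  have vb2w2w3 : τ b2 w2 w3 = 0 := by linear_combination -1/2*(B14 - va1b1w3 - (-1)*va2b1w3 - (2*t-2)*va2b2w2 - (2)*vb1b2w2)
  have vb1w1w2 : τ b1 w1 w2 = 0 := by linear_combination B13 - (-1)*vb1z1w2 - (-1)*vb1z1w3 - (-1)*vb1z2w1 - (-1)*vb1z2w3
  have vb2w1w1 : τ b2 w1 w1 = 0 := by linear_combination -1*(B12 - va1b1w1 - (-1)*va2b1w1 - (-2*t-2)*va2b2w1 - (2)*vb1b2w1)
  have vb2w2w2 : τ b2 w2 w2 = 0 := by linear_combination -1*(B11 - va1b1w2 - (-1)*va2b1w2 - (2*t-2)*va2b2w2 - (2)*vb1b2w2)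
  have vb1w2w3 : τ b1 w2 w3 = 0 := by linear_combination -1*(B10 - va1b1w2 - (-t)*va2b1w2 - (-1)*vb1z1w2 - (-1)*vb1z1w3)
  have va1b2w3 : τ a1 b2 w3 = 0 := by linear_combination 1/4*(B9 - (2)*va1b1w3 - (-2)*va2b1w3 - (-4)*va2b2w3 - (4)*vb1b2w3)
  have vb2w1w3 : τ b2 w1 w3 = 0 := by linear_combination -1/2*(B8 - (2)*vb1b2w1 - (-2)*vb1b2w3 - vb2w1w1)
  have vb2z1w3 : τ b2 z1 w3 = 0 := by linear_combination 1/2*(B7 - (2)*vb1b2w3 - (2)*vb1z1w3 - (-2)*vb1z2w3 - (-2)*vb2z2w3)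
  have vb2w1w2 : τ b2 w1 w2 = 0 := by linear_combination 1/2*(B6 - vb2w1w1 - (2)*vb2w1w3 - vb2w2w2 - (2)*vb2w2w3)
  have vb1w1w3 : τ b1 w1 w3 = 0 := by linear_combination 1/2*(B5 - (2)*vb1z2w1 - (2)*vb1z2w3 - vb1w1w1)
  have vb1w2w2 : τ b1 w2 w2 = 0 := by linear_combination B4 - (2)*vb1z1w2 - (2)*vb1z1w3 - (2)*vb1w2w3
  have va1b2w2 : τ a1 b2 w2 = 0 := by linear_combination 1/2*(B3 - (-2*t)*va2b2w2 - vb2w2w2)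
  have va1b2w1 : τ a1 b2 w1 = 0 := by linear_combination 1/2*(B2 - (2*t)*va2b2w1 - vb2w1w1)
  have vb2z2w1 : τ b2 z2 w1 = 0 := by linear_combination 1/2*(B1 - (2)*vb2z2w3 - vb2w1w1 - (2)*vb2w1w3)
  have vb2z1w2 : τ b2 z1 w2 = 0 := by linear_combination 1/2*(B0 - (2)*vb2z1w3 - vb2w2w2 - (2)*vb2w2w3)
  exact ⟨va1a2w1, va1a2w2, va1a2w3, va1b1w1, va1b1w2, va1b1w3, va1b2w1, va1b2w2, va1b2w3, va1z1w1, va1z1w2, va1z1w3, va1z2w1, va1z2w2, va1z2w3, va1w1w1, va1w1w2, va1w1w3, va1w2w2, va1w2w3, va2b1w1, va2b1w2, va2b1w3, va2b2w1, va2b2w2, va2b2w3, va2z1w1, va2z1w2, va2z1w3, va2z2w1, va2z2w2, va2z2w3, va2w1w1, va2w1w2, va2w1w3, va2w2w2, va2w2w3, vb1b2w1, vb1b2w2, vb1b2w3, vb1z1w1, vb1z1w2, vb1z1w3, vb1z2w1, vb1z2w2, vb1z2w3, vb1w1w1, vb1w1w2, vb1w1w3, vb1w2w2, vb1w2w3,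 vb2z1w1, vb2z1w2, vb2z1w3, vb2z2w1, vb2z2w2, vb2z2w3, vb2w1w1, vb2w1w2, vb2w1w3, vb2w2w2, vb2w2w3⟩

/-! ### A pair of blocks -/

/-- The linear algebra for a pair of blocks: `α` and `β` are the matrices of two mixed bilinear
forms between the blocks, the `pᵢ` and `qᵢ` come from the singular points of either block, and the
`aᵢ`, `bᵢ` from the points joining the two. -/
theorem pairHalf (α β : Fin 3 → Fin 3 → ℂ) (s t c : ℂ) (hst : s - t ≠ 0) (hst' : s + t ≠ 0)
  (hc : c ≠ 0)
  (p1 : ∀ j, α 0 j + s * β 0 j = 0) (p2 : ∀ j, α 1 j - s * β 1 j = 0)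
  (q1 : ∀ i, α i 0 + t * β i 0 = 0) (q2 : ∀ i, α i 1 - t * β i 1 = 0)
  (a1 : α 2 2 = 0) (b1 : β 2 2 = 0)
  (a2 : c * α 0 2 + α 0 1 + c * α 2 1 + c ^ 2 * α 2 2 = 0)
  (b2 : c * β 0 2 + β 0 1 + c * β 2 1 + c ^ 2 * β 2 2 = 0)
  (a3 : c * α 1 2 + α 1 0 + c * α 2 0 + c ^ 2 * α 2 2 = 0)
  (b3 : c * β 1 2 + β 1 0 + c * β 2 0 + c ^ 2 * β 2 2 = 0) :
  ∀ i j, α i j = 0 ∧ β i j = 0 := by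
  have x00 : β 0 0 = 0 := (mul_eq_zero.mp (show (s - t) * β 0 0 = 0 by linear_combination p1 0 - q1 0)).resolve_left hst
  have x01 : β 0 1 = 0 := (mul_eq_zero.mp (show (s + t) * β 0 1 = 0 by linear_combination p1 1 - q2 0)).resolve_left hst'
  have x10 : β 1 0 = 0 := (mul_eq_zero.mp (show (s + t) * β 1 0 = 0 by linear_combination q1 1 - p2 0)).resolve_left hst'
  have x11 : β 1 1 = 0 := (mul_eq_zero.mp (show (s - t) * β 1 1 = 0 by linear_combination q2 1 - p2 1)).resolve_left hst
  have x21 : β 2 1 = 0 := (mul_eq_zero.mp (show (c * (s + t)) * β 2 1 = 0 by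
    linear_combination a2 + s * b2 - c * p1 2 - p1 1 - c * q2 2 - c ^ 2 * a1 - s * c ^ 2 * b1)).resolve_left (mul_ne_zero hc hst')
  have x20 : β 2 0 = 0 := (mul_eq_zero.mp (show (c * (s + t)) * β 2 0 = 0 by
    linear_combination -a3 + s * b3 + c * p2 2 + p2 0 + c * q1 2 + c ^ 2 * a1 - s * c ^ 2 * b1)).resolve_left (mul_ne_zero hc hst')
  have x02 : β 0 2 = 0 := (mul_eq_zero.mp (show c * β 0 2 = 0 by
    linear_combination b2 - x01 - c * x21 - c ^ 2 * b1)).resolve_left hc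
  have x12 : β 1 2 = 0 := (mul_eq_zero.mp (show c * β 1 2 = 0 by
    linear_combination b3 - x10 - c * x20 - c ^ 2 * b1)).resolve_left hc
  have hβ : ∀ i j, β i j = 0 := by
    intro i j; fin_cases i <;> fin_cases j <;> assumption
  simp only [hβ, mul_zero, add_zero, sub_zero] at p1 p2 q1 q2
  intro i j
  refine ⟨?_, hβ i j⟩
  fin_cases i <;> fin_cases j <;> first | exact p1 _ | exact p2 _ | exact q1 _ | exact q2 _ | exact a1

/-- A bilinear form vanishing on the frames `w₀ - w₂, w₁ - w₂, w₂` and `u₀ - u₂, u₁ - u₂, u₂`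
vanishes on the original frames. -/
theorem frameBack {E : Type*} [AddCommGroup E] [Module ℂ E] (σ : E →ₗ[ℂ] E →ₗ[ℂ] ℂ) {w u : Fin 3 → E}
  (h : ∀ c d, σ (![w 0 - w 2, w 1 - w 2, w 2] c) (![u 0 - u 2, u 1 - u 2, u 2] d) = 0) (c d : Fin 3) :
  σ (w c) (u d) = 0 := by
  have hw : ∀ d, ∀ c, σ (w c) (![u 0 - u 2, u 1 - u 2, u 2] d) = 0 := by
    intro d
    have h0 := h 0 d
    have h1 := h 1 d
    have h2 := h 2 d
    generalize ![u 0 - u 2, u 1 - u 2, u 2] d = v at *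
    simp only [Matrix.cons_val_zero, Matrix.cons_val_one, Matrix.cons_val, map_sub, LinearMap.sub_apply] at h0 h1 h2
    intro c
    fin_cases c <;> simp <;> [linear_combination h0 + h2; linear_combination h1 + h2; exact h2]
  have h0 := hw 0 c
  have h1 := hw 1 c
  have h2 := hw 2 c
  simp only [Matrix.cons_val_zero, Matrix.cons_val_one, Matrix.cons_val, map_sub] at h0 h1 h2
  fin_cases d <;> simp <;> [linear_combination h0 + h2; linear_combination h1 + h2; exact h2]

/-- The computation for a pair of blocks `w`, `u` with parameters `s ≠ ± t`: the entries mixing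
both blocks with one of the four vectors `y` outside the subspace vanish. The vectors `y₀, y₁` are
handled in the original frames, then `y₂, y₃` in the frames of `frameBack`. -/
theorem pairKernel {E : Type*} [AddCommGroup E] [Module ℂ E] (τ : E →ₗ[ℂ] E →ₗ[ℂ] E →ₗ[ℂ] ℂ)
  (s1 : ∀ x y z, τ x y z = τ y x z) (s2 : ∀ x y z, τ x y z = τ x z y)
  (y : Fin 4 → E) (w u : Fin 3 → E) (s t : ℂ) (hst : s - t ≠ 0) (hst' : s + t ≠ 0)
  (yyw : ∀ i j c, τ (y i) (y j) (w c) = 0) (yyu : ∀ i j c, τ (y i) (y j) (u c) = 0)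
  (yww : ∀ i c d, τ (y i) (w c) (w d) = 0) (yuu : ∀ i c d, τ (y i) (u c) (u d) = 0)
  (wwu : ∀ c d e, τ (w c) (w d) (u e) = 0) (wuu : ∀ c d e, τ (w c) (u d) (u e) = 0)
  (l1 : ∀ x, τ (w 2 + u 2) (w 2 + u 2) x = 0)
  (l2 : ∀ x, τ (w 2 + w 0 + (u 2 + u 1)) (w 2 + w 0 + (u 2 + u 1)) x = 0)
  (l3 : ∀ x, τ (w 2 + w 1 + (u 2 + u 0)) (w 2 + w 1 + (u 2 + u 0)) x = 0)
  (m1 : ∀ x, τ (y 0 + s • y 1 + w 0) (y 0 + s • y 1 + w 0) x = 0)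
  (m2 : ∀ x, τ (y 0 - s • y 1 + w 1) (y 0 - s • y 1 + w 1) x = 0)
  (m3 : ∀ x, τ (y 2 + s • y 3 + (w 0 - w 2)) (y 2 + s • y 3 + (w 0 - w 2)) x = 0)
  (m4 : ∀ x, τ (y 0 - y 1 + y 2 - s • y 3 + (w 1 - w 2)) (y 0 - y 1 + y 2 - s • y 3 + (w 1 - w 2)) x = 0)
  (n1 : ∀ x, τ (y 0 + t • y 1 + u 0) (y 0 + t • y 1 + u 0) x = 0)
  (n2 : ∀ x, τ (y 0 - t • y 1 + u 1) (y 0 - t • y 1 + u 1) x = 0)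
  (n3 : ∀ x, τ (y 2 + t • y 3 + (u 0 - u 2)) (y 2 + t • y 3 + (u 0 - u 2)) x = 0)
  (n4 : ∀ x, τ (y 0 - y 1 + y 2 - t • y 3 + (u 1 - u 2)) (y 0 - y 1 + y 2 - t • y 3 + (u 1 - u 2)) x = 0) :
  ∀ i c d, τ (y i) (w c) (u d) = 0 := by
  have r1 : ∀ i j c, τ (y i) (w c) (y j) = 0 := fun i j c => by rw [s2, yyw]
  have r2 : ∀ i j c, τ (w c) (y i) (y j) = 0 := fun i j c => by rw [s1, r1]
  have r3 : ∀ i j c, τ (y i) (u c) (y j) = 0 := fun i j c => by rw [s2, yyu]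
  have r4 : ∀ i j c, τ (u c) (y i) (y j) = 0 := fun i j c => by rw [s1, r3]
  have r5 : ∀ i c d, τ (w c) (y i) (w d) = 0 := fun i c d => by rw [s1, yww]
  have r6 : ∀ i c d, τ (w c) (w d) (y i) = 0 := fun i c d => by rw [s2, r5]
  have r7 : ∀ i c d, τ (u c) (y i) (u d) = 0 := fun i c d => by rw [s1, yuu]
  have r8 : ∀ i c d, τ (u c) (u d) (y i) = 0 := fun i c d => by rw [s2, r7]
  have r9 : ∀ c d e, τ (u c) (u d) (w e) = 0 := fun c d e => by rw [s2, s1, wuu]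
  have r10 : ∀ i c d, τ (w c) (u d) (y i) = τ (y i) (w c) (u d) := fun i c d => by rw [s2, s1]
  have r11 : ∀ i c d, τ (u d) (w c) (y i) = τ (y i) (w c) (u d) := fun i c d => by rw [s1, s2, s1]
  have r12 : ∀ i c d, τ (w c) (y i) (u d) = τ (y i) (w c) (u d) := fun i c d => by rw [s1]
  have r13 : ∀ i c d, τ (u c) (y i) (w d) = τ (y i) (w d) (u c) := fun i c d => by rw [s1, s2]
  have r14 : ∀ i c d, τ (y i) (u c) (w d) = τ (y i) (w d) (u c) := fun i c d => by rw [s2]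
  have M1 := fun d => m1 (u d)
  have M2 := fun d => m2 (u d)
  have M3 := fun d => m3 (u d)
  have M4 := fun d => m4 (u d)
  have N1 := fun d => n1 (w d)
  have N2 := fun d => n2 (w d)
  have N3 := fun d => n3 (w d)
  have N4 := fun d => n4 (w d)
  have L1 := fun i => l1 (y i)
  have L2 := fun i => l2 (y i)
  have L3 := fun i => l3 (y i)
  clear m1 m2 m3 m4 n1 n2 n3 n4 l1 l2 l3
  simp only [map_add, map_sub, map_smul, LinearMap.add_apply, LinearMap.sub_apply, LinearMap.smul_apply, smul_eq_mul,
    yyw, yyu, yww, yuu, wwu, wuu, r1, r2, r3, r4, r5, r6, r7, r8, r9, r10, r11, r12, r13, r14, mul_zero, add_zero, zero_add, sub_zero, zero_sub] at M1 M2 M3 M4 N1 N2 N3 N4 L1 L2 L3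
  have hA := pairHalf (fun c d => τ (y 0) (w c) (u d)) (fun c d => τ (y 1) (w c) (u d)) s t 1 hst hst' one_ne_zero
    (fun j => by linear_combination M1 j / 2) (fun j => by linear_combination M2 j / 2)
    (fun j => by linear_combination N1 j / 2) (fun j => by linear_combination N2 j / 2)
    (by linear_combination L1 0 / 2) (by linear_combination L1 1 / 2)
    (by linear_combination L2 0 / 2) (by linear_combination L2 1 / 2)
    (by linear_combination L3 0 / 2) (by linear_combination L3 1 / 2)
  have h0 : ∀ c d, τ (y 0) (w c) (u d) = 0 := fun c d => (hA c d).1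
  have h1 : ∀ c d, τ (y 1) (w c) (u d) = 0 := fun c d => (hA c d).2
  -- the second frame of each block is `w 0 - w 2, w 1 - w 2, w 2`
  have hB := pairHalf (fun c d => τ (y 2) (![w 0 - w 2, w 1 - w 2, w 2] c) (![u 0 - u 2, u 1 - u 2, u 2] d))
    (fun c d => τ (y 3) (![w 0 - w 2, w 1 - w 2, w 2] c) (![u 0 - u 2, u 1 - u 2, u 2] d)) s t 2 hst hst' two_ne_zero
  simp only [h0, h1, sub_zero, add_zero, zero_add, mul_zero] at M3 M4 N3 N4
  simp only [Matrix.cons_val_zero, Matrix.cons_val_one, Matrix.cons_val, map_sub, LinearMap.sub_apply] at hB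
  have hB' := hB (fun j => by
      fin_cases j
      · simp; linear_combination (M3 0 - M3 2) / 2
      · simp; linear_combination (M3 1 - M3 2) / 2
      · simp; linear_combination (M3 2) / 2)
    (fun j => by
      fin_cases j
      · simp; linear_combination (M4 0 - M4 2) / 2
      · simp; linear_combination (M4 1 - M4 2) / 2
      · simp; linear_combination (M4 2) / 2)
    (fun j => by
      fin_cases j
      · simp; linear_combination (N3 0 - N3 2) / 2
      · simp; linear_combination (N3 1 - N3 2) / 2
      · simp; linear_combination (N3 2) / 2)
    (fun j => by
      fin_cases j
      · simp; linear_combination (N4 0 - N4 2) / 2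
      · simp; linear_combination (N4 1 - N4 2) / 2
      · simp; linear_combination (N4 2) / 2)
    (by linear_combination L1 2 / 2) (by linear_combination L1 3 / 2)
    (by linear_combination L2 2 / 2) (by linear_combination L2 3 / 2)
    (by linear_combination L3 2 / 2) (by linear_combination L3 3 / 2)
  have e := frameBack _ (fun i j => (hB' i j).1)
  have e' := frameBack _ (fun i j => (hB' i j).2)
  intro i c d
  fin_cases i
  · exact h0 c d
  · exact h1 c d
  · exact e c d
  · exact e' c d

/-! ### The special configuration -/

section
variable {E : Type*} [AddCommGroup E] [Module ℂ E] {r : ℕ}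

/-- The special points on the subspace: `z₀, z₁`, five points for each block `w j`, and three
points for each pair of blocks. -/
def lPt (z : Fin 2 → E) (w : Fin r → Fin 3 → E) :
    Fin 2 ⊕ (Fin r × Fin 5) ⊕ ({q : Fin r × Fin r // q.1 < q.2} × Fin 3) → E
  | .inl i => z i
  | .inr (.inl (j, i)) => ![w j 2, z 0 + w j 1 + w j 2, z 1 + w j 0 + w j 2, z 1 + w j 0 + w j 1,
      w j 0 + w j 1 + w j 2] i
  | .inr (.inr (q, i)) => ![w q.1.1 2 + w q.1.2 2, w q.1.1 2 + w q.1.1 0 + (w q.1.2 2 + w q.1.2 1),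
      w q.1.1 2 + w q.1.1 1 + (w q.1.2 2 + w q.1.2 0)] i

/-- The parameter of the `j`-th block. The values `3, 4, 5, …` are distinct, no two are opposite,
and none is `0`, `± 1` or `± 2`, which is all that the computations need. -/
def tPar (j : Fin r) : ℂ := ((j : ℕ) + 3 : ℕ)

/-- The special ambient points: seven points in the span of the base vectors `x`, and four points
for each block. -/
def pPt (x : Fin 6 → E) (w : Fin r → Fin 3 → E) : Fin 7 ⊕ (Fin r × Fin 4) → E
  | .inl i => ![x 0, x 1, x 2, x 3, x 0 + x 1 + x 4 + x 5, x 2 + x 3 + x 4 - x 5,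
      x 0 - x 1 + x 2 + (2 : ℂ) • x 3] i
  | .inr (j, i) => ![x 0 + tPar j • x 1 + w j 0, x 0 - tPar j • x 1 + w j 1,
      x 2 + tPar j • x 3 + (w j 0 - w j 2), x 0 - x 1 + x 2 - tPar j • x 3 + (w j 1 - w j 2)] i

/-- The basis vectors of the ambient space: six base vectors followed by blocks of three. -/
def allB (x : Fin 6 → E) (w : Fin r → Fin 3 → E) : Fin 6 ⊕ (Fin r × Fin 3) → E
  | .inl i => x i
  | .inr (j, c) => w j c

/-- The indices of the basis vectors spanning the special subspace, namely `x 4`, `x 5` and all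
the `w j c`. -/
def lIdx : Fin 2 ⊕ (Fin r × Fin 3) → Fin 6 ⊕ (Fin r × Fin 3) := Sum.map (Fin.natAdd 4) id

/-- The cubic with symmetric trilinear form `τ` vanishes on the special subspace and is singular at
all the special points. -/
structure Sp (x : Fin 6 → E) (w : Fin r → Fin 3 → E) (τ : E →ₗ[ℂ] E →ₗ[ℂ] E →ₗ[ℂ] ℂ) : Prop where
  s1 : ∀ x y z, τ x y z = τ y x z
  s2 : ∀ x y z, τ x y z = τ x z y
  hL : ∀ i j k, τ (allB x w (lIdx i)) (allB x w (lIdx j)) (allB x w (lIdx k)) = 0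
  hl : ∀ i v, τ (lPt (fun i => x (Fin.natAdd 4 i)) w i) (lPt (fun i => x (Fin.natAdd 4 i)) w i) v = 0
  hp : ∀ i v, τ (pPt x w i) (pPt x w i) v = 0

theorem sort3 {τ : E →ₗ[ℂ] E →ₗ[ℂ] E →ₗ[ℂ] ℂ} (s1 : ∀ x y z, τ x y z = τ y x z)
    (s2 : ∀ x y z, τ x y z = τ x z y) {m : ℕ} {x : Fin m → E}
    (h : ∀ i j k, i ≤ j → j ≤ k → τ (x i) (x j) (x k) = 0) (i j k) : τ (x i) (x j) (x k) = 0 := by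
  rcases le_total i j with a | a <;> rcases le_total j k with b | b <;> rcases le_total i k with c | c
  · exact h _ _ _ a b
  · exact h _ _ _ a b
  · rw [s2]; exact h _ _ _ c b
  · rw [s2, s1]; exact h _ _ _ c a
  · rw [s1]; exact h _ _ _ a c
  · rw [s1, s2]; exact h _ _ _ b c
  · rw [s1, s2, s1]; exact h _ _ _ b a
  · rw [s1, s2, s1]; exact h _ _ _ b a

theorem sort2 {σ : E →ₗ[ℂ] E →ₗ[ℂ] ℂ} (s1 : ∀ x y, σ x y = σ y x)
    {m : ℕ} {x : Fin m → E}
    (h : ∀ i j, i ≤ j → σ (x i) (x j) = 0) (i j) : σ (x i) (x j) = 0 := by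
  rcases le_total i j with a | a
  · exact h _ _ a
  · rw [s1]; exact h _ _ a

variable {x : Fin 6 → E} {w : Fin r → Fin 3 → E} {τ : E →ₗ[ℂ] E →ₗ[ℂ] E →ₗ[ℂ] ℂ}

/-- `baseKernel` for a solution of the special configuration, in the form used for the Hessian. -/
theorem Sp.baseRel (h : Sp x w τ) :
    (∀ i j k : Fin 4, i < j → j < k → τ (x (Fin.castAdd 2 i)) (x (Fin.castAdd 2 j)) (x (Fin.castAdd 2 k)) = 0) ∧
    (∀ k : Fin 2, τ (x 2) (x 3) (x (Fin.natAdd 4 k)) = 0) ∧ τ (x 2) (x 4) (x 5) = 0 ∧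
    τ (x 0) (x 2) (x 5) = - τ (x 1) (x 2) (x 4) ∧ τ (x 1) (x 2) (x 5) = - τ (x 0) (x 2) (x 4) := by
  obtain ⟨b1, b2, b3, b4, b5, b6, b7, b8, b9, b10, b11, b12, b13, b14, b15, b16, b17, b18⟩ :=
    baseKernel τ h.s1 h.s2 (x 0) (x 1) (x 2) (x 3) (x 4) (x 5)
      (h.hl (.inl 0)) (h.hl (.inl 1)) (h.hp (.inl 0)) (h.hp (.inl 1)) (h.hp (.inl 4))
      (h.hp (.inl 2)) (h.hp (.inl 3)) (h.hp (.inl 5)) (h.hp (.inl 6))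
  refine ⟨fun i j k hij hjk => ?_, fun k => by fin_cases k <;> assumption, b7, b13, b14⟩
  clear h
  fin_cases i <;> fin_cases j <;> first | (exact absurd hij (by decide)) |
    (fin_cases k <;> first | (exact absurd hjk (by decide)) | assumption)

/-- If its two free base entries vanish, a solution vanishes on the base. -/
theorem Sp.base0 (h : Sp x w τ) (h0 : τ (x 0) (x 2) (x 4) = 0) (h1 : τ (x 1) (x 2) (x 4) = 0) (i j k) :
    τ (x i) (x j) (x k) = 0 := by
  have := baseKernel τ h.s1 h.s2 (x 0) (x 1) (x 2) (x 3) (x 4) (x 5)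
      (h.hl (.inl 0)) (h.hl (.inl 1)) (h.hp (.inl 0)) (h.hp (.inl 1)) (h.hp (.inl 4))
      (h.hp (.inl 2)) (h.hp (.inl 3)) (h.hp (.inl 5)) (h.hp (.inl 6))
  simp only [h0, h1, mul_zero, neg_zero, sub_zero, add_zero, mul_eq_zero, OfNat.ofNat_ne_zero, false_or] at this
  obtain ⟨b1, b2, b3, b4, b5, b6, b7, b8, b9, b10, b11, b12, b13, b14, b15, b16, b17, b18⟩ := this
  have q0 : ∀ v, τ (x 0) (x 0) v = 0 := h.hp (.inl 0)
  have q1 : ∀ v, τ (x 1) (x 1) v = 0 := h.hp (.inl 1)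
  have q2 : ∀ v, τ (x 2) (x 2) v = 0 := h.hp (.inl 2)
  have q3 : ∀ v, τ (x 3) (x 3) v = 0 := h.hp (.inl 3)
  have q4 : ∀ v, τ (x 4) (x 4) v = 0 := h.hl (.inl 0)
  have q5 : ∀ v, τ (x 5) (x 5) v = 0 := h.hl (.inl 1)
  have q : ∀ i v, τ (x i) (x i) v = 0 := by
    intro i; fin_cases i <;> assumption
  have q' : ∀ i j, τ (x i) (x j) (x j) = 0 := fun i j => by rw [h.s1, h.s2, q]
  refine sort3 h.s1 h.s2 (fun i j k hij hjk => ?_) i j k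
  rcases hij.eq_or_lt with rfl | hij
  · exact q _ _
  rcases hjk.eq_or_lt with rfl | hjk
  · exact q' _ _
  clear h q q' q0 q1 q2 q3 q4 q5
  fin_cases i <;> fin_cases j <;> first | (exact absurd hij (by decide)) |
    (fin_cases k <;> first | (exact absurd hjk (by decide)) | assumption)

theorem tPar_sub {j k : Fin r} (h : j ≠ k) : tPar j - tPar k ≠ 0 := by
  rw [sub_ne_zero, tPar, tPar, Ne, Nat.cast_inj]
  have := Fin.val_ne_of_ne h
  omega

theorem tPar_add {j k : Fin r} : tPar j + tPar k ≠ 0 := by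
  rw [tPar, tPar, ← Nat.cast_add, Nat.cast_ne_zero]; omega

set_option maxHeartbeats 2000000 in
/-- `blockKernel` for the `j`-th block of a solution of the special configuration. -/
theorem Sp.block (h : Sp x w τ) (hb : ∀ i j k, τ (x i) (x j) (x k) = 0) (j : Fin r) :
    (∀ c, 2 * tPar j * (tPar j ^ 2 - 1) * τ (x 0) (x 2) (w j c) =
      ![-tPar j ^ 2 + tPar j, -tPar j ^ 2 - tPar j, -3 * tPar j ^ 2 + tPar j] c * τ (x 2) (w j 0) (w j 0)) ∧
    (∀ c, 2 * tPar j * (tPar j ^ 2 - 1) * τ (x 1) (x 2) (w j c) =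
      ![-tPar j ^ 2 + tPar j, -tPar j ^ 2 - tPar j, -3 * tPar j ^ 2 + tPar j] c * τ (x 2) (w j 0) (w j 0)) ∧
    (∀ c, 2 * tPar j * (tPar j ^ 2 - 1) * τ (x 2) (x 3) (w j c) =
      (-2 * tPar j ^ 2 + 2) * τ (x 2) (w j 0) (w j 0)) ∧
    (∀ (k : Fin 2) c, 2 * tPar j * (tPar j ^ 2 - 1) * τ (x 2) (x (Fin.natAdd 4 k)) (w j c) =
      ![-2 * tPar j ^ 3 + 2 * tPar j, 2 * tPar j ^ 3 - 2 * tPar j, 0] c * τ (x 2) (w j 0) (w j 0)) ∧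
    (τ (x 2) (w j 0) (w j 0) = 0 → (∀ i k c, τ (x i) (x k) (w j c) = 0) ∧ (∀ i c d, τ (x i) (w j c) (w j d) = 0)) := by
  have hB :=
      blockKernel τ h.s1 h.s2 (x 0) (x 1) (x 2) (x 3) (x 4) (x 5) (w j 0) (w j 1) (w j 2) (tPar j)
        (by rw [tPar, Nat.cast_ne_zero]; omega)
        (by rw [tPar, show (1 : ℂ) = (1 : ℕ) by simp, sub_ne_zero, Ne, Nat.cast_inj]; omega)
        (by rw [tPar, show (1 : ℂ) = (1 : ℕ) by simp, ← Nat.cast_add, Nat.cast_ne_zero]; omega)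
        (by rw [tPar, show (2 : ℂ) = (2 : ℕ) by simp, sub_ne_zero, Ne, Nat.cast_inj]; omega)
        (by rw [tPar, show (2 : ℂ) = (2 : ℕ) by simp, ← Nat.cast_add, Nat.cast_ne_zero]; omega)
        (h.hl (.inl 0)) (h.hl (.inl 1)) (h.hp (.inl 0)) (h.hp (.inl 1)) (h.hp (.inl 4))
        (h.hp (.inl 2)) (h.hp (.inl 3)) (h.hp (.inl 5)) (h.hp (.inl 6))
        (h.hl (.inr (.inl (j, 0)))) (h.hl (.inr (.inl (j, 1)))) (h.hl (.inr (.inl (j, 2))))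
        (h.hl (.inr (.inl (j, 3)))) (h.hl (.inr (.inl (j, 4))))
        (h.hp (.inr (j, 0))) (h.hp (.inr (j, 1))) (h.hp (.inr (j, 2))) (h.hp (.inr (j, 3)))
        (by simp only [hb, and_self])
        (by
          have z (i k l) := h.hL (.inl i) (.inl k) (.inr (j, l))
          have z' (i k l) := h.hL (.inl i) (.inr (j, k)) (.inr (j, l))
          have z'' (i k l) := h.hL (.inr (j, i)) (.inr (j, k)) (.inr (j, l))
          simp only [allB, lIdx, Sum.map_inl, Sum.map_inr, id_eq] at z z' z''
          exact ⟨z 0 1 _, z 0 1 _, z 0 1 _, z' 0 _ _, z' 0 _ _, z' 0 _ _, z' 0 _ _, z' 0 _ _, z' 1 _ _, z' 1 _ _, z' 1 _ _,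
            z' 1 _ _, z' 1 _ _, z'' _ _ _, z'' _ _ _, z'' _ _ _, z'' _ _ _, z'' _ _ _, z'' _ _ _, z'' _ _ _⟩)
  obtain ⟨⟨c1, c2, c3, c4, c5, c6, c7, c8, c9, c10, c11, c12, c13, c14, c15⟩, hB⟩ := hB
  refine ⟨fun c => ?_, fun c => ?_, fun c => ?_, fun k c => ?_, fun h0 => ?_⟩
  · rw [← sub_eq_zero]; fin_cases c <;> assumption
  · rw [← sub_eq_zero]; fin_cases c <;> assumption
  · rw [← sub_eq_zero]; fin_cases c <;> assumption
  · rw [← sub_eq_zero]; fin_cases k <;> fin_cases c <;> assumption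
  clear c1 c2 c3 c4 c5 c6 c7 c8 c9 c10 c11 c12 c13 c14 c15
  obtain ⟨b0,b1,b2,b3,b4,b5,b6,b7,b8,b9,b10,b11,b12,b13,b14,b15,b16,b17,b18,b19,b20,b21,b22,b23,b24,b25,b26,b27,b28,b29,b30,b31,b32,b33,b34,b35,b36,b37,b38,b39,b40,b41,b42,b43,b44,b45,b46,b47,b48,b49,b50,b51,b52,b53,b54,b55,b56,b57,b58,b59,b60,b61⟩ := hB h0
  have q0 : ∀ v, τ (x 0) (x 0) v = 0 := h.hp (.inl 0)
  have q1 : ∀ v, τ (x 1) (x 1) v = 0 := h.hp (.inl 1)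
  have q2 : ∀ v, τ (x 2) (x 2) v = 0 := h.hp (.inl 2)
  have q3 : ∀ v, τ (x 3) (x 3) v = 0 := h.hp (.inl 3)
  have q4 : ∀ v, τ (x 4) (x 4) v = 0 := h.hl (.inl 0)
  have q5 : ∀ v, τ (x 5) (x 5) v = 0 := h.hl (.inl 1)
  have q : ∀ i v, τ (x i) (x i) v = 0 := by
    intro i; fin_cases i <;> assumption
  have z (i k l) := h.hL (.inl i) (.inl k) (.inr (j, l))
  have z' (i k l) := h.hL (.inl i) (.inr (j, k)) (.inr (j, l))
  have zz : ∀ l, τ (x 4) (x 5) (w j l) = 0 := fun l => z 0 1 l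
  have z4 : ∀ k l, τ (x 4) (w j k) (w j l) = 0 := fun k l => z' 0 k l
  have z5 : ∀ k l, τ (x 5) (w j k) (w j l) = 0 := fun k l => z' 1 k l
  have g : ∀ v, τ (w j 2) (w j 2) v = 0 := h.hl (.inr (.inl (j, 0)))
  have g' : ∀ v, τ v (w j 2) (w j 2) = 0 := fun v => by rw [h.s1, h.s2, g]
  constructor
  · intro i k c
    rw [h.s1, h.s2, h.s1]
    refine sort2 (σ := τ (w j c)) (fun a b => h.s2 _ a b) (fun i k hik => ?_) k i
    rw [h.s1, h.s2]
    rcases hik.eq_or_lt with rfl | hik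
    · exact q _ _
    clear q h h0 q0 q1 q2 q3 q4 q5 z z' z4 z5 g g'
    fin_cases i <;> fin_cases k <;> first | (exact absurd hik (by decide)) | (fin_cases c <;> first | assumption | exact zz _)
  · intro i c d
    refine sort2 (σ := τ (x i)) (fun a b => h.s2 _ a b) (fun c d hcd => ?_) c d
    clear q h h0 q0 q1 q2 q3 q4 q5 z z' g
    fin_cases c <;> fin_cases d <;> first | (exact absurd hcd (by decide)) | (fin_cases i <;> first | assumption | exact z4 _ _ | exact z5 _ _ | exact g' _)

/-- A solution for the special configuration is determined by `r + 2` of its entries. -/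
theorem Sp.eq_zero (h : Sp x w τ) (h0 : τ (x 0) (x 2) (x 4) = 0) (h1 : τ (x 1) (x 2) (x 4) = 0)
    (h2 : ∀ j, τ (x 2) (w j 0) (w j 0) = 0) (i j k) : τ (allB x w i) (allB x w j) (allB x w k) = 0 := by
  have hb := h.base0 h0 h1
  have xxw := fun j => ((h.block hb j).2.2.2.2 (h2 j)).1
  have xww := fun j => ((h.block hb j).2.2.2.2 (h2 j)).2
  have www (j k l c d e) := h.hL (.inr (j, c)) (.inr (k, d)) (.inr (l, e))
  have zww (i k l d e) := h.hL (.inl i) (.inr (k, d)) (.inr (l, e))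
  simp only [allB, lIdx, Sum.map_inl, Sum.map_inr, id_eq] at www zww
  have z4 : ∀ k l d e, τ (x 4) (w k d) (w l e) = 0 := zww 0
  have z5 : ∀ k l d e, τ (x 5) (w k d) (w l e) = 0 := zww 1
  -- entries mixing two different blocks with a base vector
  have key : ∀ j k : Fin r, j < k → ∀ i c d, τ (x i) (w j c) (w k d) = 0 := by
    intro j k hjk
    have := pairKernel τ h.s1 h.s2 (fun i => x (Fin.castAdd 2 i)) (w j) (w k) (tPar j) (tPar k)
      (tPar_sub hjk.ne) tPar_add (fun _ _ _ => xxw _ _ _ _) (fun _ _ _ => xxw _ _ _ _) (fun _ _ _ => xww _ _ _ _)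
      (fun _ _ _ => xww _ _ _ _) (fun _ _ _ => www _ _ _ _ _ _) (fun _ _ _ => www _ _ _ _ _ _)
      (h.hl (.inr (.inr (⟨(j, k), hjk⟩, 0)))) (h.hl (.inr (.inr (⟨(j, k), hjk⟩, 1))))
      (h.hl (.inr (.inr (⟨(j, k), hjk⟩, 2))))
      (h.hp (.inr (j, 0))) (h.hp (.inr (j, 1))) (h.hp (.inr (j, 2))) (h.hp (.inr (j, 3)))
      (h.hp (.inr (k, 0))) (h.hp (.inr (k, 1))) (h.hp (.inr (k, 2))) (h.hp (.inr (k, 3)))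
    intro i
    fin_cases i
    · exact this 0
    · exact this 1
    · exact this 2
    · exact this 3
    · exact z4 j k
    · exact z5 j k
  have key' : ∀ i j k c d, τ (x i) (w j c) (w k d) = 0 := by
    intro i j k c d
    rcases lt_trichotomy j k with hjk | rfl | hjk
    · exact key j k hjk i c d
    · exact xww j i c d
    · rw [h.s2]; exact key k j hjk i d c
  rcases i with i | ⟨i, c⟩ <;> rcases j with j | ⟨j, d⟩ <;> rcases k with k | ⟨k, e⟩ <;> simp only [allB]
  · exact hb _ _ _
  · exact xxw _ _ _ _
  · rw [h.s2]; exact xxw _ _ _ _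
  · exact key' _ _ _ _ _
  · rw [h.s1, h.s2]; exact xxw _ _ _ _
  · rw [h.s1]; exact key' _ _ _ _ _
  · rw [h.s2, h.s1]; exact key' _ _ _ _ _
  · exact www _ _ _ _ _ _

/-! ### Hessians at the special configuration -/

/-- The `r + 2` entries that determine a solution for the special configuration
(see `Sp.eq_zero`). -/
def thetaF (x : Fin 6 → E) (w : Fin r → Fin 3 → E) (τ : E →ₗ[ℂ] E →ₗ[ℂ] E →ₗ[ℂ] ℂ) : Fin 2 ⊕ Fin r → ℂ
  | .inl i => ![τ (x 0) (x 2) (x 4), τ (x 1) (x 2) (x 4)] i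
  | .inr j => τ (x 2) (w j 0) (w j 0)

theorem tPar_facts (j : Fin r) : tPar j ≠ 0 ∧ tPar j ^ 2 - 1 ≠ 0 ∧ 2 * tPar j - 1 ≠ 0 := by
  refine ⟨by rw [tPar, Nat.cast_ne_zero]; omega, ?_, ?_⟩
  · rw [tPar, show (1 : ℂ) = (1 : ℕ) by simp, ← Nat.cast_pow, sub_ne_zero, Ne, Nat.cast_inj]
    intro h
    have : (j : ℕ) + 3 ≤ ((j : ℕ) + 3) ^ 2 := Nat.le_self_pow two_ne_zero _
    omega
  · rw [tPar, show (1 : ℂ) = (1 : ℕ) by simp, show (2 : ℂ) = (2 : ℕ) by simp, ← Nat.cast_mul, sub_ne_zero, Ne, Nat.cast_inj]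
    omega

/-- For the special configuration, the Hessians at `x 2` of the solutions have no common kernel
besides the line of `x 2`. Here `T` is the basis of solutions dual to the entries `thetaF`, and the
kernel vector is normalised by `a 2 = 0`. The solution attached to block `j` shows that the
coordinates in that block vanish; the base coordinates are then killed by one block solution
together with the first base solution. -/
theorem Sp.hess {T : Fin 2 ⊕ Fin r → E →ₗ[ℂ] E →ₗ[ℂ] E →ₗ[ℂ] ℂ} (h : ∀ i, Sp x w (T i))
    (hT : ∀ i, thetaF x w (T i) = Pi.single i 1) (hr : 0 < r) (a : Fin 6 → ℂ) (b : Fin r → Fin 3 → ℂ)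
    (ha : a 2 = 0)
    (hv : ∀ i u, T i (x 2) (∑ i, a i • x i + ∑ j, ∑ c, b j c • w j c) u = 0) :
    a = 0 ∧ b = 0 := by
  simp only [map_add, map_sum, map_smul, LinearMap.add_apply, LinearMap.sum_apply, LinearMap.smul_apply, smul_eq_mul] at hv
  have hbase : ∀ j i k l, T (.inr j) (x i) (x k) (x l) = 0 := by
    intro j
    have h0 := congrFun (hT (.inr j)) (.inl 0)
    have h1 := congrFun (hT (.inr j)) (.inl 1)
    simp [thetaF] at h0 h1
    exact (h _).base0 h0 h1
  have hoff : ∀ j k, k ≠ j → ∀ i l c, T (.inr j) (x i) (w k c) (x l) = 0 := by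
    intro j k hk i l c
    rw [(h _).s2]
    refine ((h _).block (hbase j) k).2.2.2.2 ?_ |>.1 _ _ _
    have := congrFun (hT (.inr j)) (.inr k)
    simpa [thetaF, Pi.single_apply, hk] using this
  have hone : ∀ j, T (.inr j) (x 2) (w j 0) (w j 0) = 1 := by
    intro j
    have := congrFun (hT (.inr j)) (.inr j)
    simpa [thetaF, Pi.single_apply] using this
  have hb : b = 0 := by
    funext j
    obtain ⟨t0, t1, t2⟩ := tPar_facts j
    have hj : ∀ k, ∑ c, b j c * T (.inr j) (x 2) (x k) (w j c) = 0 := by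
      intro k
      have := hv (.inr j) (x k)
      simp only [hbase, mul_zero, Finset.sum_const_zero, zero_add] at this
      rw [Finset.sum_eq_single j (fun k' _ hk => by simp [hoff j k' hk]) (by simp)] at this
      rw [← this]
      exact Finset.sum_congr rfl fun c _ => by rw [(h _).s2 (x 2)]
    obtain ⟨B1, B2, B3, B4, -⟩ := (h (.inr j)).block (hbase j) j
    rw [hone] at B1 B2 B3 B4
    generalize tPar j = t at *
    have e3 := hj 3
    have e4 := hj 4
    have e0 := hj 0
    rw [Fin.sum_univ_three] at e3 e4 e0
    have f3 : b j 0 + b j 1 + b j 2 = 0 := by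
      have : (t ^ 2 - 1) * (b j 0 + b j 1 + b j 2) = 0 := by
        linear_combination (-t * (t^2-1)) * e3 + b j 0 * B3 0 / 2 + b j 1 * B3 1 / 2 + b j 2 * B3 2 / 2
      exact (mul_eq_zero.mp this).resolve_left t1
    have B40 := B4 0 0
    have B41 := B4 0 1
    have B42 := B4 0 2
    have B10 := B1 0
    have B11 := B1 1
    have B12 := B1 2
    rw [(h _).s1] at B10 B11 B12
    simp [-mul_eq_mul_left_iff, -mul_eq_mul_right_iff] at B40 B41 B42 B10 B11 B12
    change _ * T (.inr j) (x 2) (x 4) (w j 0) = _ at B40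
    change _ * T (.inr j) (x 2) (x 4) (w j 1) = _ at B41
    have B42 : t * (t^2-1) * T (.inr j) (x 2) (x 4) (w j 2) = 0 := by
      have := B4 0 2
      simp only [Matrix.cons_val, zero_mul] at this
      change _ * T (.inr j) (x 2) (x 4) (w j 2) = _ at this
      linear_combination this / 2
    have f4 : b j 0 - b j 1 = 0 := by
      have : (t * (t ^ 2 - 1)) * (b j 0 - b j 1) = 0 := by
        linear_combination (- t * (t^2-1)) * e4 + b j 0 * B40 / 2 + b j 1 * B41 / 2 + b j 2 * B42
      exact (mul_eq_zero.mp this).resolve_left (mul_ne_zero t0 t1)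
    have f0 : b j 1 = 0 := by
      have : (t * (2 * t - 1)) * b j 1 = 0 := by
        linear_combination (t * (t^2-1)) * e0 - b j 0 * B10 / 2 - b j 1 * B11 / 2 - b j 2 * B12 / 2 + (1/2) * (-3*t^2 + t) * (-f3 )+ (-t^2) * f4
      exact (mul_eq_zero.mp this).resolve_left (mul_ne_zero t0 t2)
    rw [f0, sub_zero] at f4
    rw [f0, f4, zero_add, zero_add] at f3
    funext c
    fin_cases c <;> assumption
  refine ⟨?_, hb⟩
  subst hb
  simp only [Pi.zero_apply, zero_mul, Finset.sum_const_zero, add_zero] at hv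
  let j : Fin r := ⟨0, hr⟩
  obtain ⟨t0, t1, t2⟩ := tPar_facts j
  obtain ⟨B1, B2, B3, B4, -⟩ := (h (.inr j)).block (hbase j) j
  rw [hone] at B1 B2 B3 B4
  have hw := fun c => hv (.inr j) (w j c)
  generalize tPar j = t at *
  have hA : a 0 + a 1 = 0 ∧ a 3 = 0 ∧ a 4 + a 5 = 0 := by
    have key : ∀ c, (a 0 + a 1) * ![-t ^ 2 + t, -t ^ 2 - t, -3 * t ^ 2 + t] c + a 3 * (-2 * t ^ 2 + 2) +
        (a 4 + a 5) * ![-2 * t ^ 3 + 2 * t, 2 * t ^ 3 - 2 * t, 0] c = 0 := by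
      intro c
      have := hw c
      have B10 := B1 c
      have B20 := B2 c
      have B4' := B4 0 c
      have B5' := B4 1 c
      change _ * T (.inr j) (x 2) (x 4) (w j c) = _ at B4'
      change _ * T (.inr j) (x 2) (x 5) (w j c) = _ at B5'
      rw [(h _).s1] at B10 B20
      rw [Fin.sum_univ_six, ha] at this
      linear_combination (2 * t * (t^2-1)) * this - a 0 * B10 - a 1 * B20 - a 3 * B3 c - a 4 * B4' - a 5 * B5'
    have k0 := key 0
    have k1 := key 1
    have k2 := key 2
    simp only [Matrix.cons_val_zero, Matrix.cons_val_one, Matrix.cons_val, mul_zero, add_zero] at k0 k1 k2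
    have A : a 0 + a 1 = 0 := by
      have : (t * (2 * t - 1)) * (a 0 + a 1) = 0 := by
        linear_combination (k0 + k1 - 2 * k2) / 2
      exact (mul_eq_zero.mp this).resolve_left (mul_ne_zero t0 t2)
    have B : a 3 = 0 := by
      have : (t^2 - 1) * a 3 = 0 := by
        linear_combination - k2 / 2 + A * (-3*t^2+t) / 2
      exact (mul_eq_zero.mp this).resolve_left t1
    refine ⟨A, B, ?_⟩
    have : (t * (t^2 - 1)) * (a 4 + a 5) = 0 := by
      linear_combination - k0 / 2 + A * (-t^2+t) / 2 + B * (-t^2+1)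
    exact (mul_eq_zero.mp this).resolve_left (mul_ne_zero t0 t1)
  obtain ⟨A, B, C⟩ := hA
  have h0 := congrFun (hT (.inl 0)) (.inl 0)
  have h1 := congrFun (hT (.inl 0)) (.inl 1)
  simp [thetaF] at h0 h1
  have S1 := (h (.inl 0)).s1
  have S2 := (h (.inl 0)).s2
  obtain ⟨r1, r2, r3, r4, r5⟩ := (h (.inl 0)).baseRel
  rw [h1, neg_zero] at r4
  have p0 : ∀ v, T (.inl 0) v (x 0) (x 0) = 0 := fun v => by rw [S1, S2]; exact (h _).hp (.inl 0) v
  have p4 : ∀ v, T (.inl 0) v (x 4) (x 4) = 0 := fun v => by rw [S1, S2]; exact (h _).hl (.inl 0) v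
  have u0 := hv (.inl 0) (x 0)
  have u4 := hv (.inl 0) (x 4)
  rw [Fin.sum_univ_six, ha, B] at u0 u4
  have m012 : T (.inl 0) (x 0) (x 1) (x 2) = 0 := r1 0 1 2 (by decide) (by decide)
  rw [p0, S1 (x 2) (x 1), S2 (x 1), S1 (x 1), m012, S2 (x 2) (x 4), S1 _ _ (x 4), h0, S2 (x 2) (x 5), S1 _ _ (x 5), r4] at u0
  rw [p4, S1 _ (x 0), S1 _ (x 1), h0, h1, S2 (x 2) (x 5) (x 4), r3] at u4
  have a4 : a 4 = 0 := by linear_combination u0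
  have a0 : a 0 = 0 := by linear_combination u4
  rw [a4, zero_add] at C
  rw [a0, zero_add] at A
  funext i
  fin_cases i <;> assumption
end

/-! ### Polynomial families of linear systems -/

/-- A polynomial matrix `M` that is injective at `t` has a left inverse up to a polynomial factor
`F` with `F(t) ≠ 0`; so it stays injective off the zero set of `F`. Take a left inverse `L` of `M(t)`,
and combine `L` with the adjugate and the determinant of `L * M`. -/
theorem exists_leftInverse_smul {ι m k : Type} [Fintype m] [Fintype k] [DecidableEq k]
    (M : Matrix m k (MvPolynomial ι ℂ)) (t : ι → ℂ)
    (h : ∀ v, (M.map (eval t)).mulVec v = 0 → v = 0) :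
    ∃ (N : Matrix k m (MvPolynomial ι ℂ)) (F : MvPolynomial ι ℂ), eval t F ≠ 0 ∧
      N * M = F • (1 : Matrix k k (MvPolynomial ι ℂ)) := by
  classical
  obtain ⟨g, hg⟩ := LinearMap.exists_leftInverse_of_injective (M.map (eval t)).mulVecLin
    (LinearMap.ker_eq_bot'.mpr h)
  have hB : LinearMap.toMatrix' g * M.map (eval t) = 1 := by
    have := congrArg LinearMap.toMatrix' hg
    rwa [LinearMap.toMatrix'_comp, LinearMap.toMatrix'_id, ← Matrix.toLin'_apply',
      LinearMap.toMatrix'_toLin'] at this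
  generalize LinearMap.toMatrix' g = B at hB
  let B' : Matrix k m (MvPolynomial ι ℂ) := B.map C
  have hB' : B'.map (eval t) = B := by ext; simp [B']
  refine ⟨(B' * M).adjugate * B', (B' * M).det, ?_, ?_⟩
  · rw [RingHom.map_det, RingHom.mapMatrix_apply, Matrix.map_mul, hB', hB, Matrix.det_one]
    exact one_ne_zero
  · rw [Matrix.mul_assoc, Matrix.adjugate_mul]

/-- The identity `N * M = F • 1` evaluated at a parameter `t` and applied to a vector. -/
theorem mulVec_eval {ι m k : Type} [Fintype k] [Fintype m] [DecidableEq k]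
    {N : Matrix k m (MvPolynomial ι ℂ)} {M : Matrix m k (MvPolynomial ι ℂ)} {F : MvPolynomial ι ℂ}
    (h : N * M = F • (1 : Matrix k k (MvPolynomial ι ℂ))) (t : ι → ℂ) (v : k → ℂ) :
    (N.map (eval t)).mulVec ((M.map (eval t)).mulVec v) = eval t F • v := by
  have := congrArg (fun Q => (Q.map (eval t)).mulVec v) h
  simp only [Matrix.map_mul] at this
  rw [Matrix.mulVec_mulVec, this]
  rw [Matrix.smul_eq_diagonal_mul, Matrix.mul_one, Matrix.diagonal_map (by simp)]
  ext i
  simp [Matrix.mulVec_diagonal]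

/-- The `a`-th coordinate of the contraction `v(p, x, ·)` of a tensor `v` of order three. -/
def con {σ : Type} [Fintype σ] (v : σ × σ × σ → ℂ) (p x : σ → ℂ) (a : σ) : ℂ :=
  ∑ i, ∑ j, v (i, j, a) * p i * x j

theorem con_sum {σ d : Type} [Fintype σ] [Fintype d] (T : d → σ × σ × σ → ℂ) (g : d → ℂ)
    (p x : σ → ℂ) (a : σ) : con (∑ c, g c • T c) p x a = ∑ c, g c * con (T c) p x a := by
  let L : (σ × σ × σ → ℂ) →ₗ[ℂ] ℂ :=
    { toFun := fun v => con v p x a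
      map_add' := fun u v => by simp [con, add_mul, Finset.sum_add_distrib]
      map_smul' := fun c v => by simp [con, Finset.mul_sum, mul_assoc] }
  have := map_sum L (fun c => g c • T c) Finset.univ
  simp only [map_smul, smul_eq_mul] at this
  exact this

/-- Semicontinuity. Let `Φ` be a polynomial family of linear systems for tensors, and suppose that
at `t₀` the functionals `Θ` form coordinates on the solution space, and that the contractions of the
solutions with the point `p` have no common kernel in the hyperplane `x i₀ = 0`. Then both
statements hold off a proper hypersurface, provided that the dimension of the solution space does
not drop. The reason for the second one is that, up to a common factor, the basis of solutions dual
to `Θ` depends polynomially on the parameter. -/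
theorem generic_kernel {ι m d σ : Type} [Fintype m] [Fintype d] [Fintype σ]
    [DecidableEq d] [DecidableEq σ]
    (Φ : Matrix m (σ × σ × σ) (MvPolynomial ι ℂ)) (Θ : Matrix d (σ × σ × σ) ℂ)
    (p : σ → MvPolynomial ι ℂ) (i₀ : σ) (t₀ : ι → ℂ)
    (h1 : ∀ v, (Φ.map (eval t₀)).mulVec v = 0 → Θ.mulVec v = 0 → v = 0)
    (h2 : Fintype.card d ≤ Module.finrank ℂ (LinearMap.ker (Φ.map (eval t₀)).mulVecLin))
    (h3 : ∀ T : d → σ × σ × σ → ℂ, (∀ c, (Φ.map (eval t₀)).mulVec (T c) = 0) →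
      (∀ c, Θ.mulVec (T c) = Pi.single c 1) → ∀ x : σ → ℂ, x i₀ = 0 →
      (∀ c a, con (T c) (fun i => eval t₀ (p i)) x a = 0) → x = 0)
    (h4 : eval t₀ (p i₀) ≠ 0) :
    ∃ F : MvPolynomial ι ℂ, eval t₀ F ≠ 0 ∧ ∀ t, eval t F ≠ 0 →
      Module.finrank ℂ (LinearMap.ker (Φ.map (eval t)).mulVecLin) ≤ Fintype.card d ∧
      (Fintype.card d ≤ Module.finrank ℂ (LinearMap.ker (Φ.map (eval t)).mulVecLin) →
        eval t (p i₀) ≠ 0 ∧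
        ∀ x : σ → ℂ, x i₀ = 0 → (∀ v, (Φ.map (eval t)).mulVec v = 0 →
          ∀ a, con v (fun i => eval t (p i)) x a = 0) → x = 0) := by
  obtain ⟨N, F, hF, hN⟩ := exists_leftInverse_smul (Matrix.fromRows Φ (Θ.map C)) t₀ (by
    intro v hv
    rw [Matrix.fromRows_map, Matrix.fromRows_mulVec] at hv
    have ha := congrArg (fun g => g ∘ Sum.inl) hv
    have hb := congrArg (fun g => g ∘ Sum.inr) hv
    simp only [Sum.elim_comp_inl, Sum.elim_comp_inr] at ha hb
    refine h1 v ha ?_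
    rw [Matrix.map_map] at hb
    have : (Θ.map (eval t₀ ∘ C)) = Θ := by ext; simp
    rw [this] at hb
    exact hb)
  -- kernel vectors are recovered from their `Θ`-values
  have key : ∀ t v, (Φ.map (eval t)).mulVec v = 0 →
      ((N.submatrix id Sum.inr).map (eval t)).mulVec (Θ.mulVec v) = eval t F • v := by
    intro t v hv
    rw [← mulVec_eval hN t v, Matrix.fromRows_map, Matrix.fromRows_mulVec, hv, Matrix.map_map]
    have : (Θ.map (eval t ∘ C)) = Θ := by ext; simp
    rw [this]
    ext a
    simp [Matrix.mulVec, dotProduct]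
  have inj : ∀ t, eval t F ≠ 0 → Function.Injective
      (Θ.mulVecLin.domRestrict (LinearMap.ker (Φ.map (eval t)).mulVecLin)) := by
    intro t ht
    rw [← LinearMap.ker_eq_bot, LinearMap.ker_eq_bot']
    rintro ⟨v, hv⟩ h
    have hv' : (Φ.map (eval t)).mulVec v = 0 := hv
    have h' : Θ.mulVec v = 0 := h
    have := key t v hv'
    rw [h', Matrix.mulVec_zero] at this
    exact Subtype.ext ((smul_eq_zero.mp this.symm).resolve_left ht)
  have le : ∀ t, eval t F ≠ 0 →
      Module.finrank ℂ (LinearMap.ker (Φ.map (eval t)).mulVecLin) ≤ Fintype.card d := by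
    intro t ht
    simpa using LinearMap.finrank_le_finrank_of_injective (inj t ht)
  have sur : ∀ t, eval t F ≠ 0 →
      Fintype.card d ≤ Module.finrank ℂ (LinearMap.ker (Φ.map (eval t)).mulVecLin) →
      ∀ g : d → ℂ, ∃ v, (Φ.map (eval t)).mulVec v = 0 ∧ Θ.mulVec v = g := by
    intro t ht hd g
    have e : Module.finrank ℂ (LinearMap.ker (Φ.map (eval t)).mulVecLin) =
      Module.finrank ℂ (d → ℂ) := by simpa using le_antisymm (le t ht) hd
    obtain ⟨v, hv⟩ := (LinearMap.injective_iff_surjective_of_finrank_eq_finrank e).mp (inj t ht) g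
    exact ⟨v.1, v.2, hv⟩
  -- contractions of the dual basis (multiplied by `F`) with `p`, together with the coordinate `i₀`
  let H : Matrix ((d × σ) ⊕ Unit) σ (MvPolynomial ι ℂ) :=
    Matrix.fromRows (Matrix.of fun r j => ∑ i, N (i, j, r.2) (Sum.inr r.1) * p i)
      (Matrix.of fun _ j => if j = i₀ then 1 else 0)
  have Hc : ∀ t x (v : d → σ × σ × σ → ℂ), (∀ c, (Φ.map (eval t)).mulVec (v c) = 0) →
      (∀ c, Θ.mulVec (v c) = Pi.single c 1) → (H.map (eval t)).mulVec x =
      Sum.elim (fun r => eval t F * con (v r.1) (fun i => eval t (p i)) x r.2)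
        (fun _ => x i₀) := by
    intro t x v hv hv1
    ext r
    rcases r with ⟨c, a⟩ | u
    · have k1 : ∀ b, eval t (N b (Sum.inr c)) = eval t F * v c b := by
        intro b
        have := congrFun (key t (v c) (hv c)) b
        rw [hv1] at this
        simpa using this
      simp only [H, Matrix.mulVec, dotProduct, Matrix.map_apply, Matrix.fromRows_apply_inl,
        Matrix.of_apply, map_sum, map_mul, k1, Sum.elim_inl, con, Finset.mul_sum, Finset.sum_mul]
      rw [Finset.sum_comm]
      refine Finset.sum_congr rfl fun i _ => Finset.sum_congr rfl fun j _ => by ring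
    · simp [H, Matrix.mulVec, dotProduct, apply_ite, ite_mul]
  choose T hT1 hT2 using sur t₀ hF h2
  obtain ⟨N', F', hF', hN'⟩ := exists_leftInverse_smul H t₀ (by
    intro x hx
    rw [Hc t₀ x (fun c => T (Pi.single c 1)) (fun c => hT1 _) (fun c => hT2 _)] at hx
    exact h3 _ (fun c => hT1 _) (fun c => hT2 _) x (congrFun hx (Sum.inr ())) fun c a =>
      (mul_eq_zero.mp (congrFun hx (Sum.inl (c, a)))).resolve_left hF)
  refine ⟨F * F' * p i₀, ?_, ?_⟩
  · simp only [map_mul]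
    exact mul_ne_zero (mul_ne_zero hF hF') h4
  · intro t ht
    simp only [map_mul, mul_ne_zero_iff] at ht
    refine ⟨le t ht.1.1, fun hd => ⟨ht.2, fun x hx h => ?_⟩⟩
    choose T hT1 hT2 using sur t ht.1.1 hd
    have := mulVec_eval hN' t x
    rw [Hc t x (fun c => T (Pi.single c 1)) (fun c => hT1 _) (fun c => hT2 _)] at this
    have z : (Sum.elim (fun r : d × σ => eval t F * con (T (Pi.single r.1 1)) (fun i => eval t (p i)) x r.2)
        (fun _ : Unit => x i₀)) = 0 := by
      ext r
      rcases r with ⟨c, a⟩ | u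
      · simp [h _ (hT1 _) a]
      · simpa using hx
    rw [z, Matrix.mulVec_zero] at this
    exact (smul_eq_zero.mp this.symm).resolve_left ht.1.2

/-! ### Cubic forms and their tensors -/

theorem pderiv_swap {σ : Type} (i j : σ) (f : MvPolynomial σ ℂ) :
    pderiv i (pderiv j f) = pderiv j (pderiv i f) := by
  classical
  have h : ⁅(pderiv i : Derivation ℂ (MvPolynomial σ ℂ) (MvPolynomial σ ℂ)),
      (pderiv j : Derivation ℂ (MvPolynomial σ ℂ) (MvPolynomial σ ℂ))⁆ = 0 := by
    refine derivation_ext fun k => ?_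
    rw [Derivation.commutator_apply]
    simp [pderiv_X, Pi.single_apply, apply_ite]
  have := congrArg (fun D => D f) h
  rw [Derivation.commutator_apply] at this
  exact sub_eq_zero.mp this

theorem eval_deg0 {σ : Type} {f : MvPolynomial σ ℂ} (h : f.IsHomogeneous 0) (p q : σ → ℂ) :
    eval p f = eval q f := by
  rw [← totalDegree_zero_iff_isHomogeneous, totalDegree_eq_zero_iff_eq_C] at h
  rw [h]
  simp

theorem finrank_hom3 (N : ℕ) :
    Module.finrank ℂ (homogeneousSubmodule (Fin N) ℂ 3) = (N + 2).choose 3 := by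
  rw [homogeneousSubmodule_eq_finsupp_supported]
  rw [(AddMonoidAlgebra.supportedEquivFinsupp (R := ℂ) (S := ℂ) {d : Fin N →₀ ℕ | d.degree = 3}).finrank_eq]
  have e : {d : Fin N →₀ ℕ | d.degree = 3} = ((Finset.univ : Finset (Fin N)).finsuppAntidiag 3 : Set (Fin N →₀ ℕ)) := by
    ext d
    simp [Finsupp.degree_eq_sum]
  rw [e, Module.finrank_finsupp_self]
  simp [Finset.card_finsuppAntidiag_nat_eq_choose]

instance finite_hom3 (N : ℕ) : Module.Finite ℂ (homogeneousSubmodule (Fin N) ℂ 3) := by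
  rw [homogeneousSubmodule_eq_finsupp_supported]
  have e : {d : Fin N →₀ ℕ | d.degree = 3} = ((Finset.univ : Finset (Fin N)).finsuppAntidiag 3 : Set (Fin N →₀ ℕ)) := by
    ext d
    simp [Finsupp.degree_eq_sum]
  rw [e]
  exact Module.Finite.equiv (AddMonoidAlgebra.supportedEquivFinsupp (R := ℂ) (S := ℂ) _).symm

/-- The tensor of third partial derivatives at the origin (constant if `f` is a cubic form). -/
noncomputable def ten {σ : Type} : MvPolynomial σ ℂ →ₗ[ℂ] (σ × σ × σ → ℂ) where
  toFun f := fun a => eval 0 (pderiv a.1 (pderiv a.2.1 (pderiv a.2.2 f)))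
  map_add' f g := by ext; simp
  map_smul' c f := by ext; simp

/-- The trilinear form with coefficient tensor `v`. -/
noncomputable def tri {σ : Type} [Fintype σ] [DecidableEq σ] (v : σ × σ × σ → ℂ) :
    (σ → ℂ) →ₗ[ℂ] (σ → ℂ) →ₗ[ℂ] (σ → ℂ) →ₗ[ℂ] ℂ :=
  ∑ a : σ × σ × σ, v a • (LinearMap.proj a.1).smulRight ((LinearMap.proj a.2.1).smulRight
    (LinearMap.proj a.2.2))

theorem tri_apply {σ : Type} [Fintype σ] [DecidableEq σ] (v : σ × σ × σ → ℂ) (x y z : σ → ℂ) :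
    tri v x y z = ∑ i, ∑ j, ∑ k, v (i, j, k) * x i * y j * z k := by
  simp [tri, Fintype.sum_prod_type, mul_assoc]

section
variable {σ : Type} [Fintype σ] [DecidableEq σ]

theorem tri_single (v : σ × σ × σ → ℂ) (x y : σ → ℂ) (k : σ) :
    tri v x y (Pi.single k 1) = con v x y k := by
  simp [tri_apply, con, Pi.single_apply]

theorem tri_con (v : σ × σ × σ → ℂ) (x y z : σ → ℂ) :
    tri v x y z = ∑ k, con v x y k * z k := by
  conv_lhs => rw [pi_eq_sum_univ' z, map_sum]
  simp only [map_smul, tri_single, smul_eq_mul, mul_comm]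

theorem tri_single3 (v : σ × σ × σ → ℂ) (i j k : σ) :
    tri v (Pi.single i 1) (Pi.single j 1) (Pi.single k 1) = v (i, j, k) := by
  simp [tri_apply, Pi.single_apply]

theorem tri_symm1 (v : σ × σ × σ → ℂ) (h : ∀ i j k, v (i, j, k) = v (j, i, k)) (x y z : σ → ℂ) :
    tri v x y z = tri v y x z := by
  rw [tri_apply, tri_apply, Finset.sum_comm]
  refine Finset.sum_congr rfl fun i _ => Finset.sum_congr rfl fun j _ => Finset.sum_congr rfl fun k _ => ?_
  rw [h]; ring

theorem tri_symm2 (v : σ × σ × σ → ℂ) (h : ∀ i j k, v (i, j, k) = v (i, k, j)) (x y z : σ → ℂ) :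
    tri v x y z = tri v x z y := by
  rw [tri_apply, tri_apply]
  refine Finset.sum_congr rfl fun i _ => ?_
  rw [Finset.sum_comm]
  refine Finset.sum_congr rfl fun j _ => Finset.sum_congr rfl fun k _ => ?_
  rw [h]; ring

theorem ten_symm1 (f : MvPolynomial σ ℂ) (i j k : σ) : ten f (i, j, k) = ten f (j, i, k) := by
  simp [ten, pderiv_swap i j]

theorem ten_symm2 (f : MvPolynomial σ ℂ) (i j k : σ) : ten f (i, j, k) = ten f (i, k, j) := by
  simp [ten, pderiv_swap j k]

/-- Euler's formula for the partial derivatives of a cubic form. -/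
theorem con_ten {f : MvPolynomial σ ℂ} (hf : f.IsHomogeneous 3) (p : σ → ℂ) (e : σ) :
    con (ten f) p p e = 2 * eval p (pderiv e f) := by
  have h2 : (pderiv e f).IsHomogeneous 2 := hf.pderiv
  have e2 := congrArg (eval p) h2.sum_X_mul_pderiv
  have e1 : ∀ i, eval p (pderiv i (pderiv e f)) = ∑ j, p j * ten f (i, j, e) := by
    intro i
    have h1 : (pderiv i (pderiv e f)).IsHomogeneous 1 := h2.pderiv
    have := congrArg (eval p) h1.sum_X_mul_pderiv
    simp only [map_sum, map_mul, eval_X, one_smul] at this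
    rw [← this]
    refine Finset.sum_congr rfl fun j _ => ?_
    have h0 : (pderiv j (pderiv i (pderiv e f))).IsHomogeneous 0 := h1.pderiv
    rw [eval_deg0 h0 p 0, pderiv_swap j i]
    rfl
  simp only [map_sum, map_mul, eval_X, e1, nsmul_eq_mul, Nat.cast_ofNat, map_ofNat] at e2
  rw [← e2, con]
  simp only [Finset.mul_sum]
  refine Finset.sum_congr rfl fun i _ => Finset.sum_congr rfl fun j _ => by ring

/-- Euler's formula for a cubic form. -/
theorem tri_ten {f : MvPolynomial σ ℂ} (hf : f.IsHomogeneous 3) (p : σ → ℂ) :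
    tri (ten f) p p p = 6 * eval p f := by
  have e2 := congrArg (eval p) hf.sum_X_mul_pderiv
  simp only [map_sum, map_mul, eval_X, nsmul_eq_mul, Nat.cast_ofNat, map_ofNat] at e2
  rw [tri_con]
  simp only [con_ten hf]
  rw [show (6 : ℂ) * eval p f = 2 * (3 * eval p f) by ring, ← e2, Finset.mul_sum]
  refine Finset.sum_congr rfl fun i _ => by ring

theorem ten_inj {f : MvPolynomial σ ℂ} (hf : f.IsHomogeneous 3) (h : ten f = 0) : f = 0 := by
  refine MvPolynomial.funext fun p => ?_
  have := tri_ten hf p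
  rw [h] at this
  simpa [tri] using this.symm

/-- Polarization: a symmetric trilinear form whose cubic form vanishes on `U` vanishes on `U`. -/
theorem trilinear_eq_zero_of_cubic {τ : (σ → ℂ) →ₗ[ℂ] (σ → ℂ) →ₗ[ℂ] (σ → ℂ) →ₗ[ℂ] ℂ}
    (s1 : ∀ x y z, τ x y z = τ y x z) (s2 : ∀ x y z, τ x y z = τ x z y)
    (U : Submodule ℂ (σ → ℂ)) (h : ∀ x ∈ U, τ x x x = 0) {x y z : σ → ℂ}
    (hx : x ∈ U) (hy : y ∈ U) (hz : z ∈ U) : τ x y z = 0 := by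
  have a := h _ (add_mem (add_mem hx hy) hz)
  have b := h _ (add_mem hx hy)
  have c := h _ (add_mem hx hz)
  have d := h _ (add_mem hy hz)
  have h1 := h _ hx
  have h2 := h _ hy
  have h3 := h _ hz
  simp only [map_add, LinearMap.add_apply] at a b c d
  have q1 : τ y x z = τ x y z := s1 _ _ _
  have q2 : τ x z y = τ x y z := (s2 _ _ _).symm
  have q3 : τ z x y = τ x y z := by rw [s1, q2]
  have q4 : τ y z x = τ x y z := by rw [s2, q1]
  have q5 : τ z y x = τ x y z := by rw [s1, q4]
  rw [q1, q2, q3, q4, q5] at a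
  linear_combination (a - b - c - d + h1 + h2 + h3) / 6
end

/-! ### The linear system and the expected dimension -/

section
variable {σ μ S P : Type} [Fintype σ] [DecidableEq σ]

/-- The linear system for the tensors of the cubics to be counted: symmetry (two families of
rows), vanishing on the columns of `A`, and singularity at the points `l` and `p`. It is written
over an arbitrary ring, so as to make sense also for the generic configuration. -/
def cubCond {R : Type} [CommRing R] (A : Matrix σ μ R) (l : S → σ → R) (p : P → σ → R) :
    Matrix (((σ × σ × σ) ⊕ (σ × σ × σ)) ⊕ ((μ × μ × μ) ⊕ (S × σ) ⊕ (P × σ))) (σ × σ × σ) R :=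
  Matrix.of fun
    | .inl (.inl a) => fun b => (if b = a then 1 else 0) - (if b = (a.2.1, a.1, a.2.2) then 1 else 0)
    | .inl (.inr a) => fun b => (if b = a then 1 else 0) - (if b = (a.1, a.2.2, a.2.1) then 1 else 0)
    | .inr (.inl a) => fun b => A b.1 a.1 * A b.2.1 a.2.1 * A b.2.2 a.2.2
    | .inr (.inr (.inl a)) => fun b => if b.2.2 = a.2 then l a.1 b.1 * l a.1 b.2.1 else 0
    | .inr (.inr (.inr a)) => fun b => if b.2.2 = a.2 then p a.1 b.1 * p a.1 b.2.1 else 0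

theorem cubCond_map {R R' : Type} [CommRing R] [CommRing R'] (φ : R →+* R') (A : Matrix σ μ R)
    (l : S → σ → R) (p : P → σ → R) : (cubCond A l p).map φ =
    cubCond (A.map φ) (fun s i => φ (l s i)) (fun s i => φ (p s i)) := by
  ext a b
  rcases a with (a | a) | a | a | a <;> simp [cubCond, apply_ite φ]

/-- The tensor `v` is symmetric, vanishes on the column span of `A`, and is singular at the points
`l` and `p`. -/
structure IsT (A : Matrix σ μ ℂ) (l : S → σ → ℂ) (p : P → σ → ℂ) (v : σ × σ × σ → ℂ) : Prop where
  s1 : ∀ i j k, v (i, j, k) = v (j, i, k)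
  s2 : ∀ i j k, v (i, j, k) = v (i, k, j)
  hL : ∀ a b c, tri v (A.col a) (A.col b) (A.col c) = 0
  hl : ∀ s e, con v (l s) (l s) e = 0
  hp : ∀ s e, con v (p s) (p s) e = 0

/-- The solutions of the linear system `cubCond` are the tensors satisfying `IsT`. -/
theorem cubCond_iff (A : Matrix σ μ ℂ) (l : S → σ → ℂ) (p : P → σ → ℂ) (v : σ × σ × σ → ℂ) :
    (cubCond A l p).mulVec v = 0 ↔ IsT A l p v := by
  have e1 : ∀ a, (cubCond A l p).mulVec v (.inl (.inl a)) = v a - v (a.2.1, a.1, a.2.2) := by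
    intro a
    simp [cubCond, Matrix.mulVec, dotProduct, sub_mul, Finset.sum_sub_distrib]
  have e2 : ∀ a, (cubCond A l p).mulVec v (.inl (.inr a)) = v a - v (a.1, a.2.2, a.2.1) := by
    intro a
    simp [cubCond, Matrix.mulVec, dotProduct, sub_mul, Finset.sum_sub_distrib]
  have e3 : ∀ a, (cubCond A l p).mulVec v (.inr (.inl a)) =
      tri v (A.col a.1) (A.col a.2.1) (A.col a.2.2) := by
    intro a
    rw [tri_apply]
    simp only [cubCond, Matrix.mulVec, dotProduct, Fintype.sum_prod_type, Matrix.of_apply, Matrix.col_apply]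
    refine Finset.sum_congr rfl fun i _ => Finset.sum_congr rfl fun j _ => Finset.sum_congr rfl fun k _ => by ring
  have e4 : ∀ a, (cubCond A l p).mulVec v (.inr (.inr (.inl a))) = con v (l a.1) (l a.1) a.2 := by
    intro a
    simp only [cubCond, Matrix.mulVec, dotProduct, Fintype.sum_prod_type, Matrix.of_apply, con]
    refine Finset.sum_congr rfl fun i _ => Finset.sum_congr rfl fun j _ => ?_
    simp [ite_mul]; ring
  have e5 : ∀ a, (cubCond A l p).mulVec v (.inr (.inr (.inr a))) = con v (p a.1) (p a.1) a.2 := by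
    intro a
    simp only [cubCond, Matrix.mulVec, dotProduct, Fintype.sum_prod_type, Matrix.of_apply, con]
    refine Finset.sum_congr rfl fun i _ => Finset.sum_congr rfl fun j _ => ?_
    simp [ite_mul]; ring
  constructor
  · intro h
    refine ⟨fun i j k => ?_, fun i j k => ?_, fun a b c => ?_, fun s e => ?_, fun s e => ?_⟩
    · exact sub_eq_zero.mp ((e1 (i, j, k)).symm.trans (congrFun h _))
    · exact sub_eq_zero.mp ((e2 (i, j, k)).symm.trans (congrFun h _))
    · exact (e3 (a, b, c)).symm.trans (congrFun h _)
    · exact (e4 (s, e)).symm.trans (congrFun h _)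
    · exact (e5 (s, e)).symm.trans (congrFun h _)
  · intro h
    ext a
    rcases a with (a | a) | a | a | a
    · rw [e1]; exact sub_eq_zero.mpr (h.s1 _ _ _)
    · rw [e2]; exact sub_eq_zero.mpr (h.s2 _ _ _)
    · rw [e3]; exact h.hL _ _ _
    · rw [e4]; exact h.hl _ _
    · rw [e5]; exact h.hp _ _
end

section
variable {n : ℕ} {μ S P : Type} [Fintype μ] [DecidableEq μ]

theorem mem_SingSpace {d : ℕ} {S V : Set (Fin (n + 1) → ℂ)} {f : MvPolynomial (Fin (n + 1)) ℂ} :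
    f ∈ SingSpace n d S V ↔ f.IsHomogeneous d ∧ (∀ v ∈ V, eval v f = 0) ∧
      ∀ p ∈ S, ∀ i, eval p (pderiv i f) = 0 := by
  simp [SingSpace, evalAt, evalPDeriv, and_assoc, aeval_eq_eval]

/-- The cubics of `SingSpace` have tensors satisfying `IsT`. -/
theorem ten_isT {A : Matrix (Fin (n + 1)) μ ℂ} {l : S → Fin (n + 1) → ℂ} {p : P → Fin (n + 1) → ℂ}
    {f : MvPolynomial (Fin (n + 1)) ℂ}
    (hf : f ∈ SingSpace n 3 (Set.range l ∪ Set.range p) (Set.range A.mulVec)) :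
    IsT A l p (ten f) := by
  obtain ⟨h, hV, hS⟩ := mem_SingSpace.mp hf
  refine ⟨ten_symm1 f, ten_symm2 f, fun a b c => ?_, fun s e => ?_, fun s e => ?_⟩
  · have hc : ∀ a, A.col a ∈ LinearMap.range A.mulVecLin := fun a => ⟨Pi.single a 1, by simp⟩
    refine trilinear_eq_zero_of_cubic (tri_symm1 _ (ten_symm1 f)) (tri_symm2 _ (ten_symm2 f)) (LinearMap.range A.mulVecLin)
      ?_ (hc a) (hc b) (hc c)
    rintro _ ⟨x, rfl⟩
    rw [tri_ten h, Matrix.mulVecLin_apply, hV _ ⟨x, rfl⟩, mul_zero]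
  · rw [con_ten h, hS _ (Or.inl ⟨s, rfl⟩), mul_zero]
  · rw [con_ten h, hS _ (Or.inr ⟨s, rfl⟩), mul_zero]

/-- Imposing conditions with values in `W` lowers the dimension by at most `dim W`. -/
theorem finrank_le_add_inf_ker {M N : Type} [AddCommGroup M] [Module ℂ M] [AddCommGroup N] [Module ℂ N]
    (K : Submodule ℂ M) [Module.Finite ℂ K] (f : M →ₗ[ℂ] N) (W : Submodule ℂ N)
    [Module.Finite ℂ W] (h : ∀ x ∈ K, f x ∈ W) :
    Module.finrank ℂ K ≤ Module.finrank ℂ W + Module.finrank ℂ (K ⊓ LinearMap.ker f : Submodule ℂ M) := by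
  let g : K →ₗ[ℂ] W := (f.domRestrict K).codRestrict W fun x => h x x.2
  have h1 := g.finrank_range_add_finrank_ker
  have h2 := Submodule.finrank_le (LinearMap.range g)
  have e : Module.finrank ℂ (LinearMap.ker g) = Module.finrank ℂ (K ⊓ LinearMap.ker f : Submodule ℂ M) := by
    have : (K ⊓ LinearMap.ker f : Submodule ℂ M) = (LinearMap.ker g).map K.subtype := by
      ext x
      simp only [Submodule.mem_inf, LinearMap.mem_ker, Submodule.mem_map, Submodule.coe_subtype]
      constructor
      · rintro ⟨hx, hx'⟩
        exact ⟨⟨x, hx⟩, Subtype.ext hx', rfl⟩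
      · rintro ⟨y, hy, rfl⟩
        exact ⟨y.2, congrArg Subtype.val hy⟩
    rw [this]
    exact (Submodule.equivMapOfInjective K.subtype K.injective_subtype _).finrank_eq
  omega

/-- Evaluation of the pullback of `f` along the linear map `A`. -/
theorem eval_pullback {m : ℕ} (A : Matrix (Fin (n + 1)) (Fin m) ℂ) (f : MvPolynomial (Fin (n + 1)) ℂ)
    (v : Fin m → ℂ) :
    eval v (aeval (fun i => ∑ j, C (A i j) * X j : Fin (n + 1) → MvPolynomial (Fin m) ℂ) f) =
      eval (A.mulVec v) f := by
  have := comp_aeval_apply (R := ℂ)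
    (fun i => ∑ j, C (A i j) * X j : Fin (n + 1) → MvPolynomial (Fin m) ℂ)
    (aeval v : MvPolynomial (Fin m) ℂ →ₐ[ℂ] ℂ) f
  simp only [aeval_eq_eval, map_sum, map_mul, eval_C, eval_X] at this
  exact this

/-- The expected dimension is a lower bound. If `f` vanishes on the subspace, its gradient at a
point of the subspace annihilates the subspace, so that singularity at such a point imposes only
`n + 1 - m` conditions. -/
theorem le_finrank_SingSpace {m : ℕ} [Fintype S] [Fintype P] (A : Matrix (Fin (n + 1)) (Fin m) ℂ)
    (u : S → Fin m → ℂ) (p : P → Fin (n + 1) → ℂ) (hA : Function.Injective A.mulVec) :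
    (n + 3).choose 3 + Fintype.card S * m ≤
      (m + 2).choose 3 + Fintype.card S * (n + 1) + Fintype.card P * (n + 1) + Module.finrank ℂ
        (SingSpace n 3 (Set.range (fun s => A.mulVec (u s)) ∪ Set.range p) (Set.range A.mulVec)) := by
  classical
  set l := fun s => A.mulVec (u s) with hl
  -- cubics vanishing on the subspace
  let K0 := homogeneousSubmodule (Fin (n + 1)) ℂ 3
  let f1 : MvPolynomial (Fin (n + 1)) ℂ →ₗ[ℂ] MvPolynomial (Fin m) ℂ := (aeval (fun i => ∑ j, C (A i j) * X j : Fin (n + 1) → MvPolynomial (Fin m) ℂ)).toLinearMap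
  have h1 := finrank_le_add_inf_ker K0 f1 (homogeneousSubmodule (Fin m) ℂ 3) (fun f hf => by
    have := IsHomogeneous.aeval (n := 1) ((mem_homogeneousSubmodule _ _).mp hf)
      (fun i => ∑ j, C (A i j) * X j : Fin (n + 1) → MvPolynomial (Fin m) ℂ)
      (fun i => IsHomogeneous.sum _ _ _ fun j _ => by
        simpa using (isHomogeneous_C (Fin m) (A i j)).mul (isHomogeneous_X ℂ j))
    rw [one_mul] at this
    exact this)
  set K1 : Submodule ℂ _ := K0 ⊓ LinearMap.ker f1 with hK1
  have m1 : ∀ f ∈ K1, f.IsHomogeneous 3 ∧ ∀ v, eval (A.mulVec v) f = 0 := fun f hf =>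
    ⟨hf.1, fun v => by
      have hf0 : f1 f = 0 := hf.2
      have := eval_pullback A f v
      rw [← this]
      exact (congrArg (eval v) hf0).trans (map_zero _)⟩
  have : Module.Finite ℂ K1 := Submodule.finiteDimensional_of_le (show K1 ≤ K0 from inf_le_left)
  -- gradients at the points of the subspace annihilate the subspace
  let Z := LinearMap.ker A.transpose.mulVecLin
  let f2 : MvPolynomial (Fin (n + 1)) ℂ →ₗ[ℂ] S → Fin (n + 1) → ℂ :=
    LinearMap.pi fun s => LinearMap.pi fun i => evalPDeriv (l s) i
  let g : (S → Z) →ₗ[ℂ] (S → Fin (n + 1) → ℂ) := LinearMap.pi fun s => Z.subtype ∘ₗ LinearMap.proj s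
  have m2 : ∀ f ∈ K1, f2 f ∈ LinearMap.range g := by
    intro f hf
    obtain ⟨hf3, hfv⟩ := m1 f hf
    have hz : ∀ s, f2 f s ∈ Z := by
      intro s
      ext a
      have hr : ∀ v, A.mulVec v ∈ LinearMap.range A.mulVecLin := fun v => ⟨v, rfl⟩
      have := trilinear_eq_zero_of_cubic (tri_symm1 _ (ten_symm1 f)) (tri_symm2 _ (ten_symm2 f))
        (LinearMap.range A.mulVecLin)
        (by rintro _ ⟨x, rfl⟩; rw [tri_ten hf3, Matrix.mulVecLin_apply, hfv, mul_zero])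
        (hr (u s)) (hr (u s)) (hr (Pi.single a 1))
      rw [tri_con] at this
      simp only [con_ten hf3] at this
      simp only [mul_assoc, ← Finset.mul_sum] at this
      have h0 := (mul_eq_zero.mp this).resolve_left two_ne_zero
      simp only [Matrix.mulVecLin_apply, Matrix.mulVec, dotProduct, Matrix.transpose_apply, Pi.zero_apply, f2,
        LinearMap.pi_apply]
      rw [← h0]
      refine Finset.sum_congr rfl fun e _ => ?_
      simp [evalPDeriv, evalAt, aeval_eq_eval, mul_comm, hl]
    exact ⟨fun s => ⟨f2 f s, hz s⟩, rfl⟩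
  have h2 := finrank_le_add_inf_ker K1 f2 (LinearMap.range g) m2
  set K2 : Submodule ℂ _ := K1 ⊓ LinearMap.ker f2 with hK2
  have : Module.Finite ℂ K2 := Submodule.finiteDimensional_of_le (show K2 ≤ K1 from inf_le_left)
  let f3 : MvPolynomial (Fin (n + 1)) ℂ →ₗ[ℂ] P → Fin (n + 1) → ℂ :=
    LinearMap.pi fun s => LinearMap.pi fun i => evalPDeriv (p s) i
  have h3 := finrank_le_add_inf_ker K2 f3 ⊤ (fun _ _ => trivial)
  have : Module.Finite ℂ (SingSpace n 3 (Set.range l ∪ Set.range p) (Set.range A.mulVec)) :=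
    Submodule.finiteDimensional_of_le (show _ ≤ K0 from inf_le_left.trans inf_le_left)
  have h4 : K2 ⊓ LinearMap.ker f3 ≤ SingSpace n 3 (Set.range l ∪ Set.range p) (Set.range A.mulVec) := by
    rintro f ⟨⟨hf1, hf2⟩, hf3⟩
    refine mem_SingSpace.mpr ⟨(m1 f hf1).1, ?_, ?_⟩
    · rintro _ ⟨v, rfl⟩
      exact (m1 f hf1).2 v
    · rintro _ (⟨s, rfl⟩ | ⟨s, rfl⟩) i
      · exact congrFun (congrFun hf2 s) i
      · exact congrFun (congrFun hf3 s) i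
  have h5 := Submodule.finrank_mono h4
  have hZ : Module.finrank ℂ Z + m = n + 1 := by
    have := A.transpose.mulVecLin.finrank_range_add_finrank_ker
    have e : Module.finrank ℂ (LinearMap.range A.transpose.mulVecLin) = m := by
      change A.transpose.rank = m
      rw [Matrix.rank_transpose]
      have := LinearMap.finrank_range_of_inj (f := A.mulVecLin) hA
      rw [Module.finrank_fin_fun] at this
      exact this
    rw [e] at this
    simpa [add_comm] using this
  have hg := LinearMap.finrank_range_le g
  rw [Module.finrank_pi_fintype] at hg
  simp only [Finset.sum_const, Finset.card_univ, smul_eq_mul] at hg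
  rw [finrank_hom3, finrank_hom3] at h1
  rw [finrank_top] at h3
  simp only [Module.finrank_pi_fintype, Module.finrank_self, Finset.sum_const, Finset.card_univ,
    smul_eq_mul, mul_one, Fintype.card_fin] at h3
  have : Fintype.card S * (n + 1) = Fintype.card S * Module.finrank ℂ Z + Fintype.card S * m := by
    rw [← mul_add, hZ]
  rw [show n + 1 + 2 = n + 3 from rfl] at h1
  omega
end

/-! ### Isolated singular points -/

section
variable {σ : Type} [Fintype σ] [DecidableEq σ]

theorem con_symm {v : σ × σ × σ → ℂ} (h : ∀ i j k, v (i, j, k) = v (j, i, k)) (x y : σ → ℂ) (a : σ) :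
    con v x y a = con v y x a := by
  rw [← tri_single, ← tri_single, tri_symm1 v h]

theorem con_add_left (v : σ × σ × σ → ℂ) (x y z : σ → ℂ) (a : σ) :
    con v (x + y) z a = con v x z a + con v y z a := by
  simp [← tri_single]

theorem con_add_right (v : σ × σ × σ → ℂ) (x y z : σ → ℂ) (a : σ) :
    con v z (x + y) a = con v z x a + con v z y a := by
  simp [← tri_single]

theorem con_smul_left (v : σ × σ × σ → ℂ) (c : ℂ) (x z : σ → ℂ) (a : σ) :
    con v (c • x) z a = c * con v x z a := by
  simp [← tri_single]

theorem con_smul_right (v : σ × σ × σ → ℂ) (c : ℂ) (x z : σ → ℂ) (a : σ) :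
    con v z (c • x) a = c * con v z x a := by
  simp [← tri_single]

/-- Zero-dimensionality from the Hessians: if the contractions `v(p, ·, ·)` for `v ∈ K` have no common
kernel in the hyperplane `x i₀ = 0`, then near `p` the only points `q` with `v(q, q, ·) = 0` for all
`v ∈ K` are multiples of `p`. For `c = q i₀ / p i₀`, the vector `q - c p` lies in the hyperplane and in
the kernel of the contractions with `q + c p`, a point close to `2 p`. -/
theorem isolated_of_hessian (K : Submodule ℂ (σ × σ × σ → ℂ)) (p : σ → ℂ) (i₀ : σ) (hp : p i₀ ≠ 0)
    (hs : ∀ v ∈ K, ∀ i j k, v (i, j, k) = v (j, i, k)) (h0 : ∀ v ∈ K, ∀ a, con v p p a = 0)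
    (h : ∀ x : σ → ℂ, x i₀ = 0 → (∀ v ∈ K, ∀ a, con v p x a = 0) → x = 0) :
    ∃ ε > 0, ∀ q : σ → ℂ, (∀ v ∈ K, ∀ a, con v q q a = 0) → dist q p < ε → ∃ c : ℂ, q = c • p := by
  let b := Module.finBasis ℂ K
  let H : Matrix ((Fin (Module.finrank ℂ K) × σ) ⊕ Unit) σ (MvPolynomial σ ℂ) :=
    Matrix.fromRows (Matrix.of fun r j => ∑ i, C ((b r.1).1 (i, j, r.2)) * X i)
      (Matrix.of fun _ j => if j = i₀ then 1 else 0)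
  have Hc : ∀ y x, (H.map (eval y)).mulVec x =
      Sum.elim (fun r => con (b r.1).1 y x r.2) (fun _ => x i₀) := by
    intro y x
    ext r
    rcases r with ⟨c, a⟩ | u
    · simp only [H, Matrix.mulVec, dotProduct, Matrix.map_apply, Matrix.fromRows_apply_inl,
        Matrix.of_apply, map_sum, map_mul, Sum.elim_inl, con, Finset.sum_mul, eval_C, eval_X]
      rw [Finset.sum_comm]
    · simp [H, Matrix.mulVec, dotProduct, apply_ite, ite_mul]
  obtain ⟨N, F, hF, hN⟩ := exists_leftInverse_smul H ((2 : ℂ) • p) (by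
    intro x hx
    rw [Hc] at hx
    refine h x (congrFun hx (Sum.inr ())) ?_
    intro v hv a
    have e : v = ∑ c, b.repr ⟨v, hv⟩ c • (b c).1 := by
      have := congrArg Subtype.val (b.sum_repr ⟨v, hv⟩)
      rw [Submodule.coe_sum] at this
      exact this.symm
    rw [e, con_sum]
    refine Finset.sum_eq_zero fun c _ => ?_
    have := congrFun hx (Sum.inl (c, a))
    simp only [Sum.elim_inl, con_smul_left, Pi.zero_apply] at this
    rw [(mul_eq_zero.mp this).resolve_left two_ne_zero, mul_zero])
  -- the point `q + c p`, where `c = q i₀ / p i₀`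
  let y : (σ → ℂ) → σ → ℂ := fun q => q + (q i₀ / p i₀) • p
  have hy : Continuous y := by fun_prop
  have hyF : Continuous fun q => eval (y q) F := (MvPolynomial.continuous_eval F).comp hy
  have hyp : eval (y p) F ≠ 0 := by
    have : y p = (2 : ℂ) • p := by simp [y, hp, two_smul]
    rwa [this]
  obtain ⟨ε, hε, hb⟩ := Metric.isOpen_iff.mp (isOpen_ne.preimage hyF) p hyp
  refine ⟨ε, hε, fun q hq hd => ⟨q i₀ / p i₀, ?_⟩⟩
  have hne : eval (y q) F ≠ 0 := hb hd
  have hx := mulVec_eval hN (y q) (q - (q i₀ / p i₀) • p)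
  -- `T(q + c p, q - c p, ·) = T(q, q, ·) - c² T(p, p, ·)` vanishes
  rw [Hc] at hx
  have z : (Sum.elim (fun r : Fin (Module.finrank ℂ K) × σ => con (b r.1).1 (y q) (q - (q i₀ / p i₀) • p) r.2)
      (fun _ : Unit => (q - (q i₀ / p i₀) • p) i₀)) = 0 := by
    ext r
    rcases r with ⟨c, a⟩ | u
    · simp only [Sum.elim_inl, y, sub_eq_add_neg, ← neg_smul, con_add_left, con_add_right,
        con_smul_left, con_smul_right, hq _ (b c).2, h0 _ (b c).2, con_symm (hs _ (b c).2) p q]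
      simp only [Pi.zero_apply]
      ring
    · simp [hp]
  rw [z, Matrix.mulVec_zero] at hx
  exact sub_eq_zero.mp ((smul_eq_zero.mp hx.symm).resolve_left hne)
end

/-! ### Reduction to a special configuration -/

section
variable {n m : ℕ} {S P d : Type} [Fintype S] [Fintype P] [Fintype d] [DecidableEq S]
  [DecidableEq P] [DecidableEq d]

/-- The index type of the parameters: the entries of the matrix, the coordinates (in the subspace)
of the points on the subspace, and the coordinates of the ambient points. -/
abbrev Par (n m : ℕ) (S P : Type) : Type :=
  (Fin (n + 1) × Fin m) ⊕ (S × Fin m) ⊕ (P × Fin (n + 1))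

/-- The matrix spanning the subspace. -/
def parA (t : Par n m S P → ℂ) : Matrix (Fin (n + 1)) (Fin m) ℂ :=
  Matrix.of fun i j => t (Sum.inl (i, j))

/-- The points on the subspace. -/
def parL (t : Par n m S P → ℂ) : S → Fin (n + 1) → ℂ :=
  fun s => (parA t).mulVec fun j => t (Sum.inr (Sum.inl (s, j)))

/-- The ambient points. -/
def parP (t : Par n m S P → ℂ) : P → Fin (n + 1) → ℂ := fun k i => t (Sum.inr (Sum.inr (k, i)))

/-- Reduction to one special configuration `t₀` and one ambient point `k`: it is enough that at `t₀`
the expected number of functionals `Θ` detects all the solutions, and that the Hessians at the point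
have no common kernel in a hyperplane not containing it. The le_finrank_SingSpace bound for the dimension at every
configuration is `le_finrank_SingSpace`. -/
theorem generic_of_special (t₀ : Par n m S P → ℂ) (k : P) (i₀ : Fin (n + 1))
    (Θ : Matrix d (Fin (n + 1) × Fin (n + 1) × Fin (n + 1)) ℂ)
    (hcount : (m + 2).choose 3 + Fintype.card S * (n + 1) + Fintype.card P * (n + 1) +
      Fintype.card d ≤ (n + 3).choose 3 + Fintype.card S * m)
    (hA : Function.Injective (parA t₀).mulVec)
    (hΘ : ∀ v, IsT (parA t₀) (parL t₀) (parP t₀) v → Θ.mulVec v = 0 → v = 0)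
    (hess : ∀ T : d → _, (∀ c, IsT (parA t₀) (parL t₀) (parP t₀) (T c)) →
      (∀ c, Θ.mulVec (T c) = Pi.single c 1) → ∀ x : Fin (n + 1) → ℂ, x i₀ = 0 →
      (∀ c a, con (T c) (parP t₀ k) x a = 0) → x = 0)
    (hp : parP t₀ k i₀ ≠ 0) :
    ∃ F : MvPolynomial (Par n m S P) ℂ, eval t₀ F ≠ 0 ∧ ∀ t, eval t F ≠ 0 →
      Function.Injective (parA t).mulVec ∧
      Module.finrank ℂ (SingSpace n 3 (Set.range (parL t) ∪ Set.range (parP t))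
        (Set.range (parA t).mulVec)) = Fintype.card d ∧
      ∃ ε > 0, ∀ q : Fin (n + 1) → ℂ, (∀ f ∈ SingSpace n 3 (Set.range (parL t) ∪ Set.range (parP t))
        (Set.range (parA t).mulVec), SingularAt f q) → dist q (parP t k) < ε →
        ∃ c : ℂ, q = c • parP t k := by
  let AX : Matrix (Fin (n + 1)) (Fin m) (MvPolynomial (Par n m S P) ℂ) :=
    Matrix.of fun i j => X (Sum.inl (i, j))
  let lX : S → Fin (n + 1) → MvPolynomial (Par n m S P) ℂ :=
    fun s => AX.mulVec fun j => X (Sum.inr (Sum.inl (s, j)))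
  let pX : P → Fin (n + 1) → MvPolynomial (Par n m S P) ℂ := fun k i => X (Sum.inr (Sum.inr (k, i)))
  have eA : ∀ t, AX.map (eval t) = parA t := fun t => by ext; simp [AX, parA]
  have eL : ∀ t, (fun s i => eval t (lX s i)) = parL t := fun t => by
    ext; simp [AX, lX, parA, parL, Matrix.mulVec, dotProduct]
  have eP : ∀ t, (fun s i => eval t (pX s i)) = parP t := fun t => by ext; simp [pX, parP]
  have eΦ : ∀ t, (cubCond AX lX pX).map (eval t) = cubCond (parA t) (parL t) (parP t) := fun t => by
    rw [cubCond_map, eA, eL, eP]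
  -- at every parameter with `A` injective the solution space has at least the expected dimension
  have low : ∀ t : Par n m S P → ℂ, Function.Injective (parA t).mulVec →
      Fintype.card d ≤ Module.finrank ℂ (SingSpace n 3 (Set.range (parL t) ∪ Set.range (parP t))
        (Set.range (parA t).mulVec)) := by
    intro t ht
    have : (n + 3).choose 3 + Fintype.card S * m ≤ (m + 2).choose 3 + Fintype.card S * (n + 1) +
        Fintype.card P * (n + 1) + Module.finrank ℂ (SingSpace n 3
          (Set.range (parL t) ∪ Set.range (parP t)) (Set.range (parA t).mulVec)) :=
      le_finrank_SingSpace (parA t) (fun s j => t (Sum.inr (Sum.inl (s, j)))) (parP t) ht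
    omega
  -- cubics embed into the solutions of the tensor system
  let ι : ∀ t : Par n m S P → ℂ, SingSpace n 3 (Set.range (parL t) ∪ Set.range (parP t))
      (Set.range (parA t).mulVec) →ₗ[ℂ]
      LinearMap.ker ((cubCond AX lX pX).map (eval t)).mulVecLin := fun t =>
    (ten.domRestrict _).codRestrict _ fun f => by
      rw [LinearMap.mem_ker, Matrix.mulVecLin_apply, eΦ, cubCond_iff]
      exact ten_isT f.2
  have ιinj : ∀ t, Function.Injective (ι t) := by
    intro t
    rw [← LinearMap.ker_eq_bot, LinearMap.ker_eq_bot']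
    rintro ⟨f, hf⟩ h
    exact Subtype.ext (ten_inj (mem_SingSpace.mp hf).1 (congrArg Subtype.val h))
  have le : ∀ t, Module.finrank ℂ (SingSpace n 3 (Set.range (parL t) ∪ Set.range (parP t))
        (Set.range (parA t).mulVec)) ≤
      Module.finrank ℂ (LinearMap.ker ((cubCond AX lX pX).map (eval t)).mulVecLin) := fun t =>
    LinearMap.finrank_le_finrank_of_injective (ιinj t)
  have ePk : ∀ t, (fun i => eval t (pX k i)) = parP t k := fun t => congrFun (eP t) k
  obtain ⟨NA, FA, hFA, hNA⟩ := exists_leftInverse_smul AX t₀ (by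
    rw [eA]
    exact fun v hv => hA (hv.trans (Matrix.mulVec_zero _).symm))
  obtain ⟨F, hF, hFt⟩ := generic_kernel (cubCond AX lX pX) Θ (pX k) i₀ t₀
    (fun v hv => by rw [eΦ, cubCond_iff] at hv; exact hΘ v hv)
    ((low t₀ hA).trans (le t₀))
    (by simpa only [eΦ, cubCond_iff, ePk] using hess)
    (by rw [show eval t₀ (pX k i₀) = parP t₀ k i₀ from congrFun (ePk t₀) i₀]; exact hp)
  refine ⟨FA * F, by rw [map_mul]; exact mul_ne_zero hFA hF, fun t ht => ?_⟩
  rw [map_mul, mul_ne_zero_iff] at ht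
  have hAt : Function.Injective (parA t).mulVec := by
    rw [← Matrix.coe_mulVecLin, ← LinearMap.ker_eq_bot, LinearMap.ker_eq_bot']
    intro v hv
    have := mulVec_eval hNA t v
    rw [eA, show (parA t).mulVec v = 0 from hv, Matrix.mulVec_zero] at this
    exact (smul_eq_zero.mp this.symm).resolve_left ht.1
  obtain ⟨h1, h2⟩ := hFt t ht.2
  have hl := low t hAt
  have hm := le t
  obtain ⟨h3, h4⟩ := h2 (hl.trans hm)
  refine ⟨hAt, by omega, ?_⟩
  have := Module.Finite.of_injective (ι t) (ιinj t)
  -- hence, the dimensions being equal, every tensor solution comes from a cubic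
  have hsur := (LinearMap.injective_iff_surjective_of_finrank_eq_finrank
    (show Module.finrank ℂ _ = Module.finrank ℂ _ by omega)).mp (ιinj t)
  have hK : ∀ v ∈ LinearMap.ker ((cubCond AX lX pX).map (eval t)).mulVecLin,
      IsT (parA t) (parL t) (parP t) v := by
    intro v hv
    rwa [LinearMap.mem_ker, Matrix.mulVecLin_apply, eΦ, cubCond_iff] at hv
  obtain ⟨ε, hε, hq⟩ := isolated_of_hessian (LinearMap.ker ((cubCond AX lX pX).map (eval t)).mulVecLin) (parP t k) i₀
    (by rw [← ePk]; exact h3) (fun v hv => (hK v hv).s1) (fun v hv => (hK v hv).hp k)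
    (by
      intro x hx h
      rw [ePk] at h4
      exact h4 x hx h)
  refine ⟨ε, hε, fun q hf hd => hq q ?_ hd⟩
  intro v hv a
  obtain ⟨f, hfv⟩ := hsur ⟨v, hv⟩
  have e : ten f.1 = v := congrArg Subtype.val hfv
  rw [← e, con_ten (mem_SingSpace.mp f.2).1]
  have := hf f.1 f.2 a
  simp only [evalPDeriv, evalAt, LinearMap.comp_apply] at this
  rw [show eval q (pderiv a f.1) = 0 from this, mul_zero]
end

/-! ### The special configuration as a parameter -/

theorem six_choose (k : ℕ) : 6 * (k + 2).choose 3 = (k + 2) * (k + 1) * k := by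
  have := Nat.descFactorial_eq_factorial_mul_choose (k + 2) 3
  simp [Nat.descFactorial, Nat.factorial] at this
  rw [← this]
  ring

/-- Number of pairs of distinct blocks, doubled to avoid a division. -/
theorem card_lt (r : ℕ) : Fintype.card {q : Fin r × Fin r // q.1 < q.2} * 2 = r * (r - 1) := by
  rw [← Finset.sum_range_id_mul_two, Fintype.card_subtype, Finset.card_filter, Fintype.sum_prod_type]
  congr 1
  rw [← Finset.sum_range_reflect, ← Fin.sum_univ_eq_sum_range (fun i => r - 1 - i)]
  refine Finset.sum_congr rfl fun i _ => ?_
  rw [← Finset.card_filter, ← Fin.card_Ioi]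
  congr 1
  ext j
  simp

theorem lPt_map {E F : Type} [AddCommGroup E] [Module ℂ E] [AddCommGroup F] [Module ℂ F] {r : ℕ}
    (f : E →ₗ[ℂ] F) (z : Fin 2 → E) (w : Fin r → Fin 3 → E) (s) :
    f (lPt z w s) = lPt (fun i => f (z i)) (fun i j => f (w i j)) s := by
  rcases s with i | ⟨j, i⟩ | ⟨q, i⟩
  · rfl
  · fin_cases i <;> simp [lPt]
  · fin_cases i <;> simp [lPt]

section
variable {r n m : ℕ} {S P : Type} [Fintype S] [Fintype P] [DecidableEq S] [DecidableEq P]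
  (e : Fin 6 ⊕ (Fin r × Fin 3) ≃ Fin (n + 1)) (em : Fin 2 ⊕ (Fin r × Fin 3) ≃ Fin m)
  (eS : Fin 2 ⊕ (Fin r × Fin 5) ⊕ ({q : Fin r × Fin r // q.1 < q.2} × Fin 3) ≃ S)
  (eP : Fin 7 ⊕ (Fin r × Fin 4) ≃ P)

/-- The base vectors, as standard basis vectors of `ℂⁿ⁺¹` through the indexing `e`. -/
def bx : Fin 6 → Fin (n + 1) → ℂ := fun i => Pi.single (e (.inl i)) 1
/-- The block vectors, as standard basis vectors of `ℂⁿ⁺¹` through the indexing `e`. -/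
def bw : Fin r → Fin 3 → Fin (n + 1) → ℂ := fun j c => Pi.single (e (.inr (j, c))) 1

/-- The special configuration as a parameter: the matrix is the inclusion of the coordinate subspace
with indices `lIdx`, and the points are `lPt` and `pPt`. -/
def specPar : Par n m S P → ℂ
  | .inl (i, j) => if i = e (lIdx (em.symm j)) then 1 else 0
  | .inr (.inl (s, j)) => lPt (fun i => (Pi.single (em (.inl i)) 1 : Fin m → ℂ))
      (fun i c => (Pi.single (em (.inr (i, c))) 1 : Fin m → ℂ)) (eS.symm s) j
  | .inr (.inr (k, i)) => pPt (bx e) (bw e) (eP.symm k) i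

theorem allB_eq (a) : allB (bx e) (bw e) a = Pi.single (e a) 1 := by
  rcases a with i | ⟨j, c⟩ <;> rfl

theorem colA (a) : (parA (specPar e em eS eP)).col (em a) = allB (bx e) (bw e) (lIdx a) := by
  rw [allB_eq]
  ext i
  simp [parA, specPar, Pi.single_apply]

theorem mulA (a) : (parA (specPar e em eS eP)).mulVec (Pi.single (em a) 1) = allB (bx e) (bw e) (lIdx a) := by
  rw [Matrix.mulVec_single_one, colA]

theorem lIdx_inj : Function.Injective (lIdx (r := r)) :=
  Function.Injective.sumMap (Fin.natAdd_injective 2 4) Function.injective_id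

theorem injA : Function.Injective (parA (specPar e em eS eP)).mulVec := by
  -- the coordinate of `A v` at the index `e (lIdx a)` is the `a`-th coordinate of `v`
  have h : ∀ v a, (parA (specPar e em eS eP)).mulVec v (e (lIdx a)) = v (em a) := by
    intro v a
    rw [Matrix.mulVec, dotProduct, Finset.sum_eq_single (em a)]
    · simp [parA, specPar]
    · intro j _ hj
      have : lIdx a ≠ lIdx (em.symm j) := fun h' => hj (by rw [lIdx_inj h', Equiv.apply_symm_apply])
      simp [parA, specPar, this]
    · simp
  intro v v' hv
  funext j
  obtain ⟨a, rfl⟩ := em.surjective j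
  rw [← h v, ← h v', hv]

theorem parP_specPar (k) : parP (specPar e em eS eP) (eP k) = pPt (bx e) (bw e) k := by
  ext i
  simp [parP, specPar]

theorem parL_specPar (s) : parL (specPar e em eS eP) (eS s) =
    lPt (fun i => bx e (Fin.natAdd 4 i)) (bw e) s := by
  have h : (fun j => specPar e em eS eP (Sum.inr (Sum.inl (eS s, j)))) =
      lPt (fun i => (Pi.single (em (.inl i)) 1 : Fin m → ℂ))
        (fun i c => (Pi.single (em (.inr (i, c))) 1 : Fin m → ℂ)) s := by
    ext j
    simp [specPar]
  rw [parL, h, ← Matrix.mulVecLin_apply, lPt_map]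
  simp only [Matrix.mulVecLin_apply, mulA]
  rfl

/-- The tensor conditions at the special parameter are those of `Sp`. -/
theorem Sp_of_isT {v : Fin (n + 1) × Fin (n + 1) × Fin (n + 1) → ℂ}
    (h : IsT (parA (specPar e em eS eP)) (parL (specPar e em eS eP)) (parP (specPar e em eS eP)) v) :
    Sp (bx e) (bw e) (tri v) := by
  refine ⟨tri_symm1 v h.s1, tri_symm2 v h.s2, fun i j k => ?_, fun i u => ?_, fun i u => ?_⟩
  · rw [← colA e em eS eP, ← colA e em eS eP, ← colA e em eS eP]
    exact h.hL _ _ _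
  · rw [← parL_specPar e em eS eP, tri_con]
    simp [h.hl]
  · rw [← parP_specPar e em eS eP, tri_con]
    simp [h.hp]

/-- The index triples of the entries `thetaF`. -/
def thIdx : Fin 2 ⊕ Fin r → Fin (n + 1) × Fin (n + 1) × Fin (n + 1)
  | .inl i => (e (.inl (Fin.castLE (by omega) i)), e (.inl 2), e (.inl 4))
  | .inr j => (e (.inl 2), e (.inr (j, 0)), e (.inr (j, 0)))

theorem thetaF_tri (v : Fin (n + 1) × Fin (n + 1) × Fin (n + 1) → ℂ) :
    thetaF (bx e) (bw e) (tri v) = (Matrix.of fun c b => if b = thIdx e c then (1 : ℂ) else 0).mulVec v := by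
  ext c
  have h : (Matrix.of fun c b => if b = thIdx e c then (1 : ℂ) else 0).mulVec v c = v (thIdx e c) := by
    rw [Matrix.mulVec, dotProduct, Finset.sum_eq_single (thIdx e c)]
    · simp
    · intro b _ hb
      simp [hb]
    · simp
  rw [h]
  rcases c with i | j
  · fin_cases i <;> exact tri_single3 _ _ _ _
  · exact tri_single3 _ _ _ _

end

/-- The conclusion for one ambient point: the polynomial `F` may depend on the point, which in the
special configuration is put at `x 2`. -/
theorem generic_at_point {r n m : ℕ} {S P : Type} [Fintype S] [Fintype P] [DecidableEq S] [DecidableEq P]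
    (e : Fin 6 ⊕ (Fin r × Fin 3) ≃ Fin (n + 1)) (em : Fin 2 ⊕ (Fin r × Fin 3) ≃ Fin m)
    (eS : Fin 2 ⊕ (Fin r × Fin 5) ⊕ ({q : Fin r × Fin r // q.1 < q.2} × Fin 3) ≃ S)
    (eP : Fin 7 ⊕ (Fin r × Fin 4) ≃ P) (hr : 0 < r) (hcount : (m + 2).choose 3 + Fintype.card S * (n + 1) + Fintype.card P * (n + 1) +
      (r + 2) ≤ (n + 3).choose 3 + Fintype.card S * m) :
    ∃ F : MvPolynomial (Par n m S P) ℂ, F ≠ 0 ∧ ∀ t, eval t F ≠ 0 →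
      Function.Injective (parA t).mulVec ∧
      Module.finrank ℂ (SingSpace n 3 (Set.range (parL t) ∪ Set.range (parP t))
        (Set.range (parA t).mulVec)) = r + 2 ∧
      ∃ ε > 0, ∀ q : Fin (n + 1) → ℂ, (∀ f ∈ SingSpace n 3 (Set.range (parL t) ∪ Set.range (parP t))
        (Set.range (parA t).mulVec), SingularAt f q) → dist q (parP t (eP (.inl 2))) < ε →
        ∃ c : ℂ, q = c • parP t (eP (.inl 2)) := by
  have hd : Fintype.card (Fin 2 ⊕ Fin r) = r + 2 := by simp [add_comm]
  obtain ⟨F, hF, h⟩ := generic_of_special (d := Fin 2 ⊕ Fin r) (specPar e em eS eP) (eP (.inl 2)) (e (.inl 2))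
    (Matrix.of fun c b => if b = thIdx e c then (1 : ℂ) else 0) (by rw [hd]; exact hcount)
    (injA e em eS eP) (by
      intro v hv hθ
      rw [← thetaF_tri] at hθ
      have hz := (Sp_of_isT e em eS eP hv).eq_zero (congrFun hθ (.inl 0)) (congrFun hθ (.inl 1))
        (fun j => congrFun hθ (.inr j))
      funext ⟨i, j, k⟩
      have := hz (e.symm i) (e.symm j) (e.symm k)
      simpa [allB_eq, tri_single3] using this) (by
      intro T hT hΘ x hx h
      -- coordinates of `x` in the base and block vectors
      have hxe : x = ∑ i, x (e (.inl i)) • bx e i + ∑ j, ∑ c, x (e (.inr (j, c))) • bw e j c := by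
        conv_lhs => rw [pi_eq_sum_univ' x, ← e.sum_comp, Fintype.sum_sum_type, Fintype.sum_prod_type]
        rfl
      have := Sp.hess (T := fun c => tri (T c)) (fun c => Sp_of_isT e em eS eP (hT c))
        (fun c => by rw [thetaF_tri, hΘ]) hr (fun i => x (e (.inl i))) (fun j c => x (e (.inr (j, c)))) hx
        (fun c u => by
          rw [← hxe, show bx e 2 = parP (specPar e em eS eP) (eP (.inl 2)) by rw [parP_specPar]; rfl, tri_con]
          simp [h])
      funext i
      obtain ⟨a, rfl⟩ := e.surjective i
      rcases a with i | ⟨j, c⟩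
      · exact congrFun this.1 i
      · exact congrFun (congrFun this.2 j) c) (by
      rw [parP_specPar]
      simp [pPt, bx])
  refine ⟨F, fun h0 => hF (by rw [h0, map_zero]), fun t ht => ?_⟩
  rw [← hd]
  exact h t ht

theorem cubics_one_codim4_subspace (n : ℕ) (hn : 8 ≤ n) (h3 : n % 3 = 2) :
    Generic
      (ι := (Fin (n + 1) × Fin (n - 3)) ⊕ (Fin ((n - 1) * (n - 2) / 6) × Fin (n - 3)) ⊕
        (Fin ((4 * n + 1) / 3) × Fin (n + 1))) fun t =>
      let A : Matrix (Fin (n + 1)) (Fin (n - 3)) ℂ := Matrix.of fun i j => t (Sum.inl (i, j))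
      let l : Fin ((n - 1) * (n - 2) / 6) → Fin (n + 1) → ℂ :=
        fun s => A.mulVec fun j => t (Sum.inr (Sum.inl (s, j)))
      let p : Fin ((4 * n + 1) / 3) → Fin (n + 1) → ℂ := fun k i => t (Sum.inr (Sum.inr (k, i)))
      let U : Set (Fin (n + 1) → ℂ) := Set.range A.mulVec
      let S : Set (Fin (n + 1) → ℂ) := Set.range l ∪ Set.range p
      Function.Injective A.mulVec ∧
      Module.finrank ℂ (SingSpace n 3 S U) = (n + 1) / 3 ∧
      ∀ k : Fin ((4 * n + 1) / 3), ∃ ε > 0, ∀ q : Fin (n + 1) → ℂ,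
        (∀ f ∈ SingSpace n 3 S U, SingularAt f q) → dist q (p k) < ε →
        ∃ c : ℂ, q = c • p k := by
  -- six base vectors and `r` blocks of three
  obtain ⟨r, rfl⟩ : ∃ r, n = 3 * r + 5 := ⟨(n - 5) / 3, by omega⟩
  have hr : 0 < r := by omega
  have hl := card_lt r
  have hS : 2 * ((3 * r + 5 - 1) * (3 * r + 5 - 2) / 6) = (3 * r + 4) * (r + 1) := by
    have : (3 * r + 5 - 1) * (3 * r + 5 - 2) = 3 * ((3 * r + 4) * (r + 1)) := by
      rw [show 3 * r + 5 - 1 = 3 * r + 4 by omega, show 3 * r + 5 - 2 = 3 * r + 3 by omega]; ring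
    have h2 : 2 ∣ (3 * r + 4) * (r + 1) := by
      rcases Nat.even_or_odd' r with ⟨c, rfl | rfl⟩
      · exact Dvd.dvd.mul_right ⟨3 * c + 2, by ring⟩ _
      · exact Dvd.dvd.mul_left ⟨c + 1, by ring⟩ _
    omega
  have hP : (4 * (3 * r + 5) + 1) / 3 = 4 * r + 7 := by omega
  let e : Fin 6 ⊕ (Fin r × Fin 3) ≃ Fin (3 * r + 5 + 1) := Fintype.equivOfCardEq (by simp; omega)
  let em : Fin 2 ⊕ (Fin r × Fin 3) ≃ Fin (3 * r + 5 - 3) := Fintype.equivOfCardEq (by simp; omega)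
  let eS : Fin 2 ⊕ (Fin r × Fin 5) ⊕ ({q : Fin r × Fin r // q.1 < q.2} × Fin 3) ≃
      Fin ((3 * r + 5 - 1) * (3 * r + 5 - 2) / 6) := Fintype.equivOfCardEq (by
    rw [Fintype.card_sum, Fintype.card_sum, Fintype.card_prod, Fintype.card_prod]
    simp only [Fintype.card_fin]
    obtain ⟨s, rfl⟩ : ∃ s, r = s + 1 := ⟨r - 1, by omega⟩
    rw [Nat.add_sub_cancel] at hl
    nlinarith)
  let eP : Fin 7 ⊕ (Fin r × Fin 4) ≃ Fin ((4 * (3 * r + 5) + 1) / 3) :=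
    Fintype.equivOfCardEq (by simp; omega)
  have hcount : (3 * r + 5 - 3 + 2).choose 3 +
      Fintype.card (Fin ((3 * r + 5 - 1) * (3 * r + 5 - 2) / 6)) * (3 * r + 5 + 1) +
      Fintype.card (Fin ((4 * (3 * r + 5) + 1) / 3)) * (3 * r + 5 + 1) + (r + 2) ≤
      (3 * r + 5 + 3).choose 3 +
      Fintype.card (Fin ((3 * r + 5 - 1) * (3 * r + 5 - 2) / 6)) * (3 * r + 5 - 3) := by
    have h1 := six_choose (3 * r + 2)
    have h2 := six_choose (3 * r + 6)
    rw [Fintype.card_fin, Fintype.card_fin, hP, show 3 * r + 5 - 3 = 3 * r + 2 by omega,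
      show 3 * r + 5 + 3 = 3 * r + 6 + 2 by omega]
    clear eS
    generalize (3 * r + 5 - 1) * (3 * r + 5 - 2) / 6 = s at hS
    nlinarith
  -- a transposition of the ambient points puts the `k`-th one at `x 2`; the product of the
  -- resulting polynomials works for all `k`
  have hk := fun k => generic_at_point e em eS (eP.trans (Equiv.swap (eP (.inl 2)) k)) hr hcount
  choose F hF h using hk
  simp only [Equiv.trans_apply, Equiv.swap_apply_left] at h
  have hne : ∏ k, F k ≠ 0 := Finset.prod_ne_zero_iff.mpr fun k _ => hF k
  refine ⟨∏ k, F k, hne, fun t ht => ?_⟩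
  rw [map_prod, Finset.prod_ne_zero_iff] at ht
  have h' := fun k => h k t (ht k (Finset.mem_univ k))
  have k₀ : Fin ((4 * (3 * r + 5) + 1) / 3) := ⟨0, by omega⟩
  exact ⟨(h' k₀).1, (h' k₀).2.1.trans (by omega), fun k => (h' k).2.2⟩
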